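/- arXiv:1407.7012 — 3 statements merged into one kernel-verified Lean document; each statement's English description precedes it below -/
import Mathlib

section
/- Let k be an integer, and consider the polynomials φ(X) = X² + kX and ψ(X) = X² − kX + k in ℚ[X]. Then for every n ≥ 1, the splitting field of the n-fold iterate φ^{∘n} over ℚ is equal to the splitting field of the (n−1)-fold iterate ψ^{∘(n−1)} over ℚ (both taken inside a fixed algebraic closure of ℚ, with ψ^{∘0}(X) = X). -/
open Polynomial

/-- The `n`-fold iterate (composition) of a polynomial, with `iterComp p 0 = X`. -/
noncomputable def iterComp (p : ℚ[X]) : ℕ → ℚ[X]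
  | 0 => X
  | n + 1 => p.comp (iterComp p n)

/-- The splitting field of a rational polynomial inside a fixed algebraic closure of `ℚ`:
the intermediate field generated by its set of roots. -/
noncomputable def splitFld (p : ℚ[X]) : IntermediateField ℚ (AlgebraicClosure ℚ) :=
  IntermediateField.adjoin ℚ (p.rootSet (AlgebraicClosure ℚ))

/-!
Write `φ = X² + cX` and `ψ = X² - cX + c`, and let `φₙ`, `ψₙ` be their `n`-th iterates. Translation
by `c` conjugates `φ` to `ψ`, so `ψₙ(X + c) = φₙ + c` and hence
`φₙ₊₁ = φₙ (φₙ + c) = φₙ · ψₙ(X + c)`. The splitting field of `φₙ₊₁` is therefore the compositum of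
those of `φₙ` and `ψₙ`. Since the splitting fields of the `ψₙ` form an increasing tower, induction
on `n` leaves only that of `ψₙ`.
-/

theorem iterComp_eq_iterate_comp (p : ℚ[X]) (n : ℕ) : iterComp p n = p.comp^[n] X := by
  induction n with
  | zero => rfl
  | succ n ih => rw [iterComp, ih, Function.iterate_succ_apply']

section Iterate

variable {R : Type*}

theorem iterate_comp_X_comp_eq_comp_iterate [CommSemiring R] {p q r : R[X]}
    (h : q.comp r = r.comp p) (n : ℕ) :
    (q.comp^[n] X).comp r = r.comp (p.comp^[n] X) := by
  induction n with
  | zero => simp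
  | succ n ih =>
    rw [Function.iterate_succ_apply', Function.iterate_succ_apply', comp_assoc, ih, ← comp_assoc, h,
      comp_assoc]

theorem iterate_succ_comp_X_eq_comp [CommSemiring R] (p : R[X]) (n : ℕ) :
    p.comp^[n + 1] X = (p.comp^[n] X).comp p := by
  rw [Function.iterate_succ_apply', iterate_comp_X_comp_eq_comp_iterate rfl]

theorem iterate_succ_X_sq_add_C_mul_X_eq_mul [CommRing R] (c : R) (n : ℕ) :
    (X ^ 2 + C c * X).comp^[n + 1] X =
      (X ^ 2 + C c * X).comp^[n] X * ((X ^ 2 - C c * X + C c).comp^[n] X).comp (X + C c) := by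
  have translation_conjugates :
      (X ^ 2 - C c * X + C c).comp (X + C c) = (X + C c).comp (X ^ 2 + C c * X) := by
    simp only [add_comp, sub_comp, mul_comp, pow_comp, X_comp, C_comp]
    ring
  rw [iterate_comp_X_comp_eq_comp_iterate translation_conjugates, Function.iterate_succ_apply']
  simp only [add_comp, mul_comp, pow_comp, X_comp, C_comp]
  ring

end Iterate

section SplittingField

variable {K : Type*} (L : Type*) [Field K] [Field L] [Algebra K L]

theorem surjective_aeval_of_natDegree_ne_zero [IsAlgClosed L] {q : K[X]} (hq : q.natDegree ≠ 0) :
    Function.Surjective fun y : L ↦ aeval y q := by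
  have h := IsAlgClosed.eval_surjective (p := q.map (algebraMap K L)) (by rwa [natDegree_map])
  simpa only [eval_map_algebraMap] using h

/-- The subfield of `L` generated over `K` by the roots of `p` in `L`; when `p` splits in `L`, this
is the splitting field of `p` inside `L`. For `p = 0` it is `K`, since `rootSet 0 = ∅`. -/
noncomputable def splittingFieldIn (p : K[X]) : IntermediateField K L :=
  IntermediateField.adjoin K (p.rootSet L)

theorem splittingFieldIn_mul {p q : K[X]} (hpq : p * q ≠ 0) :
    splittingFieldIn L (p * q) = splittingFieldIn L p ⊔ splittingFieldIn L q := by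
  have rootSet_mul : (p * q).rootSet L = p.rootSet L ∪ q.rootSet L := by
    ext x
    simp only [Set.mem_union, mem_rootSet_of_ne hpq, mem_rootSet_of_ne (left_ne_zero_of_mul hpq),
      mem_rootSet_of_ne (right_ne_zero_of_mul hpq), map_mul, mul_eq_zero]
  rw [splittingFieldIn, rootSet_mul, IntermediateField.adjoin_union, splittingFieldIn,
    splittingFieldIn]

variable {L}

theorem comp_ne_zero_of_surjective_aeval {p q : K[X]} (hp : p ≠ 0)
    (hq : Function.Surjective fun y : L ↦ aeval y q) : p.comp q ≠ 0 := by
  intro h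
  obtain ⟨-, hconst⟩ := (comp_eq_zero_iff.mp h).resolve_left hp
  obtain ⟨y, hy⟩ := hq 0
  obtain ⟨z, hz⟩ := hq 1
  rw [hconst] at hy hz
  simp only [aeval_C] at hy hz
  exact zero_ne_one (hy.symm.trans hz)

theorem splittingFieldIn_le_comp (p : K[X]) {q : K[X]}
    (hq : Function.Surjective fun y : L ↦ aeval y q) :
    splittingFieldIn L p ≤ splittingFieldIn L (p.comp q) := by
  refine IntermediateField.adjoin_le_iff.mpr fun x hx ↦ ?_
  obtain ⟨hp, hpx⟩ := mem_rootSet.mp hx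
  obtain ⟨y, rfl⟩ := hq x
  have y_root : y ∈ (p.comp q).rootSet L :=
    mem_rootSet.mpr ⟨comp_ne_zero_of_surjective_aeval hp hq, by rwa [aeval_comp]⟩
  have y_mem : y ∈ splittingFieldIn L (p.comp q) := IntermediateField.subset_adjoin K _ y_root
  have aeval_y_mem := (aeval (⟨y, y_mem⟩ : splittingFieldIn L (p.comp q)) q).2
  rwa [← IntermediateField.aeval_coe] at aeval_y_mem

variable (L)

theorem splittingFieldIn_comp_X_add_C (p : K[X]) (c : K) :
    splittingFieldIn L (p.comp (X + C c)) = splittingFieldIn L p := by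
  have surjective_translation (a : K) : Function.Surjective fun y : L ↦ aeval y (X + C a) :=
    fun x ↦ ⟨x - algebraMap K L a, by simp⟩
  refine le_antisymm ?_ (splittingFieldIn_le_comp p (surjective_translation c))
  have h := splittingFieldIn_le_comp (p.comp (X + C c)) (surjective_translation (-c))
  have translate_back : (p.comp (X + C c)).comp (X + C (-c)) = p := by simp [comp_assoc]
  rwa [translate_back] at h

theorem monotone_splittingFieldIn_iterate_comp_X [IsAlgClosed L] {p : K[X]}
    (hp : p.natDegree ≠ 0) : Monotone fun n ↦ splittingFieldIn L (p.comp^[n] X) := by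
  refine monotone_nat_of_le_succ fun n ↦ ?_
  rw [iterate_succ_comp_X_eq_comp]
  exact splittingFieldIn_le_comp _ (surjective_aeval_of_natDegree_ne_zero L hp)

theorem splittingFieldIn_iterate_succ_X_sq_add_C_mul_X_eq_sup (c : K) (n : ℕ) :
    splittingFieldIn L ((X ^ 2 + C c * X).comp^[n + 1] X) =
      splittingFieldIn L ((X ^ 2 + C c * X).comp^[n] X) ⊔
        splittingFieldIn L ((X ^ 2 - C c * X + C c).comp^[n] X) := by
  have natDegree_eq_two : (X ^ 2 + C c * X).natDegree = 2 := by compute_degree!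
  have iterate_ne_zero : (X ^ 2 + C c * X).comp^[n + 1] X ≠ 0 := by
    refine ne_zero_of_natDegree_gt (n := 0) ?_
    rw [natDegree_iterate_comp, natDegree_eq_two, natDegree_X]
    positivity
  rw [iterate_succ_X_sq_add_C_mul_X_eq_mul] at iterate_ne_zero ⊢
  rw [splittingFieldIn_mul L iterate_ne_zero, splittingFieldIn_comp_X_add_C]

theorem stmt_4_general [IsAlgClosed L] (c : K) (n : ℕ) :
    splittingFieldIn L ((X ^ 2 + C c * X).comp^[n + 1] X) =
      splittingFieldIn L ((X ^ 2 - C c * X + C c).comp^[n] X) := by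
  induction n with
  | zero =>
    rw [splittingFieldIn_iterate_succ_X_sq_add_C_mul_X_eq_sup, Function.iterate_zero_apply,
      Function.iterate_zero_apply, sup_idem]
  | succ n ih =>
    have natDegree_ne_zero : (X ^ 2 - C c * X + C c).natDegree ≠ 0 := by
      have : (X ^ 2 - C c * X + C c).natDegree = 2 := by compute_degree!
      lia
    rw [splittingFieldIn_iterate_succ_X_sq_add_C_mul_X_eq_sup, ih]
    exact sup_of_le_right
      (monotone_splittingFieldIn_iterate_comp_X L natDegree_ne_zero n.le_succ)

end SplittingField

/-- with `φ(X) = X² + kX` and `ψ(X) = X² − kX + k`, for every `n ≥ 1` the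
splitting field of `φ^{∘n}` over `ℚ` equals the splitting field of `ψ^{∘(n−1)}` over `ℚ`. -/
theorem stmt_4 (k : ℤ) (n : ℕ) (hn : 1 ≤ n) :
    splitFld (iterComp (X ^ 2 + C (k : ℚ) * X) n)
      = splitFld (iterComp (X ^ 2 - C (k : ℚ) * X + C (k : ℚ)) (n - 1)) := by
  obtain ⟨m, rfl⟩ := Nat.exists_eq_add_of_le' hn
  rw [iterComp_eq_iterate_comp, iterComp_eq_iterate_comp]
  exact stmt_4_general (AlgebraicClosure ℚ) (k : ℚ) m
end

section
/- Let k ∈ ℤ with k ∉ {−2, 0, 2, 4}, and let φ(X) = X² + kX ∈ ℚ[X]. Then there is a constant C such that for every n ≥ 1, 2^(2^(n−1) − 1) ≤ C · [K_n : ℚ], where K_n is the splitting field of the n-fold iterate φ^{∘n} over ℚ. (Equivalently, the index of the Galois group G_n(φ) = Gal(K_n/ℚ) inside the group S_n(φ) of order 2^(2^(n−1)−1) is bounded independently of n, which is the finite-level form of the assertion that [S(φ) : G(φ)] < ∞.) -/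
open Polynomial

/-!
Let `φ(x) = x² + k x` and let `K_n` be the splitting field of its `n`-th iterate. The nonzero
iterated preimages of `0` form a binary tree rooted at `-k`, and `K_{m+2}` is generated over
`K_{m+1}` by the square roots of `k² + 4 β`, for `β` in the `m`-th level of the tree. The sets of
`β` whose square roots multiply into `K_{m+1}` form an `𝔽₂`-vector space on which the Galois group
acts through a finite `2`-group. If this space is nonzero, it contains a nonempty invariant set,
which is the whole level as soon as the action on the level is transitive. Hence the step has the
maximal degree `2 ^ 2 ^ m`, unless `K_{m+1}` contains a square root of the product of the
`k² + 4 β`. For `m ≥ 1` this product is `c_{m+1} + k` up to a rational square, where `c_n` is the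
`n`-th iterate of the critical point `-k / 2`. As none of these products is a rational square,
transitivity follows by induction on the level.

If `c_n + k` has odd valuation at a prime `p ∤ 2 k`, then it has no square root in `K_n`: modulo `p`
the critical point reaches `-k` after `n` steps and not before, because `φ(-k) = φ(0) = 0 ≠ -k`. So
all the square roots that generate `K_n` are of `p`-adic units, and `K_n` embeds into the fraction
field of the Witt vectors of the algebraic closure of `𝔽_p`, where `c_n + k` is not a square.

Such a prime exists for all large `n`. For odd `k` this is a Jacobi symbol computation. For even `k`
a failure gives an integral point on one of finitely many curves `s² = D (A V² + B)² + E`;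
infinitely many failures contradict Thue's theorem, since Pell's equation turns the integral points
on such a curve into solutions of finitely many quartic Thue equations.
-/

section ThueAuxiliary

open Matrix in
theorem exists_int_vec_mulVec_eq_zero_abs_le {m n : Type*} [Fintype m] [Fintype n] [Nonempty m]
    (M : Matrix m n ℤ) {b : ℝ} (hb : 1 ≤ b) (hM : ∀ i j, |(M i j : ℝ)| ≤ b) {ρ : ℕ}
    (hlt : Fintype.card m < Fintype.card n)
    (hρ : Fintype.card m ≤ ρ * (Fintype.card n - Fintype.card m)) :
    ∃ t : n → ℤ, t ≠ 0 ∧ M *ᵥ t = 0 ∧ ∀ j, |(t j : ℝ)| ≤ (Fintype.card n * b) ^ ρ := by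
  obtain ⟨t, ht, hMt, hnorm⟩ := Int.Matrix.exists_ne_zero_int_vec_norm_le M hlt Fintype.card_pos
  refine ⟨t, ht, hMt, fun j ↦ ?_⟩
  let _ : SeminormedAddCommGroup (Matrix m n ℤ) := Matrix.seminormedAddCommGroup
  have hMb : max 1 ‖M‖ ≤ b := max_le hb <| (Matrix.norm_le_iff (by positivity)).mpr fun i j ↦ by
    rw [Int.norm_eq_abs]; exact hM i j
  have hcard : (1 : ℝ) ≤ Fintype.card n := mod_cast (Nat.zero_le _).trans_lt hlt
  have hexp : (Fintype.card m : ℝ) / (Fintype.card n - Fintype.card m) ≤ ρ := by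
    rw [div_le_iff₀ (sub_pos.mpr (mod_cast hlt)), ← Nat.cast_sub hlt.le]
    exact_mod_cast hρ
  calc |(t j : ℝ)| ≤ ‖t‖ := by rw [← Int.norm_eq_abs]; exact norm_le_pi_norm t j
    _ ≤ _ := hnorm
    _ ≤ (Fintype.card n * max 1 ‖M‖) ^ (ρ : ℝ) := Real.rpow_le_rpow_of_exponent_le
      (one_le_mul_of_one_le_of_one_le hcard (le_max_left _ _)) hexp
    _ ≤ (Fintype.card n * b) ^ ρ := by rw [Real.rpow_natCast]; gcongr

theorem X_mul_modByMonic {R : Type*} [CommRing R] {f r : R[X]} (hf : f.Monic)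
    (hr : r.degree < f.degree) :
    (X * r) %ₘ f = X * r - C (r.coeff (f.natDegree - 1)) * f := by
  nontriviality R
  rcases eq_or_ne r 0 with rfl | hr0
  · simp
  have hlt : r.natDegree < f.natDegree := natDegree_lt_natDegree hr0 hr
  refine (div_modByMonic_unique (C (r.coeff (f.natDegree - 1))) _ hf ⟨by ring, ?_⟩).2
  rw [degree_eq_natDegree hf.ne_zero, degree_lt_iff_coeff_zero]
  rintro (_ | m) hm
  · omega
  rw [coeff_sub, coeff_X_mul, coeff_C_mul]
  rcases hm.eq_or_lt with hm | hm
  · rw [← hm, hf.coeff_natDegree, hm, Nat.add_sub_cancel, mul_one, sub_self]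
  · rw [coeff_eq_zero_of_natDegree_lt (show r.natDegree < m by omega),
      coeff_eq_zero_of_natDegree_lt hm, mul_zero, sub_zero]

theorem abs_coeff_X_pow_modByMonic_le {f : ℤ[X]} (hf : f.Monic) {G : ℤ}
    (hG : ∀ l, |f.coeff l| ≤ G) (i l : ℕ) : |(X ^ i %ₘ f).coeff l| ≤ (1 + G) ^ i := by
  have hG1 : 1 ≤ G := by simpa [hf.coeff_natDegree] using hG f.natDegree
  induction i generalizing l with
  | zero =>
    rcases eq_or_ne f 1 with rfl | hf1
    · simp
    have hdeg : (1 : ℤ[X]).degree < f.degree := by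
      rw [degree_one, ← natDegree_pos_iff_degree_pos]
      exact Nat.pos_of_ne_zero fun h ↦ hf1 (hf.natDegree_eq_zero.mp h)
    rw [pow_zero, (modByMonic_eq_self_iff hf).mpr hdeg, coeff_one]
    split_ifs <;> simp
  | succ i ih =>
    set r := X ^ i %ₘ f
    have hstep : X ^ (i + 1) %ₘ f = X * r - C (r.coeff (f.natDegree - 1)) * f := by
      rw [← X_mul_modByMonic hf (degree_modByMonic_lt _ hf), pow_succ']
      refine modByMonic_eq_of_dvd_sub hf ?_
      rw [← mul_sub]
      exact (dvd_sub_comm.mp (dvd_modByMonic_sub _ _)).mul_left _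
    have hshift : |(X * r).coeff l| ≤ (1 + G) ^ i := by
      rcases l with _ | l
      · simpa using by positivity
      · simpa using ih l
    have hprod : |r.coeff (f.natDegree - 1) * f.coeff l| ≤ (1 + G) ^ i * G := by
      rw [abs_mul]
      exact mul_le_mul (ih _) (hG l) (abs_nonneg _) (by positivity)
    calc |(X ^ (i + 1) %ₘ f).coeff l| ≤ (1 + G) ^ i + (1 + G) ^ i * G := by
          rw [hstep, coeff_sub, coeff_C_mul]
          exact (abs_sub _ _).trans (add_le_add hshift hprod)
      _ = (1 + G) ^ (i + 1) := by ring

/-- The auxiliary polynomial `A(X) + Y B(X)` of Thue's method: it has degree at most `N` in `X`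
and its specialisation at `Y = α` vanishes to order at least `T` at every root `α` of `f`. -/
structure IsThuePair (f : ℤ[X]) (N T : ℕ) (A B : ℤ[X]) : Prop where
  ne_zero : A ≠ 0 ∨ B ≠ 0
  natDegree_left : A.natDegree ≤ N
  natDegree_right : B.natDegree ≤ N
  dvd_hasseDeriv : ∀ j < T, f ∣ hasseDeriv j A + X * hasseDeriv j B

theorem dvd_iff_forall_coeff_modByMonic_eq_zero {R : Type*} [CommRing R] {f p : R[X]}
    (hf : f.Monic) : f ∣ p ↔ ∀ l : Fin f.natDegree, (p %ₘ f).coeff l = 0 := by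
  rw [← modByMonic_eq_zero_iff_dvd hf]
  refine ⟨fun h l ↦ by rw [h, coeff_zero], fun h ↦ ?_⟩
  nontriviality R
  ext l
  by_cases hl : l < f.natDegree
  · exact h ⟨l, hl⟩
  · exact coeff_eq_zero_of_degree_lt ((degree_modByMonic_lt _ hf).trans_le
      (degree_le_of_natDegree_le (not_lt.mp hl)))

/-- The matrix of the linear conditions on the coefficients of `A` (columns `(0, i)`) and of `B`
(columns `(1, i)`) expressing `IsThuePair.dvd_hasseDeriv`. -/
noncomputable def thueMatrix (f : ℤ[X]) (N T : ℕ) :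
    Matrix (Fin T × Fin f.natDegree) (Fin 2 × Fin (N + 1)) ℤ :=
  fun jl ei ↦ ((X ^ (ei.1 : ℕ) * hasseDeriv jl.1 (X ^ (ei.2 : ℕ))) %ₘ f).coeff jl.2

theorem abs_thueMatrix_le {f : ℤ[X]} (hf : f.Monic) {G : ℤ} (hG : ∀ l, |f.coeff l| ≤ G)
    {N T : ℕ} (jl : Fin T × Fin f.natDegree) (ei : Fin 2 × Fin (N + 1)) :
    |(thueMatrix f N T jl ei : ℝ)| ≤ (2 * (1 + G)) ^ (N + 1) := by
  obtain ⟨j, l⟩ := jl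
  obtain ⟨e, i⟩ := ei
  have hG1 : 1 ≤ G := by simpa [hf.coeff_natDegree] using hG f.natDegree
  have hpoly : (X ^ (e : ℕ) * hasseDeriv j (X ^ (i : ℕ)) : ℤ[X]) =
      ((i : ℕ).choose j : ℤ) • X ^ (i - j + e : ℕ) := by
    rw [← monomial_one_right_eq_X_pow (i : ℕ), hasseDeriv_monomial, ← smul_X_eq_monomial,
      mul_smul_comm, ← pow_add, add_comm (e : ℕ), mul_one]
  have hchoose : (i : ℕ).choose j ≤ 2 ^ (N + 1) :=
    (Nat.choose_le_two_pow _ _).trans (Nat.pow_le_pow_right two_pos i.2.le)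
  have hpow : |(X ^ (i - j + e : ℕ) %ₘ f).coeff l| ≤ (1 + G) ^ (N + 1) :=
    (abs_coeff_X_pow_modByMonic_le hf hG _ _).trans (pow_le_pow_right₀ (by omega) (by omega))
  rw [mul_pow]
  norm_cast
  rw [thueMatrix, hpoly, smul_modByMonic, coeff_smul, smul_eq_mul, abs_mul, Nat.abs_cast]
  gcongr

open Matrix in
theorem thueMatrix_mulVec (f : ℤ[X]) (N T : ℕ) (t : Fin 2 × Fin (N + 1) → ℤ)
    (jl : Fin T × Fin f.natDegree) :
    (thueMatrix f N T *ᵥ t) jl = ((hasseDeriv jl.1 (ofFn (N + 1) fun i ↦ t (0, i)) +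
      X * hasseDeriv jl.1 (ofFn (N + 1) fun i ↦ t (1, i))) %ₘ f).coeff jl.2 := by
  have hcolumns (e : Fin 2) :
      ((X ^ (e : ℕ) * hasseDeriv jl.1 (ofFn (N + 1) fun i ↦ t (e, i))) %ₘ f).coeff jl.2 =
        ∑ i, thueMatrix f N T jl (e, i) * t (e, i) := by
    rw [ofFn_eq_sum_monomial, map_sum, Finset.mul_sum, ← modByMonicHom_apply, map_sum,
      finsetSum_coeff]
    refine Finset.sum_congr rfl fun i _ ↦ ?_
    rw [← smul_X_eq_monomial, map_smul, mul_smul_comm, map_smul, coeff_smul, smul_eq_mul,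
      mul_comm, thueMatrix, modByMonicHom_apply]
  rw [Matrix.mulVec, dotProduct, Fintype.sum_prod_type, Fin.sum_univ_two, ← hcolumns,
    ← hcolumns, Fin.val_zero, Fin.val_one, pow_zero, one_mul, pow_one, add_modByMonic, coeff_add]

theorem exists_isThuePair {f : ℤ[X]} (hf : f.Monic) (hd : 0 < f.natDegree) {G : ℤ}
    (hG : ∀ l, |f.coeff l| ≤ G) {N T ρ : ℕ} (hT : 0 < T) (hlt : f.natDegree * T < 2 * (N + 1))
    (hρ : f.natDegree * T ≤ ρ * (2 * (N + 1) - f.natDegree * T)) :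
    ∃ A B : ℤ[X], IsThuePair f N T A B ∧
      ∀ i, |(A.coeff i : ℝ)| ≤ ((4 * (1 + G)) ^ (N + 1)) ^ ρ ∧
        |(B.coeff i : ℝ)| ≤ ((4 * (1 + G)) ^ (N + 1)) ^ ρ := by
  have : Nonempty (Fin T × Fin f.natDegree) := ⟨⟨⟨0, hT⟩, ⟨0, hd⟩⟩⟩
  have hG1 : (1 : ℝ) ≤ G := mod_cast by simpa [hf.coeff_natDegree] using hG f.natDegree
  obtain ⟨t, ht, htM, htle⟩ := exists_int_vec_mulVec_eq_zero_abs_le (thueMatrix f N T)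
    (one_le_pow₀ (by linarith)) (abs_thueMatrix_le hf hG) (ρ := ρ)
    (by simpa [mul_comm] using hlt) (by simpa [mul_comm] using hρ)
  have hcoeff (e : Fin 2) (i : ℕ) : |((ofFn (N + 1) fun i ↦ t (e, i)).coeff i : ℝ)| ≤
      ((4 * (1 + G)) ^ (N + 1)) ^ ρ := by
    by_cases hi : i < N + 1
    · rw [ofFn_coeff_eq_val_of_lt _ hi]
      refine (htle _).trans (pow_le_pow_left₀ (by positivity) ?_ _)
      have hcard : ((2 * (N + 1) : ℕ) : ℝ) ≤ 2 ^ (N + 1) := by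
        rw [pow_succ', Nat.cast_mul]
        exact mod_cast Nat.mul_le_mul_left 2 N.lt_two_pow_self
      rw [show 4 * (1 + (G : ℝ)) = 2 * (2 * (1 + G)) by ring, mul_pow 2 (2 * (1 + (G : ℝ)))]
      exact mul_le_mul_of_nonneg_right (by simpa using hcard) (by positivity)
    · rw [ofFn_coeff_eq_zero_of_ge _ (not_lt.mp hi)]
      simpa using by positivity
  refine ⟨ofFn (N + 1) fun i ↦ t (0, i), ofFn (N + 1) fun i ↦ t (1, i), ⟨?_, ?_, ?_, ?_⟩,
    fun i ↦ ⟨hcoeff 0 i, hcoeff 1 i⟩⟩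
  · by_contra! h0
    refine ht (funext fun ⟨e, i⟩ ↦ ?_)
    have hzero (e : Fin 2) : (ofFn (N + 1) fun i ↦ t (e, i)) = 0 := by
      fin_cases e
      exacts [h0.1, h0.2]
    simpa [ofFn_coeff_eq_val_of_lt _ i.2] using congr_arg (coeff · i) (hzero e)
  · exact Nat.lt_succ_iff.mp (ofFn_natDegree_lt (Nat.succ_pos N) _)
  · exact Nat.lt_succ_iff.mp (ofFn_natDegree_lt (Nat.succ_pos N) _)
  · intro j hj
    rw [dvd_iff_forall_coeff_modByMonic_eq_zero hf]
    intro l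
    rw [← thueMatrix_mulVec f N T t (⟨j, hj⟩, l), htM, Pi.zero_apply]

end ThueAuxiliary

section ZeroEstimate

variable {K : Type*} [Field K]

theorem sum_le_natDegree_of_pow_X_sub_C_dvd {P : K[X]} (hP : P ≠ 0) (S : Finset K) (m : K → ℕ)
    (h : ∀ x ∈ S, (X - C x) ^ m x ∣ P) : ∑ x ∈ S, m x ≤ P.natDegree := by
  have hprod : (∏ x ∈ S, (X - C x) ^ m x) ∣ P := Finset.prod_dvd_of_coprime
    (fun x _ y _ hxy ↦ (isCoprime_X_sub_C_of_isUnit_sub (sub_ne_zero.mpr hxy).isUnit).pow) h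
  simpa [natDegree_prod_of_monic _ _ fun x _ ↦ (monic_X_sub_C x).pow (m x)] using
    natDegree_le_of_dvd hprod hP

theorem pow_sub_one_dvd_wronskian {R : Type*} [CommRing R] {p A B : R[X]} {y : R} {m : ℕ}
    (h : p ^ m ∣ A + C y * B) : p ^ (m - 1) ∣ wronskian A B := by
  have hW : wronskian A B = (A + C y * B) * derivative B - derivative (A + C y * B) * B := by
    simp only [wronskian, derivative_add, derivative_C_mul]
    ring
  rw [hW]
  exact dvd_sub (((pow_dvd_pow p (m.sub_le 1)).trans h).mul_right _)
    ((pow_sub_one_dvd_derivative_of_pow_dvd h).mul_right _)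

theorem wronskian_mul_left_mul_left {R : Type*} [CommRing R] (D A B : R[X]) :
    wronskian (D * A) (D * B) = D ^ 2 * wronskian A B := by
  simp only [wronskian, derivative_mul]
  ring

theorem exists_eq_C_mul_of_wronskian_eq_zero [CharZero K] {A B : K[X]}
    (h : wronskian A B = 0) : ∃ (s t : K) (D : K[X]), A = C s * D ∧ B = C t * D := by
  classical
  rcases eq_or_ne B 0 with rfl | hB0
  · exact ⟨1, 0, A, by simp, by simp⟩
  let _ : GCDMonoid K[X] := EuclideanDomain.gcdMonoid K[X]
  set D := GCDMonoid.gcd A B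
  have hD : D ≠ 0 := gcd_ne_zero_of_right hB0
  have hA : D * (A / D) = A := EuclideanDomain.mul_div_cancel' hD (gcd_dvd_left A B)
  have hB : D * (B / D) = B := EuclideanDomain.mul_div_cancel' hD (gcd_dvd_right A B)
  have hW : wronskian (A / D) (B / D) = 0 := by
    rw [← hA, ← hB, wronskian_mul_left_mul_left] at h
    exact (mul_eq_zero.mp h).resolve_left (pow_ne_zero 2 hD)
  have hconst := (isCoprime_div_gcd_div_gcd hB0).wronskian_eq_zero_iff.mp hW
  refine ⟨(A / D).coeff 0, (B / D).coeff 0, D, ?_, ?_⟩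
  · rw [← eq_C_of_derivative_eq_zero hconst.1, mul_comm, hA]
  · rw [← eq_C_of_derivative_eq_zero hconst.2, mul_comm, hB]

open scoped Classical in
theorem card_sub_one_mul_le_natDegree {s t : K} {D : K[X]} (hst : s ≠ 0 ∨ t ≠ 0) (hD : D ≠ 0)
    {S : Finset K} {T : ℕ} (h : ∀ x ∈ S, (X - C x) ^ T ∣ C s * D + C x * (C t * D)) :
    (S.card - 1) * T ≤ D.natDegree := by
  have hcard : (S.filter fun x ↦ s + x * t = 0).card ≤ 1 := by
    refine Finset.card_le_one.mpr fun x hx y hy ↦ ?_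
    simp only [Finset.mem_filter] at hx hy
    have ht : t ≠ 0 := by
      rintro rfl
      simp_all
    exact mul_right_cancel₀ ht (by linear_combination hx.2 - hy.2)
  have hsplit := S.card_filter_add_card_filter_not fun x ↦ s + x * t = 0
  have hmult := sum_le_natDegree_of_pow_X_sub_C_dvd hD (S.filter fun x ↦ ¬ s + x * t = 0)
    (fun _ ↦ T) fun x hx ↦ by
      rw [Finset.mem_filter] at hx
      have hfactor : C s * D + C x * (C t * D) = C (s + x * t) * D := by
        simp only [C_add, C_mul]
        ring
      exact (isUnit_C.mpr (Ne.isUnit hx.2)).dvd_mul_left.mp (hfactor ▸ h x hx.1)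
  rw [Finset.sum_const, smul_eq_mul] at hmult
  exact (Nat.mul_le_mul_right T (by omega)).trans hmult

theorem not_pow_X_sub_C_dvd_add_C_mul [CharZero K] {A B : K[X]} {N T m : ℕ} {S : Finset K}
    {x y : K} (h0 : A ≠ 0 ∨ B ≠ 0) (hA : A.natDegree ≤ N) (hB : B.natDegree ≤ N)
    (h : ∀ z ∈ S, (X - C z) ^ T ∣ A + C z * B) (hx : x ∉ S) (hNT : N < (S.card - 1) * T)
    (hm : 2 * N + S.card < S.card * T + m) : ¬ (X - C x) ^ m ∣ A + C y * B := by
  classical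
  intro hdvd
  by_cases hW : wronskian A B = 0
  · obtain ⟨s, t, D, rfl, rfl⟩ := exists_eq_C_mul_of_wronskian_eq_zero hW
    have hst : s ≠ 0 ∨ t ≠ 0 := h0.imp (by rintro h rfl; simp at h) (by rintro h rfl; simp at h)
    have hD : D ≠ 0 := by rintro rfl; simp at h0
    have hDN : D.natDegree ≤ N := hst.elim (fun hs ↦ by rwa [natDegree_C_mul hs] at hA)
      fun ht ↦ by rwa [natDegree_C_mul ht] at hB
    exact (card_sub_one_mul_le_natDegree hst hD h).not_gt (hDN.trans_lt hNT)
  · have hmult := sum_le_natDegree_of_pow_X_sub_C_dvd hW (insert x S)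
      (Function.update (fun _ ↦ T - 1) x (m - 1)) fun z hz ↦ by
        rcases eq_or_ne z x with rfl | hzx
        · simpa using pow_sub_one_dvd_wronskian hdvd
        · simpa [hzx] using pow_sub_one_dvd_wronskian (h z (Finset.mem_of_mem_insert_of_ne hz hzx))
    have hdeg := natDegree_wronskian_lt_add hW
    have hsum : ∑ z ∈ S, Function.update (fun _ ↦ T - 1) x (m - 1) z = S.card * (T - 1) :=
      Finset.sum_const_nat fun z hz ↦ Function.update_of_ne (ne_of_mem_of_not_mem hz hx) _ _
    rw [Finset.sum_insert hx, Function.update_self, hsum, Nat.mul_sub_one] at hmult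
    have := Nat.le_mul_of_pos_right S.card (show 0 < T by by_contra! hT; simp_all)
    omega

theorem pow_X_sub_C_dvd_of_hasseDeriv_eval_eq_zero {R : Type*} [CommRing R] {P : R[X]} {x : R}
    {m : ℕ} (h : ∀ j < m, (hasseDeriv j P).eval x = 0) : (X - C x) ^ m ∣ P := by
  rw [X_sub_C_pow_dvd_iff, X_pow_dvd_iff]
  intro j hj
  rw [← h j hj, ← taylor_coeff, taylor_apply]

end ZeroEstimate

section ThueEstimates

theorem norm_eval_hasseDeriv_le {P : ℂ[X]} {N : ℕ} (hP : P.natDegree ≤ N) {Y M : ℝ} {x : ℂ}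
    {j : ℕ} (hY : ∀ i, ‖P.coeff i‖ ≤ Y) (hM0 : 0 ≤ M)
    (hM : ∀ i ≤ N, P.coeff i ≠ 0 → ‖x‖ ^ (i - j) ≤ M) :
    ‖(hasseDeriv j P).eval x‖ ≤ Y * 4 ^ N * M := by
  have hY0 : 0 ≤ Y := (norm_nonneg _).trans (hY 0)
  have hterm (k : ℕ) : ‖(hasseDeriv j P).coeff k * x ^ k‖ ≤ Y * 2 ^ N * M := by
    rw [hasseDeriv_coeff]
    rcases eq_or_ne (P.coeff (k + j)) 0 with h0 | h0
    · simpa [h0] using by positivity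
    have hkj : k + j ≤ N := (le_natDegree_of_ne_zero h0).trans hP
    have hchoose : ((k + j).choose j : ℝ) ≤ 2 ^ N := by
      exact_mod_cast (Nat.choose_le_two_pow _ _).trans (Nat.pow_le_pow_right two_pos hkj)
    have hpow : ‖x‖ ^ k ≤ M := by simpa using hM _ hkj h0
    rw [norm_mul, norm_mul, norm_pow, Complex.norm_natCast, mul_comm Y]
    gcongr
    exact hY _
  have hdeg : (hasseDeriv j P).natDegree < N + 1 :=
    Nat.lt_succ_of_le ((natDegree_hasseDeriv_le P j).trans ((Nat.sub_le _ _).trans hP))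
  have hN : ((N + 1 : ℕ) : ℝ) ≤ 2 ^ N := by exact_mod_cast N.lt_two_pow_self
  calc ‖(hasseDeriv j P).eval x‖ ≤ (N + 1 : ℕ) • (Y * 2 ^ N * M) := by
        rw [eval_eq_sum_range' hdeg]
        refine (norm_sum_le _ _).trans ?_
        simpa only [Finset.card_range] using
          Finset.sum_le_card_nsmul (Finset.range (N + 1)) _ _ fun k _ ↦ hterm k
    _ ≤ 2 ^ N * (Y * 2 ^ N * M) := by rw [nsmul_eq_mul]; gcongr
    _ = Y * 4 ^ N * M := by rw [show (4 : ℝ) = 2 * 2 by norm_num, mul_pow]; ring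

theorem norm_eval_hasseDeriv_le_of_norm_le {P : ℂ[X]} {N : ℕ} (hP : P.natDegree ≤ N) {Y R : ℝ}
    {x : ℂ} (hY : ∀ i, ‖P.coeff i‖ ≤ Y) (hR : 1 ≤ R) (hx : ‖x‖ ≤ R) (j : ℕ) :
    ‖(hasseDeriv j P).eval x‖ ≤ Y * (4 * R) ^ N := by
  rw [mul_pow, ← mul_assoc]
  refine norm_eval_hasseDeriv_le hP hY (by positivity) fun i hi _ ↦ ?_
  exact (pow_le_pow_left₀ (norm_nonneg _) hx _).trans (pow_le_pow_right₀ hR (by omega))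

theorem norm_eval_hasseDeriv_le_of_pow_dvd {P : ℂ[X]} {N T : ℕ} (hP : P.natDegree ≤ N)
    {Y : ℝ} {x α : ℂ} (hY : ∀ i, ‖(hasseDeriv i P).eval α‖ ≤ Y) (hdvd : (X - C α) ^ T ∣ P)
    (hx : ‖x - α‖ ≤ 1) (j : ℕ) :
    ‖(hasseDeriv j P).eval x‖ ≤ Y * 4 ^ N * ‖x - α‖ ^ (T - j) := by
  have hshift : (hasseDeriv j P).eval x = (hasseDeriv j (taylor α P)).eval (x - α) := by
    rw [← taylor_coeff, ← taylor_coeff, taylor_taylor, sub_add_cancel]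
  rw [X_sub_C_pow_dvd_iff, X_pow_dvd_iff, ← taylor_apply] at hdvd
  rw [hshift]
  refine norm_eval_hasseDeriv_le ((natDegree_taylor P α).trans_le hP)
    (fun i ↦ by rw [taylor_coeff]; exact hY i) (by positivity) fun i _ hi ↦ ?_
  have hTi : T ≤ i := not_lt.mp fun h ↦ hi (hdvd i h)
  exact pow_le_pow_of_le_one (norm_nonneg _) hx (by omega)

theorem hasseDeriv_map {R S : Type*} [Semiring R] [Semiring S] (φ : R →+* S) (j : ℕ) (P : R[X]) :
    hasseDeriv j (P.map φ) = (hasseDeriv j P).map φ := by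
  ext i
  simp only [hasseDeriv_coeff, coeff_map, map_mul, map_natCast]

theorem one_le_pow_mul_norm_aeval_div {P : ℤ[X]} {N : ℕ} (hP : P.natDegree ≤ N) {p : ℤ} {q : ℕ}
    (hq : 0 < q) (h : aeval (p / q : ℂ) P ≠ 0) : 1 ≤ (q : ℝ) ^ N * ‖aeval (p / q : ℂ) P‖ := by
  have hcast : aeval (p / q : ℂ) P = ((P.map (algebraMap ℤ ℝ)).eval ((p : ℝ) / (q : ℤ)) : ℝ) := by
    rw [eval_map_algebraMap]
    simpa using aeval_algebraMap_apply ℂ ((p : ℝ) / (q : ℤ)) P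
  rw [hcast, Complex.ofReal_ne_zero] at h
  rw [hcast, Complex.norm_real, Real.norm_eq_abs]
  refine (one_le_pow_mul_abs_eval_div (by exact_mod_cast hq) h).trans ?_
  have hq1 : (1 : ℝ) ≤ q := mod_cast hq
  rw [Int.cast_natCast]
  gcongr

/-- The specialisation of `A(X) + Y B(X)` at `Y = y`. -/
noncomputable def thueSpec (A B : ℤ[X]) (y : ℂ) : ℂ[X] :=
  A.map (Int.castRingHom ℂ) + C y * B.map (Int.castRingHom ℂ)

theorem eval_hasseDeriv_thueSpec (A B : ℤ[X]) (x y : ℂ) (j : ℕ) :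
    (hasseDeriv j (thueSpec A B y)).eval x =
      aeval x (hasseDeriv j A) + y * aeval x (hasseDeriv j B) := by
  rw [thueSpec, ← smul_eq_C_mul, map_add, map_smul, hasseDeriv_map, hasseDeriv_map, eval_add,
    eval_smul, smul_eq_mul, aeval_def, aeval_def, eval_map, eval_map]
  rfl

variable {f A B : ℤ[X]} {N T : ℕ}

theorem natDegree_thueSpec_le (hA : A.natDegree ≤ N) (hB : B.natDegree ≤ N) (y : ℂ) :
    (thueSpec A B y).natDegree ≤ N :=
  natDegree_add_le_of_degree_le (natDegree_map_le.trans hA)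
    ((natDegree_C_mul_le _ _).trans (natDegree_map_le.trans hB))

theorem IsThuePair.pow_dvd_thueSpec (h : IsThuePair f N T A B) {α : ℂ} (hα : aeval α f = 0) :
    (X - C α) ^ T ∣ thueSpec A B α := by
  refine pow_X_sub_C_dvd_of_hasseDeriv_eval_eq_zero fun j hj ↦ ?_
  obtain ⟨g, hg⟩ := h.dvd_hasseDeriv j hj
  simpa [eval_hasseDeriv_thueSpec, hα] using congr_arg (aeval α) hg

theorem norm_coeff_thueSpec_le {Y : ℝ} (hA : ∀ i, |(A.coeff i : ℝ)| ≤ Y)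
    (hB : ∀ i, |(B.coeff i : ℝ)| ≤ Y) (y : ℂ) (i : ℕ) :
    ‖(thueSpec A B y).coeff i‖ ≤ (‖y‖ + 1) * Y :=
  calc ‖(thueSpec A B y).coeff i‖ ≤ ‖(A.coeff i : ℂ)‖ + ‖y‖ * ‖(B.coeff i : ℂ)‖ := by
        simpa [thueSpec] using norm_add_le (A.coeff i : ℂ) (y * B.coeff i)
    _ ≤ Y + ‖y‖ * Y := by
        rw [Complex.norm_intCast, Complex.norm_intCast]
        gcongr
        exacts [hA i, hB i]
    _ = (‖y‖ + 1) * Y := by ring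

theorem IsThuePair.norm_eval_hasseDeriv_le (h : IsThuePair f N T A B) {Y R : ℝ} {α : ℂ}
    (hα : aeval α f = 0) (hA : ∀ i, |(A.coeff i : ℝ)| ≤ Y) (hB : ∀ i, |(B.coeff i : ℝ)| ≤ Y)
    (hR : ‖α‖ + 1 ≤ R) {x : ℂ} (hx : ‖x - α‖ ≤ 1) (y : ℂ) (j : ℕ) :
    ‖(hasseDeriv j (thueSpec A B y)).eval x‖ ≤
      Y * (16 * R) ^ (N + 1) * (‖x - α‖ ^ (T - j) + ‖y - α‖) := by
  have hY : 0 ≤ Y := (abs_nonneg _).trans (hA 0)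
  have hR1 : 1 ≤ R := by linarith [norm_nonneg α]
  have hxR : ‖x‖ ≤ R := by linarith [norm_le_norm_add_norm_sub' x α]
  have hdeg := natDegree_thueSpec_le h.natDegree_left h.natDegree_right α
  have hcoeff (i : ℕ) : ‖(thueSpec A B α).coeff i‖ ≤ R * Y :=
    (norm_coeff_thueSpec_le hA hB α i).trans (by gcongr)
  have hmain : ‖(hasseDeriv j (thueSpec A B α)).eval x‖ ≤
      R * Y * (4 * R) ^ N * 4 ^ N * ‖x - α‖ ^ (T - j) :=
    norm_eval_hasseDeriv_le_of_pow_dvd hdeg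
      (norm_eval_hasseDeriv_le_of_norm_le hdeg hcoeff hR1 (by linarith))
      (h.pow_dvd_thueSpec hα) hx j
  have herror : ‖aeval x (hasseDeriv j B)‖ ≤ Y * (4 * R) ^ N := by
    have hBcoeff (i : ℕ) : ‖(B.map (Int.castRingHom ℂ)).coeff i‖ ≤ Y := by
      simpa [Complex.norm_intCast] using hB i
    have := norm_eval_hasseDeriv_le_of_norm_le
      (natDegree_map_le.trans h.natDegree_right) hBcoeff hR1 hxR j
    rwa [hasseDeriv_map, eval_map] at this
  have hsplit : (hasseDeriv j (thueSpec A B y)).eval x =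
      (hasseDeriv j (thueSpec A B α)).eval x + (y - α) * aeval x (hasseDeriv j B) := by
    rw [eval_hasseDeriv_thueSpec, eval_hasseDeriv_thueSpec]
    ring
  have hpow_main : R * Y * (4 * R) ^ N * 4 ^ N ≤ Y * (16 * R) ^ (N + 1) :=
    calc R * Y * (4 * R) ^ N * 4 ^ N = Y * (16 * R) ^ N * R := by
          rw [show 16 * R = 4 * R * 4 by ring, mul_pow (4 * R)]; ring
      _ ≤ Y * (16 * R) ^ N * (16 * R) := by gcongr; linarith
      _ = Y * (16 * R) ^ (N + 1) := by ring
  have hpow_error : (4 * R) ^ N ≤ (16 * R) ^ (N + 1) :=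
    (pow_le_pow_left₀ (by positivity) (by linarith) N).trans
      (pow_le_pow_right₀ (by linarith) N.le_succ)
  calc _ ≤ ‖(hasseDeriv j (thueSpec A B α)).eval x‖ + ‖y - α‖ * ‖aeval x (hasseDeriv j B)‖ := by
        rw [hsplit, ← norm_mul]; exact norm_add_le _ _
    _ ≤ Y * (16 * R) ^ (N + 1) * ‖x - α‖ ^ (T - j) + ‖y - α‖ * (Y * (16 * R) ^ (N + 1)) :=
        add_le_add (hmain.trans (by gcongr)) (by gcongr; exact herror.trans (by gcongr))
    _ = _ := by ring

theorem one_le_mul_norm_eval_hasseDeriv_thueSpec (hA : A.natDegree ≤ N) (hB : B.natDegree ≤ N)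
    {p₁ p₂ : ℤ} {q₁ q₂ : ℕ} (hq₁ : 0 < q₁) (hq₂ : 0 < q₂) {j : ℕ}
    (h : (hasseDeriv j (thueSpec A B (p₂ / q₂))).eval (p₁ / q₁ : ℂ) ≠ 0) :
    1 ≤ (q₁ : ℝ) ^ N * q₂ * ‖(hasseDeriv j (thueSpec A B (p₂ / q₂))).eval (p₁ / q₁ : ℂ)‖ := by
  have hq₂' : (q₂ : ℂ) ≠ 0 := mod_cast hq₂.ne'
  have hclear : aeval (p₁ / q₁ : ℂ) (C (q₂ : ℤ) * hasseDeriv j A + C p₂ * hasseDeriv j B) =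
      q₂ * (hasseDeriv j (thueSpec A B (p₂ / q₂))).eval (p₁ / q₁ : ℂ) := by
    rw [eval_hasseDeriv_thueSpec]
    simp only [map_add, map_mul, aeval_C, algebraMap_int_eq, Int.coe_castRingHom,
      Int.cast_natCast]
    field_simp
  have hdeg {P : ℤ[X]} (hP : P.natDegree ≤ N) (a : ℤ) : (C a * hasseDeriv j P).natDegree ≤ N :=
    (natDegree_C_mul_le _ _).trans ((natDegree_hasseDeriv_le P j).trans ((Nat.sub_le _ _).trans hP))
  have := one_le_pow_mul_norm_aeval_div (natDegree_add_le_of_degree_le (hdeg hA _) (hdeg hB _))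
    hq₁ (hclear ▸ mul_ne_zero hq₂' h)
  rwa [hclear, norm_mul, Complex.norm_natCast, ← mul_assoc] at this

end ThueEstimates

section ThueApproximation

variable {f A B : ℤ[X]} {N T : ℕ}

theorem exists_abs_coeff_le (f : ℤ[X]) : ∃ G : ℤ, ∀ l, |f.coeff l| ≤ G := by
  refine ⟨∑ l ∈ f.support, |f.coeff l|, fun l ↦ ?_⟩
  by_cases hl : l ∈ f.support
  · exact Finset.single_le_sum (f := fun l ↦ |f.coeff l|) (fun _ _ ↦ abs_nonneg _) hl
  · rw [notMem_support_iff.mp hl, abs_zero]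
    exact Finset.sum_nonneg fun _ _ ↦ abs_nonneg _

theorem card_toFinset_aroots_of_separable (hf : f.Monic)
    (hsep : (f.map (Int.castRingHom ℂ)).Separable) :
    (f.aroots ℂ).toFinset.card = f.natDegree := by
  rw [aroots, algebraMap_int_eq, Multiset.toFinset_card_of_nodup (nodup_roots hsep),
    IsAlgClosed.card_roots_eq_natDegree, hf.natDegree_map]

theorem IsThuePair.exists_eval_hasseDeriv_ne_zero (h : IsThuePair f N T A B) (hf : f.Monic)
    (hsep : (f.map (Int.castRingHom ℂ)).Separable) {x : ℂ} (hx : aeval x f ≠ 0) (y : ℂ) {m : ℕ}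
    (hNT : N < (f.natDegree - 1) * T) (hm : 2 * N + f.natDegree < f.natDegree * T + m) :
    ∃ j < m, (hasseDeriv j (thueSpec A B y)).eval x ≠ 0 := by
  by_contra! hzero
  have hmap_ne : A.map (Int.castRingHom ℂ) ≠ 0 ∨ B.map (Int.castRingHom ℂ) ≠ 0 := by
    simpa [Polynomial.map_eq_zero_iff (RingHom.injective_int (Int.castRingHom ℂ))] using h.ne_zero
  rw [← card_toFinset_aroots_of_separable hf hsep] at hNT hm
  refine not_pow_X_sub_C_dvd_add_C_mul hmap_ne (natDegree_map_le.trans h.natDegree_left)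
    (natDegree_map_le.trans h.natDegree_right) (fun z hz ↦ h.pow_dvd_thueSpec ?_) ?_ hNT hm
    (pow_X_sub_C_dvd_of_hasseDeriv_eval_eq_zero hzero)
  · exact (mem_aroots.mp (Multiset.mem_toFinset.mp hz)).2
  · exact fun hmem ↦ hx (mem_aroots.mp (Multiset.mem_toFinset.mp hmem)).2

theorem exists_one_le_mul_norm_pow_add_norm (hf : f.Monic)
    (hsep : (f.map (Int.castRingHom ℂ)).Separable) {d s : ℕ} (hfd : f.natDegree = d) (hd : 3 ≤ d)
    (hs : 2 ≤ s) {α : ℂ} (hα : aeval α f = 0) :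
    ∃ K : ℝ, 0 < K ∧ ∀ (τ : ℕ) (p₁ p₂ : ℤ) (q₁ q₂ : ℕ), 0 < τ → 0 < q₁ → 0 < q₂ →
      aeval (p₁ / q₁ : ℂ) f ≠ 0 → ‖(p₁ / q₁ : ℂ) - α‖ ≤ 1 →
      1 ≤ K ^ τ * ((q₁ : ℝ) ^ ((d * s + 1) * τ) * q₂ *
        (‖(p₁ / q₁ : ℂ) - α‖ ^ (2 * s * τ - (2 * τ + d)) + ‖(p₂ / q₂ : ℂ) - α‖)) := by
  obtain ⟨G, hG⟩ : ∃ G : ℤ, ∀ l, |f.coeff l| ≤ G := exists_abs_coeff_le f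
  have hG1 : (1 : ℝ) ≤ G := mod_cast by simpa [hf.coeff_natDegree] using hG f.natDegree
  set R : ℝ := ‖α‖ + 1
  have hR : 1 ≤ R := by simp [R]
  refine ⟨((4 * (1 + G)) ^ (d * s) * (16 * R)) ^ (d * s + 2), by positivity,
    fun τ p₁ p₂ q₁ q₂ hτ hq₁ hq₂ hne hnear ↦ ?_⟩
  set N := (d * s + 1) * τ with hN
  set T := 2 * s * τ with hT
  have hdT : d * T + 2 * τ = 2 * N := by rw [hN, hT]; ring
  have hTN : T + 2 * τ < N := by
    have hds : 3 * s ≤ d * s := Nat.mul_le_mul_right s hd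
    rw [hN, hT, ← add_mul]
    exact Nat.mul_lt_mul_of_pos_right (by omega) hτ
  obtain ⟨A, B, hAB, hcoeff⟩ := exists_isThuePair hf (by omega) hG (N := N) (T := T) (ρ := d * s)
    (by positivity) (by rw [hfd]; omega) (by
      rw [hfd, show 2 * (N + 1) - d * T = 2 * τ + 2 by omega, hT]
      nlinarith)
  obtain ⟨j, hj, hjne⟩ := hAB.exists_eval_hasseDeriv_ne_zero hf hsep hne (p₂ / q₂ : ℂ)
    (m := 2 * τ + d + 1) (by rw [hfd, Nat.sub_one_mul]; omega) (by rw [hfd]; omega)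
  refine (one_le_mul_norm_eval_hasseDeriv_thueSpec hAB.natDegree_left hAB.natDegree_right
    hq₁ hq₂ hjne).trans ?_
  rw [mul_left_comm]
  gcongr
  refine (hAB.norm_eval_hasseDeriv_le hα (fun i ↦ (hcoeff i).1) (fun i ↦ (hcoeff i).2) le_rfl
    hnear _ j).trans ?_
  gcongr ?_ * (?_ + _)
  · have hNτ : N + 1 ≤ (d * s + 2) * τ := by rw [hN]; nlinarith
    rw [← pow_mul, mul_comm (N + 1), pow_mul, ← mul_pow, ← pow_mul _ (d * s + 2)]
    exact pow_le_pow_right₀ (one_le_mul_of_one_le_of_one_le (one_le_pow₀ (by linarith))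
      (by linarith)) hNτ
  · exact pow_le_pow_of_le_one (norm_nonneg _) hnear (by omega)

theorem pow_mul_pow_add_le {q₁ q₂ c δ₁ δ₂ : ℝ} {m t u e w : ℕ} (hq₁ : 1 ≤ q₁) (hq₂ : 1 ≤ q₂)
    (hc : 1 ≤ c) (hδ₁ : 0 ≤ δ₁) (hδ₁e : δ₁ ≤ c / q₁ ^ (e + 1)) (hδ₂e : δ₂ ≤ c / q₂ ^ (e + 1))
    (hw : w ≠ 0) (hupper : q₂ ≤ q₁ ^ u) (hlower : q₁ ^ (m + t) ≤ q₂ ^ e)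
    (hexp : m + u + t ≤ (e + 1) * w) :
    q₁ ^ m * q₂ * (δ₁ ^ w + δ₂) ≤ c ^ w * (2 / q₁ ^ t) := by
  have hfirst : q₁ ^ m * q₂ * δ₁ ^ w ≤ c ^ w * (1 / q₁ ^ t) :=
    calc q₁ ^ m * q₂ * δ₁ ^ w ≤ q₁ ^ m * q₁ ^ u * (c / q₁ ^ (e + 1)) ^ w := by gcongr
      _ = c ^ w * (q₁ ^ (m + u + t) / q₁ ^ ((e + 1) * w) / q₁ ^ t) := by
          rw [div_pow, ← pow_mul, pow_add q₁ (m + u), pow_add q₁ m]; field_simp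
      _ ≤ c ^ w * (1 / q₁ ^ t) := by
          gcongr
          exact div_le_one_of_le₀ (pow_le_pow_right₀ hq₁ hexp) (by positivity)
  have hsecond : q₁ ^ m * q₂ * δ₂ ≤ c ^ w * (1 / q₁ ^ t) :=
    calc q₁ ^ m * q₂ * δ₂ ≤ q₁ ^ m * q₂ * (c / q₂ ^ (e + 1)) := by gcongr
      _ = c * (q₁ ^ (m + t) / q₂ ^ e / q₁ ^ t) := by
          rw [pow_add q₁, pow_succ q₂]; field_simp
      _ ≤ c ^ w * (1 / q₁ ^ t) := by
          gcongr
          · exact le_self_pow₀ hc hw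
          · exact div_le_one_of_le₀ hlower (by positivity)
  calc q₁ ^ m * q₂ * (δ₁ ^ w + δ₂) = q₁ ^ m * q₂ * δ₁ ^ w + q₁ ^ m * q₂ * δ₂ := by ring
    _ ≤ c ^ w * (1 / q₁ ^ t) + c ^ w * (1 / q₁ ^ t) := add_le_add hfirst hsecond
    _ = c ^ w * (2 / q₁ ^ t) := by ring

theorem not_one_le_pow_mul_of_close {K c q₁ q₂ δ₁ δ₂ : ℝ} {d e k r s τ : ℕ} (hK : 0 < K)
    (hc : 1 ≤ c) (hq₂ : 1 ≤ q₂) (hk : 2 * e = d + 1 + k) (hs : s = 2 * e + 5) (hr : r = (k + 2) * s)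
    (hq₁ : 2 * (K * c ^ (2 * s)) + 1 < q₁) (hτ : r + (e + 1) * d < τ)
    (hlower : (q₁ ^ r) ^ τ ≤ q₂) (hupper : q₂ ≤ (q₁ ^ r) ^ (τ + 1)) (hδ₁ : 0 ≤ δ₁)
    (hδ₁e : δ₁ ≤ c / q₁ ^ (e + 1)) (hδ₂e : δ₂ ≤ c / q₂ ^ (e + 1)) :
    ¬ 1 ≤ K ^ τ * (q₁ ^ ((d * s + 1) * τ) * q₂ * (δ₁ ^ (2 * s * τ - (2 * τ + d)) + δ₂)) := by
  have hKc : 0 < K * c ^ (2 * s) := by positivity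
  have hq₁_one : 1 ≤ q₁ := by linarith
  have hτd : d + τ < 2 * s * τ - 2 * τ := by
    rw [← Nat.sub_mul]
    have : 2 * τ ≤ (2 * s - 2) * τ := Nat.mul_le_mul_right τ (by omega)
    nlinarith
  have hgain : d * s + 2 ≤ r * e := by
    rw [hr]
    nlinarith [Nat.zero_le (k * s * e)]
  have hexp : (d * s + 1) * τ + r * (τ + 1) + τ ≤ (e + 1) * (2 * s * τ - (2 * τ + d)) := by
    obtain ⟨w, hw⟩ := Nat.exists_eq_add_of_le (show 2 * τ + d ≤ 2 * s * τ by omega)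
    have hbalance : d * s + r + 3 + 2 * (e + 1) = (e + 1) * (2 * s) := by
      rw [hr, hs]
      zify at hk ⊢
      linear_combination -(2 * e + 5) * hk
    rw [hw, Nat.add_sub_cancel_left]
    nlinarith
  have hmain := pow_mul_pow_add_le (m := (d * s + 1) * τ) (t := τ) (u := r * (τ + 1))
    hq₁_one hq₂ hc hδ₁ hδ₁e hδ₂e (w := 2 * s * τ - (2 * τ + d)) (by omega)
    (by rwa [pow_mul]) (by
      refine le_trans ?_ (pow_le_pow_left₀ (by positivity) hlower e)
      rw [← pow_mul, ← pow_mul]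
      exact pow_le_pow_right₀ hq₁_one (by nlinarith)) hexp
  rw [not_le]
  calc K ^ τ * (q₁ ^ ((d * s + 1) * τ) * q₂ * (δ₁ ^ (2 * s * τ - (2 * τ + d)) + δ₂))
      ≤ K ^ τ * (c ^ (2 * s * τ) * (2 ^ τ / q₁ ^ τ)) := by
        refine mul_le_mul_of_nonneg_left (hmain.trans ?_) (by positivity)
        gcongr
        · omega
        · exact le_self_pow₀ one_le_two (by omega)
    _ = (2 * (K * c ^ (2 * s)) / q₁) ^ τ := by
        rw [div_pow, mul_pow, mul_pow, ← pow_mul]; ring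
    _ < 1 := pow_lt_one₀ (by positivity) ((div_lt_one (by linarith)).mpr (by linarith)) (by omega)

/-- Two very good approximations `p₁ / q₁` and `p₂ / q₂` with `q₂` of size about `q₁ ^ (r * τ)` are
played against each other; the choices `s = 2 * e + 5` and `r = (2 * e + 1 - d) * s` make the
exponents balance. -/
theorem exists_forall_div_pow_lt_norm_sub (hf : f.Monic)
    (hsep : (f.map (Int.castRingHom ℂ)).Separable) {d e : ℕ} (hfd : f.natDegree = d) (hd : 3 ≤ d)
    (hde : d + 1 ≤ 2 * e) {α : ℂ} (hα : aeval α f = 0) (c : ℝ) :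
    ∃ Q : ℕ, ∀ (p : ℤ) (q : ℕ), Q ≤ q → aeval (p / q : ℂ) f ≠ 0 →
      c / q ^ (e + 1) < ‖(p / q : ℂ) - α‖ := by
  wlog hc : 1 ≤ c generalizing c
  · obtain ⟨Q, hQ⟩ := this 1 le_rfl
    refine ⟨Q, fun p q hq hne ↦ lt_of_le_of_lt ?_ (hQ p q hq hne)⟩
    gcongr
    exact (not_le.mp hc).le
  obtain ⟨k, hk⟩ := Nat.exists_eq_add_of_le hde
  obtain ⟨s, hs⟩ : ∃ s, s = 2 * e + 5 := ⟨_, rfl⟩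
  obtain ⟨r, hr⟩ : ∃ r, r = (k + 2) * s := ⟨_, rfl⟩
  obtain ⟨K, hK, hpair⟩ := exists_one_le_mul_norm_pow_add_norm hf hsep hfd hd
    (show 2 ≤ s by omega) hα
  by_contra! hclose
  obtain ⟨Q, hQ⟩ := exists_nat_gt (2 * (K * c ^ (2 * s)) + c + 1)
  obtain ⟨p₁, q₁, hQq₁, hne₁, happrox₁⟩ := hclose Q
  have hKc : 0 < K * c ^ (2 * s) := by positivity
  have hq₁ : 2 * (K * c ^ (2 * s)) + c + 1 < q₁ := hQ.trans_le (mod_cast hQq₁)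
  have hq₁_one : 1 < q₁ := by
    have : (1 : ℝ) < q₁ := by linarith
    exact_mod_cast this
  have hb : 1 < q₁ ^ r := Nat.one_lt_pow (by rw [hr, hs]; positivity) hq₁_one
  obtain ⟨p₂, q₂, hq₁₂, -, happrox₂⟩ := hclose ((q₁ ^ r) ^ (r + (e + 1) * d + 1))
  have hq₂ : 0 < q₂ := (by positivity : 0 < (q₁ ^ r) ^ (r + (e + 1) * d + 1)).trans_le hq₁₂
  have hτ : r + (e + 1) * d < Nat.log (q₁ ^ r) q₂ := Nat.le_log_of_pow_le hb hq₁₂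
  refine not_one_le_pow_mul_of_close hK hc (mod_cast hq₂) hk hs hr (by linarith) hτ
    (mod_cast Nat.pow_log_le_self _ hq₂.ne') (mod_cast (Nat.lt_pow_succ_log_self hb q₂).le)
    (norm_nonneg _) happrox₁ happrox₂ (hpair _ p₁ p₂ q₁ q₂ (by omega) (by omega) hq₂ hne₁ ?_)
  refine happrox₁.trans (div_le_one_of_le₀ ?_ (by positivity))
  exact (by linarith : c ≤ q₁).trans (le_self_pow₀ (by exact_mod_cast hq₁_one.le) (by omega))

end ThueApproximation

section ThueEquation

theorem exists_forall_exists_dist_le_mul_prod {E : Type*} [MetricSpace E] {S : Finset E}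
    (hS : S.Nonempty) :
    ∃ c : ℝ, 0 < c ∧ ∀ x, ∃ α ∈ S, dist x α ≤ c * ∏ β ∈ S, dist x β := by
  classical
  set e : ℝ := (S : Set E).infsep / 2
  have he : 0 ≤ e := div_nonneg Set.infsep_nonneg zero_le_two
  have hpow : 0 < e ^ (S.card - 1) := by
    rcases Nat.eq_zero_or_pos (S.card - 1) with hcard | hcard
    · simp [hcard]
    · have hnontrivial : (S : Set E).Nontrivial :=
        Finset.one_lt_card_iff_nontrivial.mp (by omega)
      exact pow_pos (half_pos (Set.infsep_pos_iff_nontrivial_of_finite.mpr hnontrivial)) _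
  refine ⟨(e ^ (S.card - 1))⁻¹, inv_pos.mpr hpow, fun x ↦ ?_⟩
  obtain ⟨α, hα, hmin⟩ := S.exists_min_image (dist x) hS
  have hfar : ∀ β ∈ S.erase α, e ≤ dist x β := fun β hβ ↦ by
    obtain ⟨hβα, hβ⟩ := Finset.mem_erase.mp hβ
    have hsep : 2 * e ≤ dist β α := by
      rw [mul_div_cancel₀ _ two_ne_zero]
      exact Set.infsep_le_dist_of_mem hβ hα hβα
    linarith [hmin β hβ, dist_triangle_left β α x]
  refine ⟨α, hα, ?_⟩
  rw [← Finset.mul_prod_erase S _ hα, inv_mul_eq_div, le_div_iff₀ hpow,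
    ← Finset.card_erase_of_mem hα, ← Finset.prod_const]
  exact mul_le_mul_of_nonneg_left (Finset.prod_le_prod (fun _ _ ↦ he) hfar) dist_nonneg

variable {f : ℤ[X]}

theorem intCast_eval_scaleRoots (f : ℤ[X]) (p : ℤ) {q : ℤ} (hq : q ≠ 0) :
    (((f.scaleRoots q).eval p : ℤ) : ℂ) = q ^ f.natDegree * aeval (p / q : ℂ) f := by
  have hscale := scaleRoots_eval₂_mul (p := f) (Int.castRingHom ℂ) (p / q) q
  rwa [eq_intCast, mul_div_cancel₀ _ (Int.cast_ne_zero.mpr hq), ← eq_intCast (Int.castRingHom ℂ) p,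
    eval₂_at_apply] at hscale

theorem finite_preimage_eval {R : Type*} [CommRing R] [IsDomain R] {f : R[X]} (hf : 0 < f.degree)
    {S : Set R} (hS : S.Finite) : {x | f.eval x ∈ S}.Finite := by
  refine hS.preimage' fun b _ ↦ ?_
  have hne : f - C b ≠ 0 := fun h ↦ by
    rw [sub_eq_zero.mp h] at hf
    exact hf.not_ge degree_C_le
  refine (finite_setOfPred_isRoot hne).subset fun x (hx : f.eval x = b) ↦ ?_
  simp [hx]

theorem norm_aeval_eq_prod_dist (hf : f.Monic) (hsep : (f.map (Int.castRingHom ℂ)).Separable)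
    (x : ℂ) : ‖aeval x f‖ = ∏ β ∈ (f.aroots ℂ).toFinset, dist x β := by
  simp only [dist_eq_norm, ← norm_prod]
  rw [(IsAlgClosed.splits _).aeval_eq_prod_aroots_of_monic hf, Finset.prod, Multiset.toFinset_val,
    Multiset.dedup_eq_self.mpr (show (f.aroots ℂ).Nodup from nodup_roots hsep)]

theorem exists_forall_lt_of_abs_eval_scaleRoots_le (hf : f.Monic)
    (hsep : (f.map (Int.castRingHom ℂ)).Separable) (hd : 3 ≤ f.natDegree) (H : ℤ) :
    ∃ Q : ℕ, ∀ p q : ℤ, 0 < q → (f.scaleRoots q).eval p ≠ 0 →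
      |(f.scaleRoots q).eval p| ≤ H → q < Q := by
  obtain ⟨c, hc, hclosest⟩ := exists_forall_exists_dist_le_mul_prod (S := (f.aroots ℂ).toFinset)
    (by rw [← Finset.card_pos, card_toFinset_aroots_of_separable hf hsep]; omega)
  have hroot : ∀ α ∈ (f.aroots ℂ).toFinset, aeval α f = 0 := fun α hα ↦
    (mem_aroots.mp (Multiset.mem_toFinset.mp hα)).2
  choose! Q hQ using fun α hα ↦ exists_forall_div_pow_lt_norm_sub hf hsep rfl hd
    (show f.natDegree + 1 ≤ 2 * (f.natDegree - 1) by omega) (hroot α hα) (c * H)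
  refine ⟨(f.aroots ℂ).toFinset.sup Q, fun p q hq hne hle ↦ ?_⟩
  by_contra! hQq
  lift q to ℕ using hq.le
  obtain ⟨α, hα, hαle⟩ := hclosest (p / q)
  have hscale := intCast_eval_scaleRoots f p hq.ne'
  rw [Int.cast_natCast] at hscale
  have haeval : aeval (p / q : ℂ) f ≠ 0 := fun h ↦ hne (by simpa [h] using hscale)
  have hvalue : (q : ℝ) ^ f.natDegree * ‖aeval (p / q : ℂ) f‖ ≤ H := by
    rw [← Complex.norm_natCast q, ← norm_pow, ← norm_mul, ← hscale, Complex.norm_intCast]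
    exact_mod_cast hle
  have hqpos : (0 : ℝ) < q := by exact_mod_cast hq
  refine (hQ α hα p q ((Finset.le_sup hα).trans (mod_cast hQq)) haeval).not_ge ?_
  rw [← dist_eq_norm, Nat.sub_add_cancel (by omega)]
  refine hαle.trans ?_
  rw [← norm_aeval_eq_prod_dist hf hsep, mul_div_assoc]
  gcongr
  rwa [le_div_iff₀' (by positivity)]

theorem finite_setOf_abs_eval_scaleRoots_le (hf : f.Monic)
    (hsep : (f.map (Int.castRingHom ℂ)).Separable) (hd : 3 ≤ f.natDegree) (H : ℤ) :
    {x : ℤ × ℤ | 0 < x.2 ∧ (f.scaleRoots x.2).eval x.1 ≠ 0 ∧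
      |(f.scaleRoots x.2).eval x.1| ≤ H}.Finite := by
  obtain ⟨Q, hQ⟩ := exists_forall_lt_of_abs_eval_scaleRoots_le hf hsep hd H
  refine Set.Finite.of_finite_fibers Prod.snd ((Set.finite_Ioo 0 (Q : ℤ)).subset ?_) ?_
  · rintro _ ⟨x, ⟨hpos, hne, hle⟩, rfl⟩
    exact ⟨hpos, hQ x.1 x.2 hpos hne hle⟩
  · rintro q -
    have hdeg : 0 < (f.scaleRoots q).degree := by
      rw [degree_scaleRoots]
      exact natDegree_pos_iff_degree_pos.mp (by omega)
    refine ((finite_preimage_eval hdeg (Set.finite_Icc (-H) H)).prod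
      (Set.finite_singleton q)).subset ?_
    rintro ⟨p, _⟩ ⟨⟨-, -, hle⟩, rfl⟩
    exact ⟨abs_le.mp hle, rfl⟩

end ThueEquation

section PellQuartic

theorem separable_X_sq_add_C_mul_X_add_C {F : Type*} [Field F] {b c : F} (h : b ^ 2 ≠ 4 * c) :
    (X ^ 2 + C b * X + C c).Separable := by
  have hdisc : (4 * c - b ^ 2)⁻¹ * (4 * c - b ^ 2) = 1 :=
    inv_mul_cancel₀ (sub_ne_zero.mpr h.symm)
  refine ⟨C (4 * c - b ^ 2)⁻¹ * 4, -C (4 * c - b ^ 2)⁻¹ * (2 * X + C b), ?_⟩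
  have hderiv : derivative (X ^ 2 + C b * X + C c) = 2 * X + C b := by
    simp [one_add_one_eq_two, map_ofNat C 2]
  have hC := congrArg C hdisc
  rw [C_mul, C_sub, C_mul, C_pow, C_1, map_ofNat C 4] at hC
  rw [hderiv]
  linear_combination hC

theorem isCoprime_sub_add {F : Type*} [Field F] [NeZero (2 : F)] {u v : F[X]} {w : F} (hw : w ≠ 0)
    (h : IsCoprime u v) : IsCoprime (u - C w * v) (u + C w * v) := by
  obtain ⟨a, b, hab⟩ := h
  have h2 : C (2 : F)⁻¹ * 2 = 1 := by
    rw [← map_ofNat C 2, ← C_mul, inv_mul_cancel₀ (NeZero.ne (2 : F)), C_1]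
  have hCw : C w⁻¹ * C w = 1 := by rw [← C_mul, inv_mul_cancel₀ hw, C_1]
  refine ⟨C 2⁻¹ * (a - C w⁻¹ * b), C 2⁻¹ * (a + C w⁻¹ * b), ?_⟩
  linear_combination hab + (a * u + b * v) * h2 + C 2⁻¹ * 2 * b * v * hCw

theorem separable_sq_sub_mul_sq {F : Type*} [Field F] [NeZero (2 : F)] {R w y z : F} (hw : w ≠ 0)
    (hyz : y ^ 2 ≠ R * z ^ 2) (hsub : w ^ 2 * z ^ 2 + R ≠ 2 * w * y)
    (hadd : w ^ 2 * z ^ 2 + R ≠ -(2 * w * y)) :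
    ((X ^ 2 - C R) ^ 2 - C (4 * w ^ 2) * (C z * X - C y) ^ 2).Separable := by
  have h4 : (4 : F) ≠ 0 := by
    rw [show (4 : F) = 2 * 2 by norm_num]
    exact mul_ne_zero (NeZero.ne 2) (NeZero.ne 2)
  have hcop : IsCoprime (X ^ 2 - C R) (C z * X - C y) := by
    have hinv := congrArg C (inv_mul_cancel₀ (sub_ne_zero.mpr hyz))
    rw [C_mul, C_sub, C_mul, C_pow, C_pow, C_1] at hinv
    refine ⟨C (y ^ 2 - R * z ^ 2)⁻¹ * C z ^ 2, -C (y ^ 2 - R * z ^ 2)⁻¹ * (C z * X + C y), ?_⟩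
    linear_combination hinv
  have hsep_sub : (X ^ 2 - C R - C (2 * w) * (C z * X - C y)).Separable := by
    convert separable_X_sq_add_C_mul_X_add_C (b := -(2 * w * z)) (c := 2 * w * y - R) ?_ using 1
    · simp only [C_neg, C_sub, C_mul]; ring
    · exact fun h ↦ hsub (mul_left_cancel₀ h4 (by linear_combination h))
  have hsep_add : (X ^ 2 - C R + C (2 * w) * (C z * X - C y)).Separable := by
    convert separable_X_sq_add_C_mul_X_add_C (b := 2 * w * z) (c := -(2 * w * y) - R) ?_ using 1
    · simp only [C_neg, C_sub, C_mul]; ring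
    · exact fun h ↦ hadd (mul_left_cancel₀ h4 (by linear_combination h))
  have hfactor : (X ^ 2 - C R) ^ 2 - C (4 * w ^ 2) * (C z * X - C y) ^ 2 =
      (X ^ 2 - C R - C (2 * w) * (C z * X - C y)) *
        (X ^ 2 - C R + C (2 * w) * (C z * X - C y)) := by
    simp only [C_mul, C_pow, map_ofNat C]
    ring
  rw [hfactor]
  exact hsep_sub.mul hsep_add (isCoprime_sub_add (mul_ne_zero (NeZero.ne 2) hw) hcop)

theorem isSquare_of_sq_eq_mul_sq {D a b : ℤ} (hb : b ≠ 0) (h : a ^ 2 = D * b ^ 2) : IsSquare D := by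
  obtain ⟨t, rfl⟩ : b ∣ a := (Int.pow_dvd_pow_iff two_ne_zero).mp (h ▸ dvd_mul_left _ _)
  exact ⟨t, mul_right_cancel₀ (pow_ne_zero 2 hb) (by linear_combination -h)⟩

/-- The quartic whose homogenization `(μ² - R ν²)² - 4 D (z μ - y ν)² ν²` is the Thue form attached
to the squares represented by `z² p² + 2 y p q + R q²` at solutions of `p² - D q² = 1`. -/
noncomputable def pellQuartic (D R y z : ℤ) : ℤ[X] :=
  (X ^ 2 - C R) ^ 2 - C (4 * D) * (C z * X - C y) ^ 2

variable {D R y z : ℤ}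

theorem degree_pellQuartic_sub_lt (D R y z : ℤ) :
    (pellQuartic D R y z - X ^ 4).degree < 4 := by
  rw [show pellQuartic D R y z - X ^ 4 = C (-2 * R - 4 * D * z ^ 2) * X ^ 2 +
      C (8 * D * y * z) * X + C (R ^ 2 - 4 * D * y ^ 2) by
    simp only [pellQuartic, C_sub, C_mul, C_pow, C_neg, map_ofNat C]; ring]
  exact degree_quadratic_le.trans_lt (by decide)

theorem monic_pellQuartic (D R y z : ℤ) : (pellQuartic D R y z).Monic := by
  rw [← add_sub_cancel (X ^ 4) (pellQuartic D R y z)]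
  exact monic_X_pow_add (degree_pellQuartic_sub_lt D R y z)

theorem natDegree_pellQuartic (D R y z : ℤ) : (pellQuartic D R y z).natDegree = 4 := by
  rw [← add_sub_cancel (X ^ 4) (pellQuartic D R y z)]
  exact natDegree_eq_of_degree_eq_some (by
    rw [degree_add_eq_left_of_degree_lt (by
      rw [degree_X_pow]; exact degree_pellQuartic_sub_lt D R y z), degree_X_pow])

theorem separable_map_pellQuartic (hD : ¬ IsSquare D) (hy : y ≠ 0) (hyz : y ^ 2 ≠ R * z ^ 2) :
    ((pellQuartic D R y z).map (Int.castRingHom ℂ)).Separable := by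
  obtain ⟨w, hw⟩ : ∃ w : ℂ, w ^ 2 = D := IsAlgClosed.exists_pow_nat_eq _ two_pos
  have hw0 : w ≠ 0 := by
    rintro rfl
    exact hD ⟨0, by simpa [eq_comm] using hw⟩
  have hne : ∀ ε : ℂ, ε ^ 2 = 1 → w ^ 2 * z ^ 2 + R ≠ ε * (2 * w * y) := fun ε hε heq ↦ by
    refine hD (isSquare_of_sq_eq_mul_sq (a := D * z ^ 2 + R) (b := 2 * y) (by simpa using hy) ?_)
    have hsq : ((D : ℂ) * z ^ 2 + R) ^ 2 = D * (2 * y) ^ 2 := by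
      rw [← hw, heq]
      linear_combination (2 * w * y) ^ 2 * hε
    exact_mod_cast hsq
  have hsep := separable_sq_sub_mul_sq (R := (R : ℂ)) (y := y) (z := z) hw0 (by exact_mod_cast hyz)
    (by simpa using hne 1 (one_pow 2)) (by simpa using hne (-1) (by norm_num))
  have hmap : (pellQuartic D R y z).map (Int.castRingHom ℂ) =
      (X ^ 2 - C (R : ℂ)) ^ 2 - C (4 * w ^ 2) * (C (z : ℂ) * X - C (y : ℂ)) ^ 2 := by
    simp [pellQuartic, hw, map_ofNat C 4]
  rw [hmap]
  exact hsep

theorem eval_scaleRoots_pellQuartic (D R y z μ : ℤ) {ν : ℤ} (hν : ν ≠ 0) :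
    ((pellQuartic D R y z).scaleRoots ν).eval μ =
      (μ ^ 2 - R * ν ^ 2) ^ 2 - 4 * D * (z * μ - y * ν) ^ 2 * ν ^ 2 := by
  have hνC : (ν : ℂ) ≠ 0 := Int.cast_ne_zero.mpr hν
  have hscale := intCast_eval_scaleRoots (pellQuartic D R y z) μ hν
  rw [natDegree_pellQuartic] at hscale
  have hcast : ((((pellQuartic D R y z).scaleRoots ν).eval μ : ℤ) : ℂ) =
      ((μ : ℂ) ^ 2 - R * ν ^ 2) ^ 2 - 4 * D * (z * μ - y * ν) ^ 2 * ν ^ 2 := by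
    rw [hscale]
    simp only [pellQuartic, map_sub, map_mul, map_pow, aeval_X, eq_intCast, map_intCast, map_ofNat]
    field_simp
  exact_mod_cast hcast

end PellQuartic

section PellSquares

variable {D E R y z p q x : ℤ}

theorem dvd_two_mul_of_isCoprime {μ ν g h : ℤ} (hμν : IsCoprime μ ν)
    (hp : μ ^ 2 - R * ν ^ 2 = p * h) (hg : 2 * (y * ν - z * μ) = g * h) :
    h ∣ 2 * (y ^ 2 - R * z ^ 2) := by
  have hcop : IsCoprime h (ν ^ 2) := by
    have hμh : IsCoprime (μ ^ 2) ν := hμν.pow_left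
    rw [show μ ^ 2 = p * h + R * ν * ν by linear_combination hp] at hμh
    exact (hμh.of_add_mul_right_left).of_mul_left_right.pow_right
  refine hcop.dvd_of_dvd_mul_right (Dvd.intro_left (g * (y * ν + z * μ) + 2 * z ^ 2 * p) ?_)
  linear_combination -(y * ν + z * μ) * hg - 2 * z ^ 2 * hp

theorem exists_thue_parameters (hq : 0 < q) (hpq : p ^ 2 - D * q ^ 2 = 1)
    (hx : x ^ 2 = z ^ 2 * p ^ 2 + 2 * y * p * q + R * q ^ 2) :
    ∃ μ ν h : ℤ, 0 < ν ∧ h ∣ 2 * (y ^ 2 - R * z ^ 2) ∧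
      (μ ^ 2 - R * ν ^ 2) ^ 2 - 4 * D * (z * μ - y * ν) ^ 2 * ν ^ 2 = h ^ 2 ∧
      z * (μ ^ 2 - R * ν ^ 2) + 2 * (y * ν - z * μ) * μ = h * x := by
  obtain ⟨g, μ, ν, hg, hμν, hμ, rfl⟩ := Int.exists_gcd_one' (Int.gcd_pos_of_ne_zero_right
    (x - z * p) hq.ne')
  have hgZ : (g : ℤ) ≠ 0 := by exact_mod_cast hg.ne'
  have hν : 0 < ν := pos_of_mul_pos_left hq (Int.natCast_nonneg g)
  have hkey : g * (μ ^ 2 - R * ν ^ 2) = p * (2 * (y * ν - z * μ)) := by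
    apply mul_left_cancel₀ hgZ
    linear_combination hx - (x + z * p + μ * g) * hμ
  have hgp : IsCoprime (g : ℤ) p := ⟨-D * g * ν ^ 2, p, by linear_combination hpq⟩
  obtain ⟨h, hh⟩ : (g : ℤ) ∣ 2 * (y * ν - z * μ) :=
    hgp.dvd_of_dvd_mul_left ⟨_, hkey.symm⟩
  have hph : μ ^ 2 - R * ν ^ 2 = p * h :=
    mul_left_cancel₀ hgZ (by linear_combination hkey + p * hh)
  refine ⟨μ, ν, h, hν, dvd_two_mul_of_isCoprime (Int.isCoprime_iff_gcd_eq_one.mpr hμν) hph hh,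
    ?_, ?_⟩
  · have hsq : 4 * (z * μ - y * ν) ^ 2 = (g * h) ^ 2 := by rw [← hh]; ring
    linear_combination (μ ^ 2 - R * ν ^ 2 + p * h) * hph + h ^ 2 * hpq - D * ν ^ 2 * hsq
  · linear_combination z * hph + μ * hh - h * hμ

theorem finite_setOf_sq_eq_quadraticForm_pell (hD : ¬ IsSquare D) (hy : y ≠ 0)
    (hyz : y ^ 2 ≠ R * z ^ 2) :
    {x : ℤ | ∃ p q : ℤ, p ^ 2 - D * q ^ 2 = 1 ∧
      x ^ 2 = z ^ 2 * p ^ 2 + 2 * y * p * q + R * q ^ 2}.Finite := by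
  set Δ := y ^ 2 - R * z ^ 2
  have hΔ0 : 2 * Δ ≠ 0 := mul_ne_zero two_ne_zero (sub_ne_zero.mpr hyz)
  have hthue := finite_setOf_abs_eval_scaleRoots_le (monic_pellQuartic D R y z)
    (separable_map_pellQuartic hD hy hyz) (by rw [natDegree_pellQuartic]; norm_num) ((2 * Δ) ^ 2)
  let recover : (ℤ × ℤ) × ℤ → ℤ := fun t ↦
    (z * (t.1.1 ^ 2 - R * t.1.2 ^ 2) + 2 * (y * t.1.2 - z * t.1.1) * t.1.1) / t.2
  refine (((hthue.prod (Set.finite_Icc (-|2 * Δ|) |2 * Δ|)).image recover).union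
    (Set.toFinite {z, -z})).subset ?_
  rintro x ⟨p, q, hpq, hx⟩
  wlog hq : 0 ≤ q generalizing p q
  · exact this (-p) (-q) (by linear_combination hpq) (by linear_combination hx) (by linarith)
  rcases hq.eq_or_lt with rfl | hq
  · exact Or.inr (sq_eq_sq_iff_eq_or_eq_neg.mp (by linear_combination hx + z ^ 2 * hpq))
  · obtain ⟨μ, ν, h, hν, hdvd, hvalue, hrecover⟩ := exists_thue_parameters hq hpq hx
    have hh : h ≠ 0 := fun h0 ↦ hΔ0 (zero_dvd_iff.mp (h0 ▸ hdvd))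
    have hle : |h| ≤ |2 * Δ| :=
      Int.le_of_dvd (abs_pos.mpr hΔ0) ((abs_dvd_abs _ _).mpr hdvd)
    refine Or.inl ⟨((μ, ν), h), ⟨⟨hν, ?_, ?_⟩, abs_le.mp hle⟩, ?_⟩
    · rw [eval_scaleRoots_pellQuartic _ _ _ _ _ hν.ne', hvalue]
      exact pow_ne_zero 2 hh
    · rw [eval_scaleRoots_pellQuartic _ _ _ _ _ hν.ne', hvalue, abs_sq]
      exact sq_le_sq.mpr hle
    · exact Int.ediv_eq_of_eq_mul_right hh hrecover

theorem fg_pell_solution₁ (hD : 0 < D) (hDsq : ¬ IsSquare D) : Group.FG (Pell.Solution₁ D) := by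
  obtain ⟨e, he⟩ := Pell.IsFundamental.exists_of_not_isSquare hD hDsq
  refine Group.fg_iff.mpr ⟨{e, -1}, eq_top_iff.mpr fun a _ ↦ ?_, Set.toFinite _⟩
  have hpow (n : ℤ) : e ^ n ∈ Subgroup.closure {e, -1} :=
    zpow_mem (Subgroup.subset_closure (by simp)) n
  obtain ⟨n, rfl | rfl⟩ := he.eq_zpow_or_neg_zpow a
  · exact hpow n
  · have hneg : (-1 : Pell.Solution₁ D) ∈ Subgroup.closure {e, -1} :=
      Subgroup.subset_closure (by simp)
    exact neg_one_mul (e ^ n) ▸ mul_mem hneg (hpow n)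

/-- Congruent solutions of `s² - D x² = E` differ by a unit of norm one, namely the quotient
`(s + x√D) / (s₀ + x₀√D)`. -/
theorem exists_solution₁_of_dvd_sub {s₀ x₀ s : ℤ} (hE : E ≠ 0)
    (h₀ : D * x₀ ^ 2 + E = s₀ ^ 2) (h : D * x ^ 2 + E = s ^ 2) (hs : E ∣ s - s₀) (hx : E ∣ x - x₀) :
    ∃ a : Pell.Solution₁ D, s = s₀ * a.x + D * x₀ * a.y ∧ x = x₀ * a.x + s₀ * a.y := by
  obtain ⟨u, hu⟩ := hs
  obtain ⟨v, hv⟩ := hx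
  have hp : s * s₀ - D * x * x₀ = E * (1 + u * s₀ - D * v * x₀) := by
    linear_combination s₀ * hu - D * x₀ * hv - h₀
  have hq : x * s₀ - s * x₀ = E * (v * s₀ - u * x₀) := by
    linear_combination s₀ * hv - x₀ * hu
  refine ⟨Pell.Solution₁.mk (1 + u * s₀ - D * v * x₀) (v * s₀ - u * x₀) ?_, ?_, ?_⟩
  · apply mul_left_cancel₀ (pow_ne_zero 2 hE)
    calc E ^ 2 * ((1 + u * s₀ - D * v * x₀) ^ 2 - D * (v * s₀ - u * x₀) ^ 2)
        = (s * s₀ - D * x * x₀) ^ 2 - D * (x * s₀ - s * x₀) ^ 2 := by rw [hp, hq]; ring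
      _ = E ^ 2 * 1 := by linear_combination (D * x₀ ^ 2 - s₀ ^ 2) * h - E * h₀
  · rw [Pell.Solution₁.x_mk, Pell.Solution₁.y_mk]
    exact mul_left_cancel₀ hE (by linear_combination s₀ * hp + D * x₀ * hq + s * h₀)
  · rw [Pell.Solution₁.x_mk, Pell.Solution₁.y_mk]
    exact mul_left_cancel₀ hE (by linear_combination x₀ * hp + s₀ * hq + x * h₀)

end PellSquares

section QuarticSquares

variable {D E A B : ℤ}

theorem finite_setOf_mul_sq_add_mem {S : Set ℤ} (hA : A ≠ 0) (B : ℤ) (hS : S.Finite) :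
    {V : ℤ | A * V ^ 2 + B ∈ S}.Finite := by
  have hdeg : (C A * X ^ 2 + C 0 * X + C B).degree = 2 := degree_quadratic hA
  refine (finite_preimage_eval (by rw [hdeg]; norm_num) hS).subset fun V hV ↦ ?_
  simpa using hV

theorem finite_setOf_sq_mul_sq_add_eq_sq {r : ℤ} (hr : r ≠ 0) (hE : E ≠ 0) :
    {x : ℤ | ∃ s : ℤ, r ^ 2 * x ^ 2 + E = s ^ 2}.Finite := by
  refine (Set.finite_Icc (-|E|) |E|).subset fun x ⟨s, hs⟩ ↦ abs_le.mp ?_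
  have hfactor : (s - r * x) * (s + r * x) = E := by linear_combination -hs
  have hsub : |s - r * x| ≤ |E| :=
    Int.le_of_dvd (abs_pos.mpr hE) ((abs_dvd_abs _ _).mpr ⟨_, hfactor.symm⟩)
  have hadd : |s + r * x| ≤ |E| :=
    Int.le_of_dvd (abs_pos.mpr hE) ((abs_dvd_abs _ _).mpr (Dvd.intro_left _ hfactor))
  have hrx : |r| * |x| ≤ |E| := by
    rw [← abs_mul, abs_le]
    constructor <;> linarith [abs_le.mp hsub, abs_le.mp hadd]
  exact (le_mul_of_one_le_left (abs_nonneg x) (Int.one_le_abs hr)).trans hrx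

theorem finite_setOf_eq_sq_pell_mul {V₁ s₁ : ℤ} (hDsq : ¬ IsSquare D) (hA : A ≠ 0)
    (hne : D * B ^ 2 + E ≠ 0) (hs₁ : s₁ ≠ 0) (h₁ : D * (A * V₁ ^ 2 + B) ^ 2 + E = s₁ ^ 2) :
    {V : ℤ | ∃ b : Pell.Solution₁ D, A * V ^ 2 + B =
      (A * V₁ ^ 2 + B) * (b.x ^ 2 + D * b.y ^ 2) + 2 * s₁ * b.x * b.y}.Finite := by
  have hfinite := finite_setOf_sq_eq_quadraticForm_pell (D := D) (y := A * s₁) (z := A * V₁)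
    (R := A * D * (A * V₁ ^ 2 + 2 * B)) hDsq (mul_ne_zero hA hs₁) fun heq ↦ by
      refine mul_ne_zero (pow_ne_zero 2 hA) hne ?_
      linear_combination heq + A ^ 2 * h₁
  refine Set.Finite.subset (hfinite.preimage (mul_right_injective₀ hA).injOn) ?_
  rintro V ⟨b, hb⟩
  exact ⟨b.x, b.y, b.prop, by linear_combination A * hb + A * B * b.prop⟩

theorem finite_image_of_finite_image_color_class {α β ι : Type*} [Finite ι] {T : Set β}
    (π : β → α) (c : β → ι) (h : ∀ b₁ ∈ T, (π '' {b ∈ T | c b = c b₁}).Finite) :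
    (π '' T).Finite := by
  have hcover : π '' T ⊆ ⋃ i, π '' {b ∈ T | c b = i} := by
    rintro _ ⟨b, hb, rfl⟩
    exact Set.mem_iUnion.mpr ⟨c b, b, ⟨hb, rfl⟩, rfl⟩
  refine (Set.finite_iUnion fun i ↦ ?_).subset hcover
  rcases Set.eq_empty_or_nonempty {b ∈ T | c b = i} with hempty | ⟨b₁, hb₁, rfl⟩
  · rw [hempty, Set.image_empty]
    exact Set.finite_empty
  · exact h b₁ hb₁

/-- The triples `(V, s, a)` with `s² = D (A V² + B)² + E`, `s ≠ 0`, for which `s + (A V² + B)√D` is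
the multiple of `s₀ + x₀√D` by the unit `a`. -/
def pellOrbitSolutions (D E A B x₀ s₀ : ℤ) : Set (ℤ × ℤ × Pell.Solution₁ D) :=
  {t | t.2.1 ≠ 0 ∧ D * (A * t.1 ^ 2 + B) ^ 2 + E = t.2.1 ^ 2 ∧
    t.2.1 = s₀ * t.2.2.x + D * x₀ * t.2.2.y ∧ A * t.1 ^ 2 + B = x₀ * t.2.2.x + s₀ * t.2.2.y}

theorem finite_fst_image_pellOrbitSolutions (hD : 0 < D) (hDsq : ¬ IsSquare D) (hA : A ≠ 0)
    (hne : D * B ^ 2 + E ≠ 0) (x₀ s₀ : ℤ) :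
    (Prod.fst '' pellOrbitSolutions D E A B x₀ s₀).Finite := by
  have := fg_pell_solution₁ hD hDsq
  have := Subgroup.finiteIndex_range_powMonoidHom_of_fg (Pell.Solution₁ D) two_ne_zero
  refine finite_image_of_finite_image_color_class _
    (fun t ↦ (t.2.2 : Pell.Solution₁ D ⧸ (powMonoidHom (α := Pell.Solution₁ D) 2).range)) ?_
  rintro ⟨V₁, s₁, a₁⟩ ⟨hs₁, h₁, hs₁a, hx₁a⟩
  refine (finite_setOf_eq_sq_pell_mul hDsq hA hne hs₁ h₁).subset ?_
  rintro _ ⟨⟨V, s, a⟩, ⟨⟨-, -, -, hxa⟩, hclass⟩, rfl⟩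
  obtain ⟨b, hb⟩ := QuotientGroup.eq.mp hclass.symm
  have hab : a = a₁ * (b * b) := by
    rw [← pow_two, ← powMonoidHom_apply, hb, mul_inv_cancel_left]
  refine ⟨b, ?_⟩
  simp only at hs₁a hx₁a hxa ⊢
  rw [hxa, hx₁a, hs₁a, hab]
  simp only [Pell.Solution₁.x_mul, Pell.Solution₁.y_mul]
  ring

theorem finite_setOf_eq_sq_ne_zero (hD : 0 < D) (hDsq : ¬ IsSquare D) (hE : E ≠ 0) (hA : A ≠ 0)
    (hne : D * B ^ 2 + E ≠ 0) :
    (Prod.fst '' {t : ℤ × ℤ | t.2 ≠ 0 ∧ D * (A * t.1 ^ 2 + B) ^ 2 + E = t.2 ^ 2}).Finite := by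
  have : NeZero E.natAbs := ⟨Int.natAbs_ne_zero.mpr hE⟩
  have hdvd {a b : ℤ} (h : (a : ZMod E.natAbs) = b) : E ∣ a - b :=
    Int.natAbs_dvd.mp ((ZMod.intCast_eq_intCast_iff_dvd_sub b a _).mp h.symm)
  refine finite_image_of_finite_image_color_class _
    (fun t ↦ ((t.2 : ZMod E.natAbs), ((A * t.1 ^ 2 + B : ℤ) : ZMod E.natAbs))) ?_
  rintro ⟨V₀, s₀⟩ ⟨-, h₀⟩
  refine (finite_fst_image_pellOrbitSolutions hD hDsq hA hne (A * V₀ ^ 2 + B) s₀).subset ?_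
  rintro _ ⟨⟨V, s⟩, ⟨⟨hs, h⟩, hcongr⟩, rfl⟩
  obtain ⟨hcongr_s, hcongr_x⟩ := Prod.mk.injEq .. ▸ hcongr
  obtain ⟨a, hsa, hxa⟩ := exists_solution₁_of_dvd_sub hE h₀ h (hdvd hcongr_s) (hdvd hcongr_x)
  exact ⟨(V, s, a), ⟨hs, h, hsa, hxa⟩, rfl⟩

theorem finite_setOf_mul_sq_add_eq_sq (hD : 0 < D) (hE : E ≠ 0) (hA : A ≠ 0)
    (hne : D * B ^ 2 + E ≠ 0) :
    {V : ℤ | ∃ s : ℤ, D * (A * V ^ 2 + B) ^ 2 + E = s ^ 2}.Finite := by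
  by_cases hDsq : IsSquare D
  · obtain ⟨r, rfl⟩ := hDsq
    have hr : r ≠ 0 := left_ne_zero_of_mul hD.ne'
    refine (finite_setOf_mul_sq_add_mem hA B (finite_setOf_sq_mul_sq_add_eq_sq hr hE)).subset ?_
    rintro V ⟨s, hs⟩
    exact ⟨s, by linear_combination hs⟩
  · have hzero : {x : ℤ | D * x ^ 2 + E ∈ ({0} : Set ℤ)}.Finite :=
      finite_setOf_mul_sq_add_mem hD.ne' E (Set.finite_singleton 0)
    refine ((finite_setOf_eq_sq_ne_zero hD hDsq hE hA hne).union
      (finite_setOf_mul_sq_add_mem hA B hzero)).subset ?_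
    rintro V ⟨s, hs⟩
    rcases eq_or_ne s 0 with rfl | hs0
    · exact Or.inr (hs.trans (zero_pow two_ne_zero))
    · exact Or.inl ⟨(V, s), ⟨hs0, hs⟩, rfl⟩

end QuarticSquares

section QuadMap

variable {R S F : Type*} [CommRing R] [CommRing S] [FunLike F R S] [RingHomClass F R S]

/-- The map `x ↦ x² + k x`, over an arbitrary ring so that its iterates can be compared under ring
homomorphisms. -/
def quadMap (k : ℤ) (x : R) : R := x ^ 2 + k * x

theorem map_quadMap (f : F) (k : ℤ) (x : R) : f (quadMap k x) = quadMap k (f x) := by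
  simp only [quadMap, map_add, map_pow, map_mul, map_intCast]

theorem map_iterate_quadMap (f : F) (k : ℤ) (n : ℕ) (x : R) :
    f ((quadMap k)^[n] x) = (quadMap k)^[n] (f x) :=
  Function.Semiconj.iterate_right (map_quadMap f k) n x

theorem quadMap_eq_zero_iff [IsDomain R] {k : ℤ} {x : R} : quadMap k x = 0 ↔ x = 0 ∨ x = -k := by
  rw [quadMap, pow_two, ← add_mul, mul_eq_zero, add_eq_zero_iff_eq_neg, or_comm]

theorem quadMap_eq_quadMap_iff [IsDomain R] {k : ℤ} {x y : R} :
    quadMap k x = quadMap k y ↔ x = y ∨ x = -k - y := by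
  have hfactor : quadMap k x - quadMap k y = (x - y) * (x - (-k - y)) := by
    rw [quadMap, quadMap]; ring
  rw [← sub_eq_zero, hfactor, mul_eq_zero, sub_eq_zero, sub_eq_zero]

theorem four_mul_quadMap (k : ℤ) (x : R) : k ^ 2 + 4 * quadMap k x = (2 * x + k) ^ 2 := by
  rw [quadMap]; ring

/-- The orbit of the critical point `-k / 2` of `x ↦ x² + k x`. -/
def criticalOrbit (k : ℤ) (n : ℕ) : ℚ := (quadMap k)^[n] (-(k / 2))

theorem criticalOrbit_succ (k : ℤ) (n : ℕ) :
    criticalOrbit k (n + 1) = criticalOrbit k n ^ 2 + k * criticalOrbit k n :=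
  Function.iterate_succ_apply' _ _ _

theorem criticalOrbit_one (k : ℤ) : criticalOrbit k 1 = -(k ^ 2 / 4) := by
  rw [criticalOrbit, Function.iterate_one, quadMap]; ring

end QuadMap

section OddValuation

/-- `q` has odd valuation at some prime not dividing `N`. -/
def HasOddValuationPrimeTo (N : ℤ) (q : ℚ) : Prop :=
  ∃ p : ℕ, p.Prime ∧ ¬ (p : ℤ) ∣ N ∧ Odd (padicValRat p q)

theorem padicValNat_eq_one_of_squarefree {p n : ℕ} (hp : p.Prime) (hn : Squarefree n)
    (hpn : p ∣ n) : padicValNat p n = 1 := by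
  have := Fact.mk hp
  rw [← Nat.factorization_def n hp]
  exact (hn.natFactorization_le_one p).antisymm
    ((hp.dvd_iff_one_le_factorization hn.ne_zero).mp hpn)

theorem exists_odd_padicValNat_of_not_isSquare {n : ℕ} (hn : ¬ IsSquare n) :
    ∃ p : ℕ, p.Prime ∧ Odd (padicValNat p n) := by
  have hn0 : 0 < n := Nat.pos_of_ne_zero fun h ↦ hn (h ▸ IsSquare.zero)
  obtain ⟨a, b, ha0, hb0, hab, ha⟩ := Nat.sq_mul_squarefree_of_pos hn0
  have ha1 : a ≠ 1 := fun h ↦ hn ⟨b, by rw [← hab, h, mul_one, pow_two]⟩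
  have hp := Nat.minFac_prime ha1
  have := Fact.mk hp
  refine ⟨a.minFac, hp, padicValNat a.minFac b, ?_⟩
  rw [← hab, padicValNat.mul (by positivity) ha0.ne', padicValNat.pow,
    padicValNat_eq_one_of_squarefree hp ha (Nat.minFac_dvd a)]

theorem HasOddValuationPrimeTo.of_isCoprime {N a T : ℤ} {q d : ℚ} (hN : N ≠ 0) (ha : a ∣ N)
    (hd : d ≠ 0) (hcop : IsCoprime N T) (hT : ¬ IsSquare |T|) (hq : q * d ^ 2 = a * T) :
    HasOddValuationPrimeTo N q := by
  rw [Int.abs_eq_natAbs, Int.isSquare_natCast_iff] at hT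
  obtain ⟨p, hp, hodd⟩ := exists_odd_padicValNat_of_not_isSquare hT
  have := Fact.mk hp
  have hT0 : T ≠ 0 := fun h ↦ hT (h ▸ IsSquare.zero)
  have ha0 : a ≠ 0 := ne_zero_of_dvd_ne_zero hN ha
  have hpT : (p : ℤ) ∣ T := Int.natCast_dvd.mpr (dvd_of_one_le_padicValNat hodd.pos)
  have hpN : ¬ (p : ℤ) ∣ N := fun h ↦
    (Nat.prime_iff_prime_int.mp hp).not_isUnit (hcop.isUnit_of_dvd' h hpT)
  have hq0 : q ≠ 0 := by
    rintro rfl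
    rw [zero_mul] at hq
    exact mul_ne_zero ha0 hT0 (by exact_mod_cast hq.symm)
  have hval := congrArg (padicValRat p) hq
  rw [padicValRat.mul hq0 (pow_ne_zero 2 hd), padicValRat.pow,
    padicValRat.mul (by exact_mod_cast ha0) (by exact_mod_cast hT0), padicValRat.of_int,
    padicValRat.of_int, padicValInt.eq_zero_of_not_dvd fun h ↦ hpN (h.trans ha)] at hval
  obtain ⟨c, hc⟩ := hodd
  refine ⟨p, hp, hpN, c - padicValRat p d, ?_⟩
  rw [padicValInt, hc] at hval
  push_cast at hval
  linear_combination hval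

theorem HasOddValuationPrimeTo.not_isSquare {N : ℤ} {q : ℚ} (h : HasOddValuationPrimeTo N q) :
    ¬ IsSquare q := by
  rintro ⟨r, rfl⟩
  obtain ⟨p, hp, -, hodd⟩ := h
  have := Fact.mk hp
  rcases eq_or_ne r 0 with rfl | hr
  · simp at hodd
  · rw [padicValRat.mul hr hr, ← two_mul] at hodd
    exact Int.not_odd_iff_even.mpr (even_two_mul _) hodd

end OddValuation

section JacobiObstruction

open NumberTheorySymbols

theorem jacobiSym_two_eq_neg_one {a : ℕ} (ha : a % 8 = 3 ∨ a % 8 = 5) : J(2 | a) = -1 := by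
  have hodd : Odd a := Nat.odd_iff.mpr (by omega)
  rw [jacobiSym.at_two hodd, ZMod.χ₈_nat_eq_if_mod_eight]
  rcases ha with h | h <;> simp [h] <;> omega

theorem jacobiSym_eq_of_dvd_sub {a b : ℤ} {n : ℕ} (h : (n : ℤ) ∣ a - b) : J(a | n) = J(b | n) :=
  jacobiSym.mod_left' (Int.emod_eq_emod_iff_emod_sub_eq_zero.mpr (Int.emod_eq_zero_of_dvd h))

theorem not_dvd_sq_sub_mul_sq {b : ℕ} {c d s : ℤ} (hd : IsCoprime d b) (hc : J(c | b) = -1) :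
    ¬ (b : ℤ) ∣ s ^ 2 - c * d ^ 2 := by
  intro h
  have hsq := jacobiSym_eq_of_dvd_sub h
  rw [jacobiSym.mul_left, jacobiSym.sq_one' (Int.isCoprime_iff_gcd_eq_one.mp hd), hc,
    jacobiSym.pow_left] at hsq
  linarith [sq_nonneg J(s | b)]

theorem jacobiSym_neg_of_mod_four_eq_one {n : ℕ} (hn : n % 4 = 1) (a : ℤ) :
    J(-a | n) = J(a | n) := by
  rw [jacobiSym.neg a (Nat.odd_iff.mpr (by omega)), ZMod.χ₄_nat_one_mod_four hn, one_mul]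

variable {a b e : ℕ}

theorem jacobiSym_eq_neg_one_of_dvd_sub_two_pow (ha : a % 8 = 3 ∨ a % 8 = 5) (he : Odd e)
    (h : (a : ℤ) ∣ b - 2 ^ e) : J(b | a) = -1 := by
  rw [jacobiSym_eq_of_dvd_sub h, jacobiSym.pow_left, jacobiSym_two_eq_neg_one ha, he.neg_one_pow]

theorem jacobiSym_eq_neg_one_of_dvd_add_two_pow (ha : a % 8 = 5) (he : Odd e)
    (h : (a : ℤ) ∣ b + 2 ^ e) : J(b | a) = -1 := by
  rw [← sub_neg_eq_add] at h
  rw [jacobiSym_eq_of_dvd_sub h, jacobiSym_neg_of_mod_four_eq_one (by omega),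
    jacobiSym.pow_left, jacobiSym_two_eq_neg_one (Or.inr ha), he.neg_one_pow]

theorem isCoprime_two_pow_of_mod_four_eq_one (e : ℕ) (hb : b % 4 = 1) :
    IsCoprime ((2 : ℤ) ^ e) b :=
  (Int.isCoprime_two_left.mpr ((Int.odd_coe_nat b).mpr (Nat.odd_iff.mpr (by omega)))).pow_left

theorem not_dvd_sq_sub_three_mul_two_pow_sq {s : ℤ} (hb : b % 4 = 1) (he : Odd e)
    (h : (3 : ℤ) ∣ b - 2 ^ e) : ¬ (b : ℤ) ∣ s ^ 2 - 3 * (2 ^ e) ^ 2 := by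
  have hJ : J(b | 3) = -1 := jacobiSym_eq_neg_one_of_dvd_sub_two_pow (Or.inl rfl) he h
  rw [jacobiSym.quadratic_reciprocity_one_mod_four hb (by decide)] at hJ
  exact not_dvd_sq_sub_mul_sq (isCoprime_two_pow_of_mod_four_eq_one e hb) hJ

theorem not_dvd_sq_add_mul_two_pow_sq {s : ℤ} (ha : a % 8 = 5) (hb : b % 4 = 1) (he : Odd e)
    (h : (a : ℤ) ∣ b - 2 ^ e ∨ (a : ℤ) ∣ b + 2 ^ e) : ¬ (b : ℤ) ∣ s ^ 2 + a * (2 ^ e) ^ 2 := by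
  have hJ : J(b | a) = -1 :=
    h.elim (jacobiSym_eq_neg_one_of_dvd_sub_two_pow (Or.inr ha) he)
      (jacobiSym_eq_neg_one_of_dvd_add_two_pow ha he)
  rw [jacobiSym.quadratic_reciprocity_one_mod_four hb (Nat.odd_iff.mpr (by omega)),
    ← jacobiSym_neg_of_mod_four_eq_one hb] at hJ
  rw [← sub_neg_eq_add, ← neg_mul]
  exact not_dvd_sq_sub_mul_sq (isCoprime_two_pow_of_mod_four_eq_one e hb) hJ

end JacobiObstruction

section OddMultiplier

/-- The integers `U m` with `criticalOrbit k (m + 1) = k * U m / 2 ^ 2 ^ (m + 1)`. -/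
def orbitNumer (k : ℤ) : ℕ → ℤ
  | 0 => -k
  | m + 1 => k * orbitNumer k m * (orbitNumer k m + 2 ^ 2 ^ (m + 1))

variable {k : ℤ}

theorem orbitNumer_succ (k : ℤ) (m : ℕ) :
    orbitNumer k (m + 1) = k * orbitNumer k m * (orbitNumer k m + 2 ^ 2 ^ (m + 1)) :=
  rfl

theorem orbitNumer_one (k : ℤ) : orbitNumer k 1 = k ^ 2 * (k - 4) := by
  simp only [orbitNumer]; ring

theorem criticalOrbit_succ_eq_orbitNumer (k : ℤ) (m : ℕ) :
    criticalOrbit k (m + 1) = k * orbitNumer k m / 2 ^ 2 ^ (m + 1) := by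
  induction m with
  | zero => rw [criticalOrbit_one, orbitNumer]; push_cast; ring
  | succ m ih =>
    rw [criticalOrbit_succ, ih, orbitNumer, pow_succ 2 (m + 1), pow_mul]
    push_cast
    field_simp

theorem criticalOrbit_add_mul_sq (k : ℤ) (m : ℕ) :
    (criticalOrbit k (m + 1) + k) * (2 ^ 2 ^ m) ^ 2 =
      k * (orbitNumer k m + 2 ^ 2 ^ (m + 1) : ℤ) := by
  rw [criticalOrbit_succ_eq_orbitNumer, ← pow_mul, ← pow_succ]
  push_cast
  field_simp

theorem two_pow_two_pow_succ (m : ℕ) : (2 : ℤ) ^ 2 ^ (m + 1) = (2 ^ 2 ^ m) ^ 2 := by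
  rw [← pow_mul, pow_succ]

theorem two_pow_two_pow_succ_eq_two_mul (m : ℕ) :
    (2 : ℤ) ^ 2 ^ (m + 1) = 2 * 2 ^ (2 ^ (m + 1) - 1) :=
  (mul_pow_sub_one (pow_ne_zero _ two_ne_zero) 2).symm

theorem odd_two_pow_succ_sub_one (m : ℕ) : Odd (2 ^ (m + 1) - 1) := by
  rw [pow_succ', Nat.odd_iff]
  have := Nat.one_le_two_pow (n := m)
  omega

theorem eight_dvd_two_pow_two_pow_sub_one (m : ℕ) : (8 : ℤ) ∣ 2 ^ (2 ^ (m + 2) - 1) := by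
  have hexp : 3 ≤ 2 ^ (m + 2) - 1 := by
    have := Nat.one_le_two_pow (n := m)
    rw [pow_add]
    omega
  exact pow_dvd_pow (2 : ℤ) hexp

theorem odd_orbitNumer (hk : Odd k) (m : ℕ) : Odd (orbitNumer k m) := by
  induction m with
  | zero => exact hk.neg
  | succ m ih =>
    exact (hk.mul ih).mul (ih.add_even (even_two.pow_of_ne_zero (by positivity)))

theorem odd_orbitNumer_add (hk : Odd k) (m : ℕ) : Odd (orbitNumer k m + 2 ^ 2 ^ (m + 1)) :=
  (odd_orbitNumer hk m).add_even (even_two.pow_of_ne_zero (by positivity))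

theorem orbitNumer_mod_eight (hk : Odd k) (m : ℕ) : orbitNumer k (m + 2) % 8 = k % 8 := by
  obtain ⟨c, hc⟩ := Int.eight_dvd_sq_sub_one_of_odd (odd_orbitNumer hk (m + 1))
  obtain ⟨d, hd⟩ := eight_dvd_two_pow_two_pow_sub_one m
  have hU : orbitNumer k (m + 2) = k + 8 * (k * c + 2 * k * orbitNumer k (m + 1) * d) := by
    rw [orbitNumer_succ, two_pow_two_pow_succ_eq_two_mul, hd]
    linear_combination k * hc
  rw [hU, Int.add_mul_emod_self_left]

theorem orbitNumer_mod_four (hk : Odd k) (m : ℕ) : orbitNumer k (m + 1) % 4 = k % 4 := by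
  cases m with
  | zero =>
    have hsq : k ^ 2 % 4 = 1 := Int.sq_mod_four_eq_one_of_odd hk
    rw [orbitNumer_one, Int.mul_emod, hsq]
    omega
  | succ m =>
    have : orbitNumer k (m + 1 + 1) % 8 = k % 8 := orbitNumer_mod_eight hk m
    omega

theorem sub_four_dvd_orbitNumer_succ (k : ℤ) (m : ℕ) : k - 4 ∣ orbitNumer k (m + 1) := by
  induction m with
  | zero => exact orbitNumer_one k ▸ dvd_mul_left _ _
  | succ m ih => exact (ih.mul_left k).mul_right _

theorem dvd_orbitNumer (k : ℤ) (m : ℕ) : k ∣ orbitNumer k m := by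
  cases m with
  | zero => exact (dvd_neg.mpr dvd_rfl)
  | succ m => exact (dvd_mul_right _ _).mul_right _

theorem isCoprime_orbitNumer_add (hk : Odd k) (m : ℕ) :
    IsCoprime (2 * k) (orbitNumer k m + 2 ^ 2 ^ (m + 1)) := by
  refine IsCoprime.mul_left (Int.isCoprime_two_left.mpr (odd_orbitNumer_add hk m)) ?_
  obtain ⟨c, hc⟩ := dvd_orbitNumer k m
  rw [hc, add_comm, IsCoprime.add_mul_left_right_iff]
  exact (Int.isCoprime_two_right.mpr hk).pow_right

theorem orbitNumer_succ_pos (hk : 5 ≤ k) (m : ℕ) : 0 < orbitNumer k (m + 1) := by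
  induction m with
  | zero => rw [orbitNumer_one]; nlinarith
  | succ m ih => rw [orbitNumer_succ]; positivity

theorem orbitNumer_succ_le (hk : k ≤ -5) (m : ℕ) :
    orbitNumer k (m + 1) ≤ -2 * 2 ^ 2 ^ (m + 2) := by
  induction m with
  | zero => rw [orbitNumer_one]; norm_num; nlinarith
  | succ m ih =>
    rw [orbitNumer_succ, two_pow_two_pow_succ (m + 2)]
    have hM : (0 : ℤ) < 2 ^ 2 ^ (m + 2) := by positivity
    have hle : 2 * (2 ^ 2 ^ (m + 2)) ^ 2 ≤
        orbitNumer k (m + 1) * (orbitNumer k (m + 1) + 2 ^ 2 ^ (m + 2)) := by nlinarith [hM]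
    nlinarith [hM]

theorem orbitNumer_one_bounds (m : ℕ) :
    -2 ^ 2 ^ (m + 2) ≤ 4 * orbitNumer 1 (m + 1) ∧ orbitNumer 1 (m + 1) ≤ 0 := by
  induction m with
  | zero => rw [orbitNumer_one]; norm_num
  | succ m ih =>
    rw [orbitNumer_succ, two_pow_two_pow_succ (m + 2)]
    have hM : (0 : ℤ) < 2 ^ 2 ^ (m + 2) := by positivity
    constructor
    · nlinarith [hM, sq_nonneg (2 * orbitNumer 1 (m + 1) + 2 ^ 2 ^ (m + 2))]
    · nlinarith [hM]

theorem orbitNumer_neg_one_bounds (m : ℕ) :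
    -2 ^ 2 ^ (m + 2) ≤ 2 * orbitNumer (-1) (m + 1) ∧
      4 * orbitNumer (-1) (m + 1) ≤ 2 ^ 2 ^ (m + 2) := by
  induction m with
  | zero => rw [orbitNumer_one]; norm_num
  | succ m ih =>
    rw [orbitNumer_succ, two_pow_two_pow_succ (m + 2)]
    have hM : (0 : ℤ) < 2 ^ 2 ^ (m + 2) := by positivity
    constructor
    · nlinarith [hM]
    · nlinarith [hM, sq_nonneg (2 * orbitNumer (-1) (m + 1) + 2 ^ 2 ^ (m + 2))]

/-- Completing the square in the recursion; `4 - k` and `U` share the factor `k - 4`, which is what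
makes the Jacobi symbol computable. -/
theorem orbitNumer_add_eq (k : ℤ) (j : ℕ) :
    orbitNumer k (j + 2) + 2 ^ 2 ^ (j + 3) =
      k * (orbitNumer k (j + 1) + 2 ^ (2 ^ (j + 2) - 1)) ^ 2 +
        (4 - k) * (2 ^ (2 ^ (j + 2) - 1)) ^ 2 := by
  rw [orbitNumer_succ, two_pow_two_pow_succ (j + 2), two_pow_two_pow_succ_eq_two_mul (j + 1)]
  ring

theorem mod_eight_of_orbitNumer_add_eq (hk : Odd k) {j : ℕ} {s σ : ℤ}
    (h : orbitNumer k (j + 2) + 2 ^ 2 ^ (j + 3) = σ * s ^ 2) : k % 8 = σ % 8 := by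
  have hs : Odd s := by
    have := h ▸ odd_orbitNumer_add hk (j + 2)
    exact (Int.odd_pow' two_ne_zero).mp (Int.odd_mul.mp this).2
  obtain ⟨c, hc⟩ := Int.eight_dvd_sq_sub_one_of_odd hs
  obtain ⟨d, hd⟩ := eight_dvd_two_pow_two_pow_sub_one (j + 1)
  have hmod : orbitNumer k (j + 2) = σ + 8 * (σ * c - 2 * d) := by
    rw [two_pow_two_pow_succ_eq_two_mul] at h
    linear_combination h + σ * hc - 2 * hd
  rw [← orbitNumer_mod_eight hk j, hmod, Int.add_mul_emod_self_left]

theorem orbitNumer_one_add_ne_sq (j : ℕ) (s : ℤ) :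
    orbitNumer 1 (j + 2) + 2 ^ 2 ^ (j + 3) ≠ s ^ 2 := by
  intro h
  rw [orbitNumer_add_eq] at h
  have hmod := orbitNumer_mod_four odd_one j
  have h8 := eight_dvd_two_pow_two_pow_sub_one j
  have hlower := (orbitNumer_one_bounds j).1
  rw [two_pow_two_pow_succ_eq_two_mul] at hlower
  have hdvd := sub_four_dvd_orbitNumer_succ 1 j
  have hodd := odd_two_pow_succ_sub_one (j + 1)
  set e := 2 ^ (j + 2) - 1
  set U := orbitNumer 1 (j + 1)
  obtain ⟨b, hb⟩ := Int.eq_ofNat_of_zero_le (show 0 ≤ U + 2 ^ e by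
    linarith [show (0 : ℤ) < 2 ^ e by positivity])
  refine not_dvd_sq_sub_three_mul_two_pow_sq (b := b) (s := s) (by clear hdvd; omega) hodd ?_ ?_
  · rw [← hb, add_sub_cancel_right]
    exact neg_dvd.mp hdvd
  · rw [← hb]
    exact ⟨U + 2 ^ e, by linear_combination -h⟩

theorem orbitNumer_add_ne_sq (hk : 5 ≤ k) (hk8 : k % 8 = 1) (j : ℕ) (s : ℤ) :
    orbitNumer k (j + 2) + 2 ^ 2 ^ (j + 3) ≠ s ^ 2 := by
  intro h
  rw [orbitNumer_add_eq] at h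
  have hkodd : Odd k := Int.odd_iff.mpr (by omega)
  have hmod := orbitNumer_mod_four hkodd j
  have h8 := eight_dvd_two_pow_two_pow_sub_one j
  have hpos := orbitNumer_succ_pos hk j
  have hdvd := sub_four_dvd_orbitNumer_succ k j
  have hodd := odd_two_pow_succ_sub_one (j + 1)
  set e := 2 ^ (j + 2) - 1
  set U := orbitNumer k (j + 1)
  obtain ⟨b, hb⟩ := Int.eq_ofNat_of_zero_le (show 0 ≤ U + 2 ^ e by positivity)
  obtain ⟨a, ha⟩ := Int.eq_ofNat_of_zero_le (show 0 ≤ k - 4 by linarith)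
  refine not_dvd_sq_add_mul_two_pow_sq (a := a) (b := b) (s := s) (by omega)
    (by clear hdvd; omega) hodd (Or.inl ?_) ?_
  · rwa [← hb, ← ha, add_sub_cancel_right]
  · rw [← hb, ← ha]
    exact ⟨k * (U + 2 ^ e), by linear_combination -h⟩

theorem orbitNumer_add_ne_neg_sq (hk : k ≤ -5) (hk8 : k % 8 = 7) (j : ℕ) (s : ℤ) :
    orbitNumer k (j + 2) + 2 ^ 2 ^ (j + 3) ≠ -s ^ 2 := by
  intro h
  rw [orbitNumer_add_eq] at h
  have hkodd : Odd k := Int.odd_iff.mpr (by omega)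
  have hmod := orbitNumer_mod_four hkodd j
  have h8 := eight_dvd_two_pow_two_pow_sub_one j
  have hle := orbitNumer_succ_le hk j
  rw [two_pow_two_pow_succ_eq_two_mul] at hle
  have hdvd := sub_four_dvd_orbitNumer_succ k j
  have hodd := odd_two_pow_succ_sub_one (j + 1)
  set e := 2 ^ (j + 2) - 1
  set U := orbitNumer k (j + 1)
  obtain ⟨b, hb⟩ := Int.eq_ofNat_of_zero_le (show 0 ≤ -(U + 2 ^ e) by
    linarith [show (0 : ℤ) < 2 ^ e by positivity])
  obtain ⟨a, ha⟩ := Int.eq_ofNat_of_zero_le (show 0 ≤ 4 - k by linarith)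
  refine not_dvd_sq_add_mul_two_pow_sq (a := a) (b := b) (s := s) (by omega)
    (by clear hdvd; omega) hodd (Or.inr ?_) ?_
  · rw [← hb, ← ha, neg_add_rev, neg_add_cancel_comm, dvd_neg, ← neg_sub, neg_dvd]
    exact hdvd
  · rw [← hb, ← ha]
    exact ⟨k * (U + 2 ^ e), by linear_combination h⟩

theorem not_isSquare_abs_orbitNumer_add (hk : Odd k) (j : ℕ) :
    ¬ IsSquare |orbitNumer k (j + 2) + 2 ^ 2 ^ (j + 3)| := by
  rintro ⟨s, hs⟩
  have hM : (0 : ℤ) < 2 ^ 2 ^ (j + 3) := by positivity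
  rw [← pow_two] at hs
  rcases eq_or_eq_neg_of_abs_eq hs with h | h
  · have hk8 : k % 8 = 1 := mod_eight_of_orbitNumer_add_eq hk (σ := 1) (by rw [h, one_mul])
    obtain hneg | rfl | hpos : k ≤ -5 ∨ k = 1 ∨ 5 ≤ k := by omega
    · linarith [orbitNumer_succ_le hneg (j + 1), sq_nonneg s]
    · exact orbitNumer_one_add_ne_sq j s h
    · exact orbitNumer_add_ne_sq hpos hk8 j s h
  · have hk8 := mod_eight_of_orbitNumer_add_eq hk (σ := -1) (by rw [h, neg_one_mul])
    obtain hneg | rfl | hpos : k ≤ -5 ∨ k = -1 ∨ 5 ≤ k := by omega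
    · exact orbitNumer_add_ne_neg_sq hneg hk8 j s h
    · linarith [(orbitNumer_neg_one_bounds (j + 1)).1, sq_nonneg s]
    · linarith [orbitNumer_succ_pos hpos (j + 1), sq_nonneg s]

theorem hasOddValuationPrimeTo_criticalOrbit_add_of_odd (hk : Odd k) (j : ℕ) :
    HasOddValuationPrimeTo (2 * k) (criticalOrbit k (j + 3) + k) :=
  .of_isCoprime (mul_ne_zero two_ne_zero (by rintro rfl; exact Int.not_odd_zero hk))
    (dvd_mul_left k 2) (by positivity) (isCoprime_orbitNumer_add hk (j + 2))
    (not_isSquare_abs_orbitNumer_add hk j) (criticalOrbit_add_mul_sq k (j + 2))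

theorem not_isSquare_criticalOrbit_two_add (hk : Odd k) :
    ¬ IsSquare (criticalOrbit k 2 + k) := by
  intro h
  have hsq : IsSquare ((k * (orbitNumer k 1 + 2 ^ 2 ^ 2) : ℤ) : ℚ) := by
    rw [Int.cast_mul, ← criticalOrbit_add_mul_sq]
    exact h.mul (IsSquare.sq _)
  obtain ⟨w, hw⟩ := Rat.isSquare_intCast_iff.mp hsq
  rw [orbitNumer_one, ← pow_two] at hw
  have hwodd : Odd w :=
    (Int.odd_pow' two_ne_zero).mp (hw ▸ hk.mul (orbitNumer_one k ▸ odd_orbitNumer_add hk 1))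
  obtain ⟨c, hc⟩ := Int.eight_dvd_sq_sub_one_of_odd hk
  obtain ⟨d, hd⟩ := Int.eight_dvd_sq_sub_one_of_odd hwodd
  obtain ⟨l, rfl⟩ := hk
  -- modulo `8` the left-hand side of `hw` is `1 - 4 = 5`
  have hmod8 : 4 = 8 * (d - c * ((2 * l + 1) ^ 2 + 1) + 4 * (2 * l + 1) * c + l + 1
      - 2 * (2 * l + 1)) := by
    linear_combination hw + hd - ((2 * l + 1) ^ 2 + 1 - 4 * (2 * l + 1)) * hc
  omega

theorem not_isSquare_criticalOrbit_add_of_odd (hk : Odd k) (m : ℕ) :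
    ¬ IsSquare (criticalOrbit k (m + 2) + k) := by
  cases m with
  | zero => exact not_isSquare_criticalOrbit_two_add hk
  | succ m => exact (hasOddValuationPrimeTo_criticalOrbit_add_of_odd hk m).not_isSquare

end OddMultiplier

section EvenMultiplier

open Filter

/-- The integers `x m` with `criticalOrbit (2 * κ) (m + 1) = κ * (x m - 1)`. -/
def evenOrbit (κ : ℤ) : ℕ → ℤ
  | 0 => 1 - κ
  | m + 1 => κ * (evenOrbit κ m ^ 2 - 1) + 1

variable {κ : ℤ}

theorem evenOrbit_succ (κ : ℤ) (m : ℕ) :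
    evenOrbit κ (m + 1) = κ * (evenOrbit κ m ^ 2 - 1) + 1 :=
  rfl

theorem criticalOrbit_two_mul_succ (κ : ℤ) (m : ℕ) :
    criticalOrbit (2 * κ) (m + 1) = κ * (evenOrbit κ m - 1) := by
  induction m with
  | zero => rw [criticalOrbit_one, evenOrbit]; push_cast; ring
  | succ m ih => rw [criticalOrbit_succ, ih, evenOrbit]; push_cast; ring

theorem criticalOrbit_two_mul_add (κ : ℤ) (m : ℕ) :
    criticalOrbit (2 * κ) (m + 1) + (2 * κ : ℤ) = (κ * (evenOrbit κ m + 1) : ℤ) := by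
  rw [criticalOrbit_two_mul_succ]; push_cast; ring

theorem abs_lt_abs_mul_sq_sub_one_add_one {x : ℤ} (hκ : 2 ≤ |κ|) (hx : 2 ≤ |x|) :
    |x| < |κ * (x ^ 2 - 1) + 1| := by
  have hnonneg : 0 ≤ |x| ^ 2 - 1 := by nlinarith
  calc |x| < |κ| * (|x| ^ 2 - 1) - 1 := by nlinarith
    _ = |κ * (x ^ 2 - 1)| - |(-1 : ℤ)| := by
      rw [abs_mul, ← sq_abs x, abs_of_nonneg hnonneg, abs_neg, abs_one]
    _ ≤ |κ * (x ^ 2 - 1) + 1| := by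
      rw [← sub_neg_eq_add]
      exact abs_sub_abs_le_abs_sub _ _

theorem two_le_abs_of_three_le_or (hκ : 3 ≤ κ ∨ κ ≤ -2) : 2 ≤ |κ| :=
  le_abs.mpr (by omega)

theorem two_le_abs_evenOrbit (hκ : 3 ≤ κ ∨ κ ≤ -2) (m : ℕ) : 2 ≤ |evenOrbit κ m| := by
  induction m with
  | zero => exact le_abs.mpr (by rw [evenOrbit]; omega)
  | succ m ih =>
    exact ih.trans (abs_lt_abs_mul_sq_sub_one_add_one (two_le_abs_of_three_le_or hκ) ih).le

theorem strictMono_abs_evenOrbit (hκ : 3 ≤ κ ∨ κ ≤ -2) : StrictMono fun m ↦ |evenOrbit κ m| :=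
  strictMono_nat_of_lt_succ fun m ↦
    abs_lt_abs_mul_sq_sub_one_add_one (two_le_abs_of_three_le_or hκ) (two_le_abs_evenOrbit hκ m)

theorem abs_sub_one_le_abs_evenOrbit (hκ : 3 ≤ κ ∨ κ ≤ -2) (m : ℕ) :
    |κ - 1| ≤ |evenOrbit κ m| := by
  rw [abs_sub_comm]
  exact (strictMono_abs_evenOrbit hκ).monotone m.zero_le

theorem injective_evenOrbit (hκ : 3 ≤ κ ∨ κ ≤ -2) : Function.Injective (evenOrbit κ) :=
  Function.Injective.of_comp (f := abs) (strictMono_abs_evenOrbit hκ).injective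

theorem four_le_evenOrbit_sq (hκ : 3 ≤ κ ∨ κ ≤ -2) (m : ℕ) : 4 ≤ evenOrbit κ m ^ 2 := by
  have := two_le_abs_evenOrbit hκ m
  rw [← sq_abs]
  nlinarith

/-- The value lies strictly between `(|κ x| - 1)²` and `(κ x)²`. -/
theorem not_isSquare_mul_mul_sq_sub_one_add_two {x : ℤ} (hκ : 3 ≤ κ ∨ κ ≤ -2)
    (hx : |κ - 1| ≤ |x|) : ¬ IsSquare (κ * (κ * (x ^ 2 - 1) + 2)) := by
  rintro ⟨w, hw⟩
  have hwz : |w| ^ 2 = (|κ| * |x|) ^ 2 + κ * (2 - κ) := by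
    rw [mul_pow, sq_abs, sq_abs, sq_abs]
    linear_combination -hw
  have hz : |κ| * |κ - 1| ≤ |κ| * |x| := mul_le_mul_of_nonneg_left hx (abs_nonneg _)
  rw [← abs_mul] at hz
  have hz1 : κ * (κ - 1) ≤ |κ| * |x| := (le_abs_self _).trans hz
  have hneg : κ * (2 - κ) < 0 := by rcases hκ with h | h <;> nlinarith
  have hlower : (|κ| * |x| - 1) ^ 2 < |w| ^ 2 := by
    have : 1 < κ * (κ - 1) + κ := by rcases hκ with h | h <;> nlinarith
    have : 2 * κ * (κ - 1) + κ * (2 - κ) = κ ^ 2 := by ring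
    nlinarith
  have hupper : |w| ^ 2 < (|κ| * |x|) ^ 2 := by linarith
  have hgt := lt_of_pow_lt_pow_left₀ 2 (abs_nonneg _) hlower
  have hlt := lt_of_pow_lt_pow_left₀ 2 (by positivity) hupper
  omega

theorem not_isSquare_criticalOrbit_two_mul_add (hκ : 3 ≤ κ ∨ κ ≤ -2) (m : ℕ) :
    ¬ IsSquare (criticalOrbit (2 * κ) (m + 2) + (2 * κ : ℤ)) := by
  rw [criticalOrbit_two_mul_add, Rat.isSquare_intCast_iff, evenOrbit_succ, add_assoc]
  exact not_isSquare_mul_mul_sq_sub_one_add_two hκ (abs_sub_one_le_abs_evenOrbit hκ m)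

theorem eventually_mul_evenOrbit_sq_add_ne_sq {D E : ℤ} (hκ : 3 ≤ κ ∨ κ ≤ -2) (hD : 0 < D)
    (hE : E ≠ 0) (hne : D * (1 - κ) ^ 2 + E ≠ 0) :
    ∀ᶠ m in atTop, ∀ s : ℤ, D * evenOrbit κ (m + 1) ^ 2 + E ≠ s ^ 2 := by
  have hfin := finite_setOf_mul_sq_add_eq_sq hD hE (A := κ) (by omega) hne
  have hcofinite := (hfin.preimage (injective_evenOrbit hκ).injOn).compl_mem_cofinite
  rw [Nat.cofinite_eq_atTop] at hcofinite
  filter_upwards [hcofinite] with m hm s hs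
  refine hm ⟨s, ?_⟩
  rw [← hs, evenOrbit_succ]
  ring

theorem odd_evenOrbit (hκ : Even κ) (m : ℕ) : Odd (evenOrbit κ m) := by
  cases m with
  | zero => exact odd_one.sub_even hκ
  | succ m => exact (hκ.mul_right _).add_odd odd_one

theorem even_evenOrbit (hκ : Odd κ) (m : ℕ) : Even (evenOrbit κ m) := by
  induction m with
  | zero => exact odd_one.sub_odd hκ
  | succ m ih =>
    exact (hκ.mul ((ih.pow_of_ne_zero two_ne_zero).sub_odd odd_one)).add_odd odd_one

theorem hasOddValuationPrimeTo_of_even {l : ℤ} (hl : l ≠ 0) {m : ℕ}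
    (h : ¬ IsSquare |l * (evenOrbit (2 * l) m ^ 2 - 1) + 1|) :
    HasOddValuationPrimeTo (2 * (2 * (2 * l)))
      (criticalOrbit (2 * (2 * l)) (m + 2) + (2 * (2 * l) : ℤ)) := by
  refine .of_isCoprime (a := 2 * (2 * l)) (d := 1) (by omega) (dvd_mul_left _ 2) one_ne_zero ?_ h ?_
  · obtain ⟨c, hc⟩ := Int.eight_dvd_sq_sub_one_of_odd (odd_evenOrbit (even_two_mul l) m)
    exact ⟨-c, 1, by rw [hc]; ring⟩
  · rw [criticalOrbit_two_mul_add, evenOrbit_succ]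
    push_cast
    ring

theorem hasOddValuationPrimeTo_of_odd (hκ : Odd κ) {m : ℕ}
    (h : ¬ IsSquare |evenOrbit κ (m + 1) + 1|) :
    HasOddValuationPrimeTo (2 * (2 * κ)) (criticalOrbit (2 * κ) (m + 2) + (2 * κ : ℤ)) := by
  have hκ0 : κ ≠ 0 := by rintro rfl; exact Int.not_odd_zero hκ
  have htwo : IsCoprime 2 (evenOrbit κ (m + 1) + 1) :=
    Int.isCoprime_two_left.mpr (even_evenOrbit hκ (m + 1)).add_one
  have hcop : IsCoprime κ (evenOrbit κ (m + 1) + 1) := by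
    rw [evenOrbit_succ, add_assoc, add_comm, IsCoprime.add_mul_left_right_iff]
    exact Int.isCoprime_two_right.mpr hκ
  refine .of_isCoprime (a := κ) (d := 1) (by omega) ⟨4, by ring⟩ one_ne_zero
    (htwo.mul_left (htwo.mul_left hcop)) h ?_
  rw [criticalOrbit_two_mul_add, one_pow, mul_one, Int.cast_mul]

theorem not_isSquare_abs_of_mod_eight_eq_one {μ : ℤ} (hμ : μ % 8 = 1) (hsq : ∀ s, μ ≠ s ^ 2) :
    ¬ IsSquare |μ| := by
  rintro ⟨s, hs⟩
  rw [← pow_two] at hs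
  rcases eq_or_eq_neg_of_abs_eq hs with h | h
  · exact hsq s h
  · have hs : Odd (s ^ 2) := Int.odd_iff.mpr (by omega)
    have := Int.eight_dvd_sq_sub_one_of_odd ((Int.odd_pow' two_ne_zero).mp hs)
    omega

theorem eventually_not_isSquare_abs_of_even {l : ℤ} (hl : 3 ≤ 2 * l ∨ 2 * l ≤ -2) :
    ∀ᶠ m in atTop, ¬ IsSquare |l * (evenOrbit (2 * l) (m + 1) ^ 2 - 1) + 1| := by
  have hmod8 (m : ℕ) : (l * (evenOrbit (2 * l) m ^ 2 - 1) + 1) % 8 = 1 := by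
    obtain ⟨c, hc⟩ := Int.eight_dvd_sq_sub_one_of_odd (odd_evenOrbit (even_two_mul l) m)
    rw [hc, mul_left_comm, add_comm, Int.add_mul_emod_self_left]
    rfl
  rcases hl with hpos | hneg
  · filter_upwards [eventually_mul_evenOrbit_sq_add_ne_sq (D := 2 * (2 * l))
      (E := 2 * (2 - 2 * l)) (.inl hpos) (by omega) (by omega) (by nlinarith)] with m hm
    exact not_isSquare_abs_of_mod_eight_eq_one (hmod8 _) fun s hs ↦
      hm (2 * s) (by linear_combination 4 * hs)
  · refine .of_forall fun m ↦ not_isSquare_abs_of_mod_eight_eq_one (hmod8 _) fun s hs ↦ ?_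
    nlinarith [four_le_evenOrbit_sq (.inr hneg) (m + 1), sq_nonneg s]

theorem eventually_not_isSquare_abs_of_odd (hκ : 3 ≤ κ ∨ κ ≤ -2) :
    ∀ᶠ m in atTop, ¬ IsSquare |evenOrbit κ (m + 2) + 1| := by
  have hx (m : ℕ) : 4 ≤ evenOrbit κ m ^ 2 := four_le_evenOrbit_sq hκ m
  rcases hκ with hpos | hneg
  · filter_upwards [eventually_mul_evenOrbit_sq_add_ne_sq (D := κ) (E := 2 - κ)
      (.inl hpos) (by omega) (by omega) (by nlinarith)] with m hm
    rintro ⟨s, hs⟩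
    rw [evenOrbit_succ, abs_of_nonneg (by nlinarith [hx (m + 1)])] at hs
    exact hm s (by linear_combination hs)
  · filter_upwards [eventually_mul_evenOrbit_sq_add_ne_sq (D := -κ) (E := κ - 2)
      (.inr hneg) (by omega) (by omega) (by nlinarith)] with m hm
    rintro ⟨s, hs⟩
    rw [evenOrbit_succ, abs_of_nonpos (by nlinarith [hx (m + 1)])] at hs
    exact hm s (by linear_combination hs)

theorem eventually_hasOddValuationPrimeTo_two_mul (hκ : 3 ≤ κ ∨ κ ≤ -2) :
    ∀ᶠ m in atTop, HasOddValuationPrimeTo (2 * (2 * κ))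
      (criticalOrbit (2 * κ) (m + 3) + (2 * κ : ℤ)) := by
  rcases Int.even_or_odd κ with heven | hodd
  · obtain ⟨l, rfl⟩ := heven.two_dvd
    filter_upwards [eventually_not_isSquare_abs_of_even hκ] with m hm
    exact hasOddValuationPrimeTo_of_even (by omega) hm
  · filter_upwards [eventually_not_isSquare_abs_of_odd hκ] with m hm
    exact hasOddValuationPrimeTo_of_odd hodd hm

end EvenMultiplier

section CriticalOrbitArithmetic

open Filter

variable {k : ℤ}

theorem not_isSquare_sq_sub_four_mul (h0 : k ≠ 0) (h4 : k ≠ 4) : ¬ IsSquare (k ^ 2 - 4 * k) := by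
  rintro ⟨w, hw⟩
  have hprod : (k - 2 - w) * (k - 2 + w) = 4 := by linear_combination hw
  have hdvd : k - 2 - w ∣ 4 := ⟨_, hprod.symm⟩
  have hle : k - 2 - w ≤ 4 := Int.le_of_dvd (by norm_num) hdvd
  have hge : -(k - 2 - w) ≤ 4 := Int.le_of_dvd (by norm_num) (neg_dvd.mpr hdvd)
  obtain ⟨u, rfl⟩ : ∃ u, w = k - 2 - u := ⟨k - 2 - w, by ring⟩
  rw [sub_sub_cancel] at hprod hle hge
  have : -4 ≤ u := by omega
  interval_cases u <;> omega

theorem not_isSquare_criticalOrbit_add (hk : k ∉ ({-2, 0, 2, 4} : Set ℤ)) (n : ℕ) :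
    ¬ IsSquare (criticalOrbit k (n + 2) + k) := by
  simp only [Set.mem_insert_iff, Set.mem_singleton_iff, not_or] at hk
  rcases Int.even_or_odd k with heven | hodd
  · obtain ⟨κ, rfl⟩ := heven.two_dvd
    exact not_isSquare_criticalOrbit_two_mul_add (by omega) n
  · exact not_isSquare_criticalOrbit_add_of_odd hodd n

theorem eventually_hasOddValuationPrimeTo_criticalOrbit_add
    (hk : k ∉ ({-2, 0, 2, 4} : Set ℤ)) :
    ∀ᶠ n in atTop, HasOddValuationPrimeTo (2 * k) (criticalOrbit k n + k) := by
  simp only [Set.mem_insert_iff, Set.mem_singleton_iff, not_or] at hk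
  rw [← map_add_atTop_eq_nat 3, eventually_map]
  rcases Int.even_or_odd k with heven | hodd
  · obtain ⟨κ, rfl⟩ := heven.two_dvd
    exact eventually_hasOddValuationPrimeTo_two_mul (by omega)
  · exact .of_forall (hasOddValuationPrimeTo_criticalOrbit_add_of_odd hodd)

end CriticalOrbitArithmetic

section UnitsAreSquares

theorem isSquare_of_map_ne_zero {R K : Type*} [CommRing R] [Field K] [IsAlgClosed K] {π : R →+* K}
    [HenselianRing R (RingHom.ker π)] (hπ : Function.Surjective π) (h2 : (2 : K) ≠ 0) {x : R}
    (hx : π x ≠ 0) : IsSquare x := by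
  obtain ⟨b, hb⟩ := IsAlgClosed.exists_pow_nat_eq (π x) two_pos
  obtain ⟨y, rfl⟩ := hπ b
  have hy : π y ≠ 0 := fun h ↦ hx (by rw [← hb, h, zero_pow two_ne_zero])
  have hroot : (X ^ 2 - C x).eval y ∈ RingHom.ker π := by
    simp [RingHom.mem_ker, hb]
  have hunit : IsUnit (Ideal.Quotient.mk (RingHom.ker π) ((X ^ 2 - C x).derivative.eval y)) := by
    rw [← MulEquiv.isUnit_map (RingHom.quotientKerEquivOfSurjective hπ)]
    have h2π : π 2 ≠ 0 := by rwa [map_ofNat]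
    simp [hy, one_add_one_eq_two, h2π]
  obtain ⟨z, hz, -⟩ :=
    HenselianRing.is_henselian (X ^ 2 - C x) (monic_X_pow_sub_C x two_ne_zero) y hroot hunit
  have hzx : z ^ 2 - x = 0 := by simpa [IsRoot] using hz
  exact ⟨z, by linear_combination -hzx⟩

variable {p : ℕ} [Fact p.Prime] {K : Type*} [Field K] [CharP K p]

theorem charZero_wittVector [PerfectRing K p] : CharZero (WittVector p K) := by
  refine charZero_of_inj_zero fun n hn ↦ by_contra fun hn0 ↦ ?_
  obtain ⟨a, u, hu, rfl⟩ := Nat.exists_eq_pow_mul_and_not_dvd hn0 p (Fact.out : p.Prime).ne_one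
  push_cast at hn
  rcases mul_eq_zero.mp hn with h | h
  · exact pow_ne_zero a (WittVector.irreducible p (k := K)).ne_zero h
  · have := congrArg WittVector.constantCoeff h
    rw [map_natCast, map_zero] at this
    exact hu ((CharP.cast_eq_zero_iff K p u).mp this)

theorem isSquare_of_isUnit_wittVector [IsAlgClosed K] (hp : p ≠ 2) {x : WittVector p K}
    (hx : IsUnit x) : IsSquare x := by
  have : HenselianRing (WittVector p K) (RingHom.ker WittVector.constantCoeff) :=
    WittVector.ker_constantCoeff (p := p) (k := K) ▸ inferInstance
  refine isSquare_of_map_ne_zero (WittVector.constantCoeff_surjective p) ?_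
    (hx.map WittVector.constantCoeff).ne_zero
  exact Ring.two_ne_zero (by rwa [ringChar.eq K p])

end UnitsAreSquares

section OddValuationNotSquare

theorem exists_mul_sq_eq_pow_mul_of_odd_padicValRat {p : ℕ} [Fact p.Prime] {q : ℚ}
    (hq : Odd (padicValRat p q)) :
    ∃ (d u : ℤ) (i : ℕ), ¬ (p : ℤ) ∣ u ∧ q * d ^ 2 = p ^ (2 * i + 1) * u := by
  have hq0 : q ≠ 0 := by rintro rfl; simp at hq
  have hqd : q * q.den ^ 2 = (q.num * q.den : ℤ) := by
    rw [pow_two, ← mul_assoc, Rat.mul_den_eq_num]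
    push_cast
    rfl
  have hz0 : q.num * q.den ≠ 0 := mul_ne_zero (Rat.num_ne_zero.mpr hq0) (by exact_mod_cast q.den_nz)
  generalize q.num * q.den = z at hqd hz0
  have hval : padicValRat p q + 2 * padicValRat p q.den = padicValInt p z := by
    rw [← padicValRat.of_int, ← hqd, padicValRat.mul hq0 (by positivity), padicValRat.pow]
    norm_cast
  obtain ⟨i, hi⟩ : Odd (padicValInt p z) := by
    rw [← Int.odd_coe_nat, ← hval]
    exact hq.add_even (even_two_mul _)
  obtain ⟨u, hu⟩ := padicValInt_dvd (p := p) z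
  refine ⟨q.den, u, i, ?_, ?_⟩
  · intro hpu
    have hdvd : (p : ℤ) ^ (padicValInt p z + 1) ∣ z := by
      conv_rhs => rw [hu]
      exact pow_succ (p : ℤ) _ ▸ mul_dvd_mul_left _ hpu
    rcases (padicValInt_dvd_iff _ _).mp hdvd with h | h
    · exact hz0 h
    · omega
  · rw [Int.cast_natCast, hqd, ← hi]
    exact_mod_cast hu

variable {W : Type*} [CommRing W] {p : ℕ}

theorem exists_mul_add_mul_eq_one_of_not_dvd (hp : p.Prime) {u : ℤ} (hu : ¬ (p : ℤ) ∣ u) :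
    ∃ a b : W, a * p + b * u = 1 := by
  obtain ⟨a, b, hab⟩ := (Nat.prime_iff_prime_int.mp hp).coprime_iff_not_dvd.mpr hu
  exact ⟨a, b, by exact_mod_cast congrArg (Int.cast : ℤ → W) hab⟩

theorem isUnit_intCast_of_not_dvd [IsLocalRing W] (hp : p.Prime) (hpW : ¬ IsUnit (p : W)) {u : ℤ}
    (hu : ¬ (p : ℤ) ∣ u) : IsUnit (u : W) := by
  obtain ⟨a, b, hab⟩ := exists_mul_add_mul_eq_one_of_not_dvd (W := W) hp hu
  rcases IsLocalRing.isUnit_or_isUnit_of_add_one hab with h | h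
  · exact absurd (isUnit_of_mul_isUnit_right h) hpW
  · exact isUnit_of_mul_isUnit_right h

theorem sq_ne_prime_mul_intCast [IsDomain W] (hp : p.Prime) (hpW : Prime (p : W)) {u : ℤ}
    (hu : ¬ (p : ℤ) ∣ u) (z : W) : z ^ 2 ≠ p * u := by
  intro h
  obtain ⟨y, rfl⟩ := hpW.dvd_of_dvd_pow ⟨_, h⟩
  have hpu : (p : W) ∣ u :=
    ⟨y ^ 2, mul_left_cancel₀ hpW.ne_zero (by linear_combination -h)⟩
  obtain ⟨a, b, hab⟩ := exists_mul_add_mul_eq_one_of_not_dvd (W := W) hp hu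
  exact hpW.not_isUnit (isUnit_of_dvd_one
    (hab ▸ dvd_add (dvd_mul_left _ a) (hpu.mul_left b)))

theorem not_isSquare_ratCast_of_odd_padicValRat [IsDomain W] [IsIntegrallyClosed W] (F : Type*)
    [Field F] [CharZero F] [Algebra W F] [IsFractionRing W F] (hp : p.Prime) (hpW : Prime (p : W))
    {q : ℚ} (hq : Odd (padicValRat p q)) : ¬ IsSquare (q : F) := by
  have := Fact.mk hp
  obtain ⟨d, u, i, hu, hdu⟩ := exists_mul_sq_eq_pow_mul_of_odd_padicValRat hq
  rintro ⟨f, hf⟩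
  have hpF : (p : F) ≠ 0 := by exact_mod_cast hp.ne_zero
  have hsq : (f * d / p ^ i) ^ 2 = algebraMap W F (p * u) := by
    have hduF : (q : F) * d ^ 2 = p ^ (2 * i + 1) * u := by exact_mod_cast congrArg (Rat.cast) hdu
    rw [div_pow, mul_pow, pow_two f, ← hf, hduF, map_mul, map_natCast, map_intCast]
    field_simp
    ring
  obtain ⟨z, hz⟩ := IsIntegrallyClosed.exists_algebraMap_eq_of_isIntegral_pow (R := W)
    (x := f * d / (p : F) ^ i) two_pos (hsq ▸ isIntegral_algebraMap)
  rw [← hz, ← map_pow] at hsq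
  exact sq_ne_prime_mul_intCast hp hpW hu z (IsFractionRing.injective W F hsq)

end OddValuationNotSquare

section Unramified

/-- The field generated over `ℚ` by the zeros in `L` of the `n`-th iterate of `x ↦ x² + k x`. -/
def iterateField (L : Type*) [Field L] [Algebra ℚ L] (k : ℤ) (n : ℕ) : IntermediateField ℚ L :=
  IntermediateField.adjoin ℚ {x | (quadMap k)^[n] x = 0}

theorem iterate_quadMap_eq_zero_iff {R : Type*} [CommRing R] [IsDomain R] {k : ℤ} {n : ℕ} {x : R} :
    (quadMap k)^[n] x = 0 ↔ x = 0 ∨ ∃ i < n, (quadMap k)^[i] x = -k := by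
  induction n with
  | zero => simp
  | succ n ih =>
    rw [Function.iterate_succ_apply', quadMap_eq_zero_iff, ih, or_assoc]
    simp only [Nat.exists_lt_succ_right]

theorem iterate_quadMap_critical_eq_zero {R : Type*} [CommRing R] [IsDomain R] (h2 : (2 : R) ≠ 0)
    {k : ℤ} {x w : R} {m n : ℕ} (hx : 2 * x = -k) (hw : k ^ 2 + 4 * w = 0)
    (hmw : (quadMap k)^[m] w = -k) (hmn : m + 1 < n) : (quadMap k)^[n] x = 0 := by
  have hxw : quadMap k x = w := by
    refine mul_left_cancel₀ (mul_ne_zero h2 h2) ?_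
    linear_combination four_mul_quadMap k x - hw + (2 * x + k) * hx
  refine iterate_quadMap_eq_zero_iff.mpr (.inr ⟨m + 1, hmn, ?_⟩)
  rw [Function.iterate_succ_apply, hxw, hmw]

variable {W : Type*} [CommRing W] [IsLocalRing W] {k : ℤ} {x : W} {n : ℕ}

theorem isUnit_sq_add_four_mul (h2 : IsUnit (2 : W)) (hk : IsUnit (k : W)) (hx : 2 * x = -k)
    (hn : ¬ IsUnit ((quadMap k)^[n] x + k)) {w : W} {m : ℕ} (hw : (quadMap k)^[m] w = -k)
    (hmn : m + 1 < n) : IsUnit ((k : W) ^ 2 + 4 * w) := by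
  set π := IsLocalRing.residue W
  rw [← IsLocalRing.residue_ne_zero_iff_isUnit] at h2 hk hn ⊢
  rw [not_not, map_add, map_intCast, map_iterate_quadMap] at hn
  intro hdisc
  refine hk ?_
  rw [map_ofNat] at h2
  have hzero : (quadMap k)^[n] (π x) = 0 := by
    refine iterate_quadMap_critical_eq_zero h2 (w := π w) (m := m) ?_ ?_ ?_ hmn
    · simpa only [map_mul, map_neg, map_ofNat, map_intCast] using congrArg π hx
    · simpa only [map_add, map_mul, map_pow, map_ofNat, map_intCast] using hdisc
    · simpa only [map_iterate_quadMap, map_neg, map_intCast] using congrArg π hw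
  rwa [hzero, zero_add, ← map_intCast π] at hn

/-- Solving `quadMap k γ = w` extracts a square root of `k² + 4 w`, which is a unit of `W`. -/
theorem mem_range_of_iterate_quadMap_eq_neg {Ω : Type*} [Field Ω] {j : W →+* Ω}
    (hj : Function.Injective j) (hsq : ∀ y : W, IsUnit y → IsSquare y) (h2 : IsUnit (2 : W))
    (hk : IsUnit (k : W)) (hx : 2 * x = -k) (hn : ¬ IsUnit ((quadMap k)^[n] x + k)) {m : ℕ}
    (hmn : m < n) {β : Ω} (hβ : (quadMap k)^[m] β = -k) : β ∈ j.range := by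
  induction m generalizing β with
  | zero => exact ⟨-k, by rw [map_neg, map_intCast, ← hβ]; rfl⟩
  | succ m ih =>
    obtain ⟨w, hw⟩ := ih (by omega) hβ
    have hwk : (quadMap k)^[m] w = -k := by
      apply hj
      rw [map_iterate_quadMap, hw, ← Function.iterate_succ_apply, hβ, map_neg, map_intCast]
    obtain ⟨y, hy⟩ := hsq _ (isUnit_sq_add_four_mul h2 hk hx hn hwk hmn)
    obtain ⟨h, hh⟩ := h2.exists_right_inv
    have hjh : 2 * j h = 1 := by rw [← map_ofNat j 2, ← map_mul, hh, map_one]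
    have hroots : (2 * β + k) ^ 2 = j y ^ 2 := by
      rw [← four_mul_quadMap, ← hw, ← map_pow, pow_two y, ← hy]
      simp only [map_add, map_mul, map_pow, map_intCast, map_ofNat]
    rcases sq_eq_sq_iff_eq_or_eq_neg.mp hroots with hpos | hneg
    · refine ⟨h * (y - k), ?_⟩
      rw [map_mul, map_sub, map_intCast]
      linear_combination -j h * hpos + β * hjh
    · refine ⟨h * (-y - k), ?_⟩
      rw [map_mul, map_sub, map_neg, map_intCast]
      linear_combination -j h * hneg + β * hjh

variable {F Ω L : Type*} [Field F] [CharZero F] [Algebra W F] [Field Ω] [CharZero Ω] [Algebra F Ω]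
  [Field L] [Algebra ℚ L]

theorem map_mem_range_of_mem_iterateField [FaithfulSMul W F] (ι : L →ₐ[ℚ] Ω)
    (hsq : ∀ y : W, IsUnit y → IsSquare y) (h2 : IsUnit (2 : W)) (hk : IsUnit (k : W))
    (hx : 2 * x = -k) (hn : ¬ IsUnit ((quadMap k)^[n] x + k)) {y : L}
    (hy : y ∈ iterateField L k n) : ι y ∈ (algebraMap F Ω).fieldRange := by
  have hle : iterateField L k n ≤
      ((⊥ : IntermediateField F Ω).restrictScalars ℚ).comap ι := by
    refine IntermediateField.adjoin_le_iff.mpr fun z hz ↦ ?_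
    rcases iterate_quadMap_eq_zero_iff.mp hz with rfl | ⟨m, hmn, hm⟩
    · exact zero_mem _
    · have hj : Function.Injective ((algebraMap F Ω).comp (algebraMap W F)) :=
        (algebraMap F Ω).injective.comp (FaithfulSMul.algebraMap_injective W F)
      obtain ⟨w, hw⟩ := mem_range_of_iterate_quadMap_eq_neg hj hsq h2 hk hx hn hmn (β := ι z)
        (by rw [← map_iterate_quadMap, hm, map_neg, map_intCast])
      exact IntermediateField.mem_bot.mpr ⟨_, hw⟩
  exact IntermediateField.mem_bot.mp (hle hy)

theorem isSquare_ratCast_of_mem_iterateField [FaithfulSMul W F] (ι : L →ₐ[ℚ] Ω)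
    (hsq : ∀ y : W, IsUnit y → IsSquare y) (h2 : IsUnit (2 : W)) (hk : IsUnit (k : W)) {y : L}
    (hy : y ∈ iterateField L k n) (hyq : y ^ 2 = algebraMap ℚ L (criticalOrbit k n + k)) :
    IsSquare ((criticalOrbit k n + k : ℚ) : F) := by
  obtain ⟨h, hh⟩ := h2.exists_right_inv
  have hhF : 2 * algebraMap W F h = 1 := by
    rw [← map_ofNat (algebraMap W F) 2, ← map_mul, hh, map_one]
  have hx : 2 * (-(k : W) * h) = -k := by linear_combination -(k : W) * hh
  have horbit : algebraMap W F ((quadMap k)^[n] (-(k : W) * h) + k) =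
      ((criticalOrbit k n + k : ℚ) : F) := by
    have hcrit : algebraMap W F (-(k : W) * h) = Rat.castHom F (-(k / 2)) := by
      rw [map_mul, map_neg, map_intCast, Rat.coe_castHom]
      push_cast
      linear_combination -(k / 2 : F) * hhF
    rw [map_add, map_iterate_quadMap, hcrit, ← map_iterate_quadMap, map_intCast]
    push_cast
    rfl
  by_cases hn : IsUnit ((quadMap k)^[n] (-(k : W) * h) + k)
  · rw [← horbit]
    exact (hsq _ hn).map (algebraMap W F)
  · obtain ⟨f, hf⟩ := map_mem_range_of_mem_iterateField (F := F) ι hsq h2 hk hx hn hy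
    refine ⟨f, (algebraMap F Ω).injective ?_⟩
    rw [map_mul, hf, ← map_mul, ← pow_two, hyq, eq_ratCast, map_ratCast, map_ratCast]

end Unramified

theorem sq_ne_of_mem_iterateField {L : Type*} [Field L] [Algebra ℚ L] [Algebra.IsAlgebraic ℚ L]
    {k : ℤ} {n : ℕ} (h : HasOddValuationPrimeTo (2 * k) (criticalOrbit k n + k)) {y : L}
    (hy : y ∈ iterateField L k n) : y ^ 2 ≠ algebraMap ℚ L (criticalOrbit k n + k) := by
  intro hyq
  obtain ⟨p, hp, hpk, hodd⟩ := h
  have := Fact.mk hp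
  let W := WittVector p (AlgebraicClosure (ZMod p))
  have : CharZero W := charZero_wittVector
  have : CharZero (FractionRing W) :=
    charZero_of_injective_algebraMap (IsFractionRing.injective W (FractionRing W))
  have : CharZero (AlgebraicClosure (FractionRing W)) :=
    charZero_of_injective_algebraMap (algebraMap (FractionRing W) _).injective
  have hpW : Prime (p : W) := (WittVector.irreducible p).prime
  have hunit {u : ℤ} (hu : u ∣ 2 * k) : IsUnit (u : W) :=
    isUnit_intCast_of_not_dvd hp hpW.not_isUnit fun hpu ↦ hpk (hpu.trans hu)
  have hp2 : p ≠ 2 := by rintro rfl; exact hpk (dvd_mul_right _ _)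
  refine not_isSquare_ratCast_of_odd_padicValRat (FractionRing W) hp hpW hodd ?_
  exact isSquare_ratCast_of_mem_iterateField
    (IsAlgClosed.lift : L →ₐ[ℚ] AlgebraicClosure (FractionRing W))
    (fun _ ↦ isSquare_of_isUnit_wittVector hp2) (by exact_mod_cast hunit (dvd_mul_right 2 k))
    (hunit (dvd_mul_left k 2)) hy hyq

section QuadraticKummer

variable {K L : Type*} [Field K] [Field L] [Algebra K L]

open IntermediateField

theorem exists_eq_add_mul_of_mem_adjoin_simple {a x : L}
    (ha : a ^ 2 ∈ (algebraMap K L).range) (hx : x ∈ K⟮a⟯) :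
    ∃ u v : K, x = algebraMap K L u + algebraMap K L v * a := by
  obtain ⟨d, hd⟩ := ha
  have hmonic : (X ^ 2 - C d).Monic := monic_X_pow_sub_C d two_ne_zero
  have hroot : aeval a (X ^ 2 - C d) = 0 := by
    simp only [map_sub, map_pow, aeval_X, aeval_C, hd, sub_self]
  have hint : IsIntegral K a := ⟨_, hmonic, hroot⟩
  rw [← mem_toSubalgebra, adjoin_simple_toSubalgebra_of_isAlgebraic hint.isAlgebraic,
    Algebra.adjoin_singleton_eq_range_aeval] at hx
  obtain ⟨f, hf⟩ := hx
  have hdeg : (f %ₘ (X ^ 2 - C d)).degree ≤ 1 := by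
    refine Order.le_of_lt_succ ((degree_modByMonic_lt f hmonic).trans_eq ?_)
    rw [degree_X_pow_sub_C two_pos]
    rfl
  refine ⟨(f %ₘ (X ^ 2 - C d)).coeff 0, (f %ₘ (X ^ 2 - C d)).coeff 1, ?_⟩
  rw [← hf, AlgHom.toRingHom_eq_coe, RingHom.coe_coe, ← aeval_modByMonic_eq_self_of_root hroot]
  conv_lhs => rw [eq_X_add_C_of_degree_le_one hdeg]
  simp only [map_add, map_mul, aeval_C, aeval_X]
  ring

theorem mem_or_mul_mem_of_mem_sup_adjoin_simple (h2 : (2 : L) ≠ 0) {E : IntermediateField K L}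
    {a x : L} (ha : a ^ 2 ∈ E) (hx : x ^ 2 ∈ E) (hxa : x ∈ E ⊔ K⟮a⟯) : x ∈ E ∨ x * a ∈ E := by
  rw [← restrictScalars_adjoin_eq_sup, mem_restrictScalars] at hxa
  obtain ⟨u, v, rfl⟩ := exists_eq_add_mul_of_mem_adjoin_simple (K := E) ⟨⟨_, ha⟩, rfl⟩ hxa
  change ((u : L) + v * a) ^ 2 ∈ E at hx
  change (u : L) + v * a ∈ E ∨ ((u : L) + v * a) * a ∈ E
  by_cases huv : (u : L) * v = 0
  · rcases mul_eq_zero.mp huv with hu | hv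
    · right
      rw [hu, zero_add, mul_assoc, ← pow_two]
      exact mul_mem v.2 ha
    · left
      rw [hv, zero_mul, add_zero]
      exact u.2
  · have haE : a ∈ E := by
      have hcross : a = (((u : L) + v * a) ^ 2 - u ^ 2 - v ^ 2 * a ^ 2) / (2 * (u * v)) := by
        rw [eq_div_iff (mul_ne_zero h2 huv)]
        ring
      rw [hcross]
      exact div_mem (sub_mem (sub_mem hx (pow_mem u.2 2)) (mul_mem (pow_mem v.2 2) ha))
        (mul_mem (ofNat_mem E 2) (mul_mem u.2 v.2))
    exact .inl (add_mem u.2 (mul_mem v.2 haE))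

theorem two_mul_finrank_le_of_lt {E F : IntermediateField K L} [FiniteDimensional K F]
    (h : E < F) : 2 * Module.finrank K E ≤ Module.finrank K F := by
  obtain ⟨c, hc⟩ := finrank_dvd_of_le_right h.le
  have hc0 : c ≠ 0 := by
    rintro rfl
    exact Module.finrank_pos.ne' hc
  have hc1 : c ≠ 1 := by
    rintro rfl
    exact h.ne (eq_of_le_of_finrank_eq h.le (by rw [hc, mul_one]))
  rw [hc, mul_comm]
  exact Nat.mul_le_mul_left _ (by omega)

theorem two_pow_card_mul_finrank_le {ι : Type*} (h2 : (2 : L) ≠ 0) {F : IntermediateField K L}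
    [FiniteDimensional K F] {s : Finset ι} {r : ι → L} (hF : ∀ i ∈ s, r i ∈ F)
    {E : IntermediateField K L} (hEF : E ≤ F) (hsq : ∀ i ∈ s, r i ^ 2 ∈ E)
    (hrel : ∀ t ⊆ s, t.Nonempty → ∏ i ∈ t, r i ∉ E) :
    2 ^ s.card * Module.finrank K E ≤ Module.finrank K F := by
  classical
  induction s using Finset.induction_on generalizing E with
  | empty => simpa using Nat.le_of_dvd Module.finrank_pos (finrank_dvd_of_le_right hEF)
  | insert a s has ih =>
    rw [Finset.forall_mem_insert] at hF hsq
    have haE : r a ∉ E := by simpa using hrel {a} (by simp) (by simp)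
    have hlt : E < E ⊔ K⟮r a⟯ := left_lt_sup.mpr fun h ↦ haE (h (mem_adjoin_simple_self K _))
    have hle : E ⊔ K⟮r a⟯ ≤ F := sup_le hEF (adjoin_simple_le_iff.mpr hF.1)
    have hfin : FiniteDimensional K ↥(E ⊔ K⟮r a⟯) :=
      .of_injective (inclusion hle).toLinearMap (inclusion_injective hle)
    have hrel_sup : ∀ t ⊆ s, t.Nonempty → ∏ i ∈ t, r i ∉ E ⊔ K⟮r a⟯ := by
      intro t ht hne hmem
      have hprod : (∏ i ∈ t, r i) ^ 2 ∈ E := by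
        rw [← Finset.prod_pow]
        exact prod_mem fun i hi ↦ hsq.2 i (ht hi)
      rcases mem_or_mul_mem_of_mem_sup_adjoin_simple h2 hsq.1 hprod hmem with h | h
      · exact hrel t (ht.trans (Finset.subset_insert a s)) hne h
      · refine hrel (insert a t) (Finset.insert_subset_insert a ht) (Finset.insert_nonempty a t) ?_
        rwa [Finset.prod_insert fun hat ↦ has (ht hat), mul_comm]
    calc 2 ^ (insert a s).card * Module.finrank K E
        = 2 ^ s.card * (2 * Module.finrank K E) := by
          rw [Finset.card_insert_of_notMem has, pow_succ, mul_assoc]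
      _ ≤ 2 ^ s.card * Module.finrank K ↥(E ⊔ K⟮r a⟯) :=
          Nat.mul_le_mul_left _ (two_mul_finrank_le_of_lt hlt)
      _ ≤ Module.finrank K F := ih hF.2 hle (fun i hi ↦ hlt.le (hsq.2 i hi)) hrel_sup

end QuadraticKummer

section TwoGroupActions

variable {α : Type*} [DecidableEq α]

theorem two_dvd_card_of_symmDiff_mem {R : Set (Finset α)} [Finite R] {t₀ : Finset α}
    (ht₀ : t₀.Nonempty) (hR : ∀ t ∈ R, symmDiff t t₀ ∈ R) : 2 ∣ Nat.card R := by
  by_contra hodd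
  have hinv : Function.Involutive fun t : R ↦ (⟨symmDiff t.1 t₀, hR t t.2⟩ : R) :=
    fun t ↦ Subtype.ext (symmDiff_symmDiff_cancel_right t₀ t.1)
  have := Fintype.ofFinite R
  rw [Nat.card_eq_fintype_card] at hodd
  obtain ⟨t, ht⟩ := Equiv.Perm.exists_fixed_point_of_prime (p := 2) (n := 1) hodd
    (σ := hinv.toPerm) (by ext1 t; rw [pow_one, pow_two]; exact hinv t)
  exact ht₀.ne_empty (symmDiff_eq_left.mp (congrArg Subtype.val ht))

open scoped Pointwise

variable {G : Type*} [Group G] [MulAction G α]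

/-- The action on `R` factors through a finite `2`-group, and `R` has even cardinality, so the
fixed point `∅` is not the only one. -/
theorem exists_nonempty_forall_smul_eq {R : Set (Finset α)} [Finite R] {m : ℕ}
    (hsmul : ∀ g : G, ∀ t ∈ R, g • t ∈ R) (hpow : ∀ g : G, ∀ t ∈ R, g ^ 2 ^ m • t = t)
    (hempty : ∅ ∈ R) (hcard : 2 ∣ Nat.card R) :
    ∃ t ∈ R, t.Nonempty ∧ ∀ g : G, g • t = t := by
  let S : SubMulAction G (Finset α) := ⟨R, fun g {t} ↦ hsmul g t⟩
  have : Finite S := ‹Finite R›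
  have hgroup : IsPGroup 2 (MulAction.toPermHom G S).range := by
    rintro ⟨_, g, rfl⟩
    refine ⟨m, Subtype.ext ?_⟩
    rw [SubmonoidClass.coe_pow, ← map_pow]
    ext1 t
    exact Subtype.ext (hpow g t t.2)
  have hfixed : (⟨∅, hempty⟩ : S) ∈ MulAction.fixedPoints (MulAction.toPermHom G S).range S := by
    rintro ⟨_, g, rfl⟩
    exact Subtype.ext (Finset.smul_finset_empty g)
  obtain ⟨t, ht, hne⟩ :=
    hgroup.exists_fixed_point_of_prime_dvd_card_of_fixed_point S hcard hfixed
  refine ⟨t, t.2, ?_, fun g ↦ congrArg Subtype.val (ht ⟨_, g, rfl⟩)⟩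
  exact Finset.nonempty_iff_ne_empty.mpr fun h ↦ hne (Subtype.ext h.symm)

theorem mem_of_transitive_of_symmDiff_mem {s : Finset α} {m : ℕ}
    (htrans : ∀ a ∈ s, ∀ b ∈ s, ∃ g : G, g • a = b) (hpow : ∀ g : G, ∀ a ∈ s, g ^ 2 ^ m • a = a)
    {R : Set (Finset α)} (hRs : ∀ t ∈ R, t ⊆ s) (hsmul : ∀ g : G, ∀ t ∈ R, g • t ∈ R)
    (hsymm : ∀ t ∈ R, ∀ u ∈ R, symmDiff t u ∈ R) {t₀ : Finset α} (ht₀ : t₀ ∈ R)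
    (hne : t₀.Nonempty) : s ∈ R := by
  have : Finite R := s.powerset.finite_toSet.subset fun t ht ↦ Finset.mem_powerset.mpr (hRs t ht)
  have hempty : ∅ ∈ R := by simpa using hsymm t₀ ht₀ t₀ ht₀
  have hpowR (g : G) (t) (ht : t ∈ R) : g ^ 2 ^ m • t = t := by
    rw [← Finset.image_smul]
    conv_rhs => rw [← Finset.image_id (s := t)]
    exact Finset.image_congr fun a ha ↦ hpow g a (hRs t ht ha)
  obtain ⟨t, ht, ⟨a, ha⟩, hfix⟩ := exists_nonempty_forall_smul_eq hsmul hpowR hempty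
    (two_dvd_card_of_symmDiff_mem hne fun t ht ↦ hsymm t ht t₀ ht₀)
  suffices s ⊆ t by rwa [this.antisymm (hRs t ht)]
  intro b hb
  obtain ⟨g, rfl⟩ := htrans a (hRs t ht ha) b hb
  rw [← hfix g]
  exact Finset.smul_mem_smul_finset ha

theorem exists_smul_map_of_stabilizer_le {X Y : Type*} [MulAction G X] [MulAction G Y] {a : X}
    {y : Y} (h : MulAction.stabilizer G a ≤ MulAction.stabilizer G y) :
    ∃ f : X → Y, ∀ g : G, f (g • a) = g • y := by
  have hfactors : (fun g : G ↦ g • y).FactorsThrough fun g : G ↦ g • a := by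
    intro g g' hgg'
    rw [← inv_smul_eq_iff, ← mul_smul]
    exact h (by rw [MulAction.mem_stabilizer_iff, mul_smul, inv_smul_eq_iff]; exact hgg')
  exact ⟨_, hfactors.extend_apply fun _ ↦ y⟩

end TwoGroupActions

section PreimageTree

variable {L : Type*} [Field L] [IsAlgClosed L]

/-- A chosen square root of `k² + 4 β`, the discriminant of `X² + k X - β`. -/
noncomputable def sqrtDisc (k : ℤ) (β : L) : L :=
  (IsAlgClosed.exists_pow_nat_eq ((k : L) ^ 2 + 4 * β) two_pos).choose

theorem sqrtDisc_sq (k : ℤ) (β : L) : sqrtDisc k β ^ 2 = k ^ 2 + 4 * β :=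
  (IsAlgClosed.exists_pow_nat_eq ((k : L) ^ 2 + 4 * β) two_pos).choose_spec

open Classical in
/-- The preimages of `β` under `x ↦ x² + k x`, given by the quadratic formula. -/
noncomputable def quadPreimages (k : ℤ) (β : L) : Finset L :=
  {(sqrtDisc k β - k) / 2, (-sqrtDisc k β - k) / 2}

open Classical in
/-- The `m`-th level of the tree of iterated preimages of `-k`, that is, the zeros of the
`(m + 1)`-st iterate of `x ↦ x² + k x` that are not zeros of the `m`-th. -/
noncomputable def treeLevel (L : Type*) [Field L] [IsAlgClosed L] (k : ℤ) : ℕ → Finset L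
  | 0 => {-(k : L)}
  | m + 1 => (treeLevel L k m).biUnion (quadPreimages k)

variable [CharZero L] {k : ℤ} {m : ℕ}

theorem quadMap_sub_eq_mul (k : ℤ) (y β : L) :
    quadMap k y - β = (y - (sqrtDisc k β - k) / 2) * (y - (-sqrtDisc k β - k) / 2) := by
  rw [quadMap]
  linear_combination (1 / 4) * sqrtDisc_sq k β

theorem mem_quadPreimages {γ β : L} : γ ∈ quadPreimages k β ↔ quadMap k γ = β := by
  classical
  rw [← sub_eq_zero, quadMap_sub_eq_mul, mul_eq_zero, sub_eq_zero, sub_eq_zero, quadPreimages,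
    Finset.mem_insert, Finset.mem_singleton]

theorem pairwiseDisjoint_quadPreimages (k : ℤ) (s : Set L) :
    s.PairwiseDisjoint (quadPreimages k) := fun _ _ _ _ hne ↦
  Finset.disjoint_left.mpr fun _ h h' ↦
    hne ((mem_quadPreimages.mp h).symm.trans (mem_quadPreimages.mp h'))

theorem quadratic_roots_ne {β : L} (h : sqrtDisc k β ≠ 0) :
    (sqrtDisc k β - k) / 2 ≠ (-sqrtDisc k β - k) / 2 :=
  fun heq ↦ h (by linear_combination heq)

theorem mem_treeLevel_succ {γ : L} : γ ∈ treeLevel L k (m + 1) ↔ quadMap k γ ∈ treeLevel L k m := by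
  simp only [treeLevel, Finset.mem_biUnion, mem_quadPreimages, exists_eq_right']

theorem mem_treeLevel {γ : L} : γ ∈ treeLevel L k m ↔ (quadMap k)^[m] γ = -k := by
  induction m generalizing γ with
  | zero => simp [treeLevel]
  | succ m ih => rw [mem_treeLevel_succ, ih, Function.iterate_succ_apply]

theorem card_treeLevel (h : ∀ i < m, ∀ β ∈ treeLevel L k i, sqrtDisc k β ≠ 0) :
    (treeLevel L k m).card = 2 ^ m := by
  classical
  induction m with
  | zero => simp [treeLevel]
  | succ m ih =>
    have hpair : ∀ β ∈ treeLevel L k m, (quadPreimages k β).card = 2 := fun β hβ ↦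
      Finset.card_pair (quadratic_roots_ne (h m m.lt_succ_self β hβ))
    rw [treeLevel, Finset.card_biUnion (pairwiseDisjoint_quadPreimages k _),
      Finset.sum_congr rfl hpair, Finset.sum_const, smul_eq_mul, pow_succ,
      ih fun i hi ↦ h i (hi.trans m.lt_succ_self)]

theorem iterate_quadMap_add_eq_prod (h : ∀ i < m, ∀ β ∈ treeLevel L k i, sqrtDisc k β ≠ 0)
    (y : L) : (quadMap k)^[m] y + k = ∏ β ∈ treeLevel L k m, (y - β) := by
  classical
  induction m generalizing y with
  | zero => simp [treeLevel]
  | succ m ih =>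
    rw [Function.iterate_succ_apply, ih (fun i hi ↦ h i (hi.trans m.lt_succ_self)), treeLevel,
      Finset.prod_biUnion (pairwiseDisjoint_quadPreimages k _)]
    refine Finset.prod_congr rfl fun β hβ ↦ ?_
    rw [quadPreimages, Finset.prod_pair (quadratic_roots_ne (h m m.lt_succ_self β hβ)),
      quadMap_sub_eq_mul]

end PreimageTree

section LevelDiscriminant

/-- The product of the discriminants `k² + 4 β` over the `m`-th level of the preimage tree, as a
rational number: `k² + 4 β = -4 (c - β)` for `c = criticalOrbit k 1`, and the `c - β` multiply to
the value at `c` of the `m`-th iterate plus `k`. -/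
def levelDisc (k : ℤ) (m : ℕ) : ℚ := (-4) ^ 2 ^ m * (criticalOrbit k (m + 1) + k)

theorem levelDisc_succ (k : ℤ) (m : ℕ) :
    levelDisc k (m + 1) = ((-4) ^ 2 ^ m) ^ 2 * (criticalOrbit k (m + 2) + k) := by
  rw [levelDisc, pow_succ 2 m, pow_mul]

theorem not_isSquare_levelDisc {k : ℤ} (hk : k ∉ ({-2, 0, 2, 4} : Set ℤ)) (m : ℕ) :
    ¬ IsSquare (levelDisc k m) := by
  cases m with
  | zero =>
    simp only [Set.mem_insert_iff, Set.mem_singleton_iff, not_or] at hk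
    have hdisc : levelDisc k 0 = (k ^ 2 - 4 * k : ℤ) := by
      rw [levelDisc, criticalOrbit_one]
      push_cast
      ring
    rw [hdisc, Rat.isSquare_intCast_iff]
    exact not_isSquare_sq_sub_four_mul hk.2.1 hk.2.2.2
  | succ m =>
    intro hsq
    refine not_isSquare_criticalOrbit_add hk m ?_
    have hdiv := hsq.div (IsSquare.sq ((-4 : ℚ) ^ 2 ^ m))
    rwa [levelDisc_succ, mul_div_cancel_left₀ _ (by positivity)] at hdiv

variable {L : Type*} [Field L] [CharZero L] [IsAlgClosed L] {k : ℤ}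

theorem prod_disc_treeLevel {m : ℕ} (h : ∀ i < m, ∀ β ∈ treeLevel L k i, sqrtDisc k β ≠ 0) :
    ∏ β ∈ treeLevel L k m, ((k : L) ^ 2 + 4 * β) = (levelDisc k m : L) := by
  have horbit : (quadMap k)^[m] ((criticalOrbit k 1 : ℚ) : L) = criticalOrbit k (m + 1) := by
    simp only [← eq_ratCast (Rat.castHom L), ← map_iterate_quadMap]
    rw [criticalOrbit, criticalOrbit, ← Function.iterate_add_apply]
  rw [levelDisc, Rat.cast_mul, Rat.cast_add, ← horbit, Rat.cast_intCast,
    iterate_quadMap_add_eq_prod h, Rat.cast_pow, ← card_treeLevel h, ← Finset.prod_const,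
    ← Finset.prod_mul_distrib, criticalOrbit_one]
  refine Finset.prod_congr rfl fun β _ ↦ ?_
  push_cast
  ring

theorem sqrtDisc_ne_zero (hsq : ∀ m, ¬ IsSquare (levelDisc k m)) {m : ℕ} {β : L}
    (hβ : β ∈ treeLevel L k m) : sqrtDisc k β ≠ 0 := by
  induction m using Nat.strong_induction_on generalizing β with
  | _ m ih =>
    intro h0
    have hdisc : (k : L) ^ 2 + 4 * β = 0 := by rw [← sqrtDisc_sq, h0, zero_pow two_ne_zero]
    have hprod := prod_disc_treeLevel fun i hi β ↦ ih i hi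
    rw [Finset.prod_eq_zero hβ hdisc] at hprod
    exact hsq m ((Rat.cast_eq_zero.mp hprod.symm) ▸ IsSquare.zero)

theorem prod_sqrtDisc_sq (hsq : ∀ m, ¬ IsSquare (levelDisc k m)) (m : ℕ) :
    (∏ β ∈ treeLevel L k m, sqrtDisc k β) ^ 2 = (levelDisc k m : L) := by
  simp only [← Finset.prod_pow, sqrtDisc_sq]
  exact prod_disc_treeLevel fun _ _ _ ↦ sqrtDisc_ne_zero hsq

end LevelDiscriminant

section GaloisAction

variable {L : Type*} [Field L] [CharZero L] [IsAlgClosed L] {k : ℤ} {m : ℕ}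

theorem map_mem_treeLevel {F : Type*} [FunLike F L L] [RingHomClass F L L] (σ : F) {β : L}
    (hβ : β ∈ treeLevel L k m) : σ β ∈ treeLevel L k m := by
  rw [mem_treeLevel] at hβ ⊢
  rw [← map_iterate_quadMap, hβ, map_neg, map_intCast]

theorem map_sqrtDisc_sq {F : Type*} [FunLike F L L] [RingHomClass F L L] (σ : F) (β : L) :
    σ (sqrtDisc k β) ^ 2 = sqrtDisc k (σ β) ^ 2 := by
  rw [← map_pow, sqrtDisc_sq, sqrtDisc_sq]
  simp only [map_add, map_mul, map_pow, map_intCast, map_ofNat]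

variable [Algebra ℚ L]

theorem pow_two_pow_apply_of_mem_treeLevel (σ : Gal(L/ℚ)) {β : L} (hβ : β ∈ treeLevel L k m) :
    (σ ^ 2 ^ m) β = β := by
  induction m generalizing β with
  | zero =>
    rw [treeLevel, Finset.mem_singleton] at hβ
    rw [hβ, map_neg, map_intCast]
  | succ m ih =>
    have hfix : quadMap k ((σ ^ 2 ^ m) β) = quadMap k β := by
      rw [← map_quadMap, ih (mem_treeLevel_succ.mp hβ)]
    rw [pow_succ, pow_mul, pow_two, AlgEquiv.mul_apply]
    rcases quadMap_eq_quadMap_iff.mp hfix with h | h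
    · rw [h, h]
    · rw [h, map_sub, h, map_neg, map_intCast, sub_sub_cancel]

variable [IsGalois ℚ L]

/-- Otherwise a square root of one discriminant of the level has well-defined conjugates, and their
product would be a rational square root of `levelDisc k m`. -/
theorem exists_apply_ne_of_mem_treeLevel_succ (hsq : ∀ m, ¬ IsSquare (levelDisc k m))
    (htrans : ∀ β ∈ treeLevel L k m, ∀ β' ∈ treeLevel L k m, ∃ σ : Gal(L/ℚ), σ β = β') {γ : L}
    (hγ : γ ∈ treeLevel L k (m + 1)) :
    ∃ τ : Gal(L/ℚ), τ (quadMap k γ) = quadMap k γ ∧ τ γ ≠ γ := by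
  by_contra! hstab
  obtain ⟨f, hf⟩ := exists_smul_map_of_stabilizer_le (G := Gal(L/ℚ)) (a := quadMap k γ)
    (y := 2 * γ + k) fun τ hτ ↦ by
      rw [MulAction.mem_stabilizer_iff, AlgEquiv.smul_def] at hτ ⊢
      simp only [map_add, map_mul, map_ofNat, map_intCast, hstab τ hτ]
  simp only [AlgEquiv.smul_def] at hf
  replace htrans := htrans _ (mem_treeLevel_succ.mp hγ)
  have hfsq : ∀ β ∈ treeLevel L k m, f β ^ 2 = k ^ 2 + 4 * β := by
    intro β hβ
    obtain ⟨σ, rfl⟩ := htrans β hβ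
    rw [hf, ← map_pow, ← four_mul_quadMap]
    simp only [map_add, map_mul, map_pow, map_ofNat, map_intCast]
  have hfmap (τ : Gal(L/ℚ)) : ∀ β ∈ treeLevel L k m, τ (f β) = f (τ β) := by
    intro β hβ
    obtain ⟨σ, rfl⟩ := htrans β hβ
    rw [hf, ← AlgEquiv.mul_apply, ← AlgEquiv.mul_apply, hf]
  obtain ⟨q, hq⟩ : ∏ β ∈ treeLevel L k m, f β ∈ (algebraMap ℚ L).range := by
    refine (InfiniteGalois.mem_range_algebraMap_iff_fixed _).mpr fun τ ↦ ?_
    rw [map_prod, Finset.prod_congr rfl (hfmap τ)]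
    exact Finset.prod_nbij' τ τ.symm (fun _ ↦ map_mem_treeLevel τ)
      (fun _ ↦ map_mem_treeLevel τ.symm) (fun β _ ↦ τ.symm_apply_apply β)
      (fun β _ ↦ τ.apply_symm_apply β) fun _ _ ↦ rfl
  refine hsq m ⟨q, Rat.cast_injective (α := L) ?_⟩
  rw [Rat.cast_mul, ← eq_ratCast (algebraMap ℚ L) q, hq, ← pow_two, ← Finset.prod_pow,
    Finset.prod_congr rfl hfsq, prod_disc_treeLevel fun _ _ _ ↦ sqrtDisc_ne_zero hsq]

theorem exists_apply_eq_of_mem_treeLevel (hsq : ∀ m, ¬ IsSquare (levelDisc k m)) {β β' : L}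
    (hβ : β ∈ treeLevel L k m) (hβ' : β' ∈ treeLevel L k m) : ∃ σ : Gal(L/ℚ), σ β = β' := by
  induction m generalizing β β' with
  | zero =>
    rw [treeLevel, Finset.mem_singleton] at hβ hβ'
    exact ⟨1, hβ.trans hβ'.symm⟩
  | succ m ih =>
    obtain ⟨σ, hσ⟩ := ih (mem_treeLevel_succ.mp hβ) (mem_treeLevel_succ.mp hβ')
    obtain ⟨τ, hτ, hτne⟩ :=
      exists_apply_ne_of_mem_treeLevel_succ hsq (fun _ hβ _ hβ' ↦ ih hβ hβ') hβ'
    have hσ' : quadMap k (σ β) = quadMap k β' := by rw [← map_quadMap, hσ]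
    have hτ' : quadMap k (τ β') = quadMap k β' := by rw [← map_quadMap, hτ]
    rcases quadMap_eq_quadMap_iff.mp hσ' with h | h
    · exact ⟨σ, h⟩
    · refine ⟨τ * σ, ?_⟩
      rw [AlgEquiv.mul_apply, h, map_sub, (quadMap_eq_quadMap_iff.mp hτ').resolve_left hτne,
        map_neg, map_intCast, sub_sub_cancel]

end GaloisAction

section IterateField

variable {L : Type*} [Field L] [Algebra ℚ L] {k : ℤ} {m n : ℕ}

theorem map_mem_iterateField (σ : Gal(L/ℚ)) {x : L} (hx : x ∈ iterateField L k n) :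
    σ x ∈ iterateField L k n := by
  suffices iterateField L k n ≤ (iterateField L k n).comap σ.toAlgHom from this hx
  refine IntermediateField.adjoin_le_iff.mpr fun z hz ↦ IntermediateField.subset_adjoin ℚ _ ?_
  rw [Set.mem_ofPred_eq] at hz ⊢
  rw [← map_iterate_quadMap, hz, map_zero]

theorem iterateField_mono (k : ℤ) : Monotone (iterateField L k) := by
  intro m n hmn
  refine IntermediateField.adjoin.mono ℚ _ _ fun x hx ↦ ?_
  rw [Set.mem_ofPred_eq, iterate_quadMap_eq_zero_iff] at hx ⊢
  exact hx.imp_right fun ⟨i, hi, h⟩ ↦ ⟨i, hi.trans_le hmn, h⟩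

variable [CharZero L] [IsAlgClosed L]

theorem mem_iterateField_of_mem_treeLevel {β : L} (hβ : β ∈ treeLevel L k m) :
    β ∈ iterateField L k (m + 1) :=
  IntermediateField.subset_adjoin ℚ _
    (iterate_quadMap_eq_zero_iff.mpr (.inr ⟨m, m.lt_succ_self, mem_treeLevel.mp hβ⟩))

theorem sqrtDisc_sq_mem_iterateField {β : L} (hβ : β ∈ treeLevel L k m) :
    sqrtDisc k β ^ 2 ∈ iterateField L k (m + 1) := by
  rw [sqrtDisc_sq]
  exact add_mem (pow_mem (intCast_mem _ k) 2)
    (mul_mem (ofNat_mem _ 4) (mem_iterateField_of_mem_treeLevel hβ))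

theorem sqrtDisc_mem_iterateField {β : L} (hβ : β ∈ treeLevel L k m) :
    sqrtDisc k β ∈ iterateField L k (m + 2) := by
  have hγ : (sqrtDisc k β - k) / 2 ∈ treeLevel L k (m + 1) := by
    classical
    exact Finset.mem_biUnion.mpr ⟨β, hβ, Finset.mem_insert_self _ _⟩
  have hroot : sqrtDisc k β = 2 * ((sqrtDisc k β - k) / 2) + k := by ring
  rw [hroot]
  exact add_mem (mul_mem (ofNat_mem _ 2) (mem_iterateField_of_mem_treeLevel hγ)) (intCast_mem _ k)

theorem finite_setOf_iterate_quadMap_eq_zero (L : Type*) [Field L] [CharZero L] [IsAlgClosed L]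
    (k : ℤ) (n : ℕ) : {x : L | (quadMap k)^[n] x = 0}.Finite := by
  refine ((Set.finite_singleton 0).union
    ((Set.finite_lt_nat n).biUnion fun i _ ↦ (treeLevel L k i).finite_toSet)).subset fun x hx ↦ ?_
  rcases iterate_quadMap_eq_zero_iff.mp hx with h | ⟨i, hi, h⟩
  · exact .inl h
  · exact .inr (Set.mem_biUnion hi (mem_treeLevel.mpr h))

theorem finiteDimensional_iterateField [Algebra.IsAlgebraic ℚ L] (k : ℤ) (n : ℕ) :
    FiniteDimensional ℚ (iterateField L k n) := by
  have := (finite_setOf_iterate_quadMap_eq_zero L k n).to_subtype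
  exact IntermediateField.finiteDimensional_adjoin fun x _ ↦ Algebra.IsIntegral.isIntegral x

end IterateField

section LevelRelations

open scoped Pointwise

variable {L : Type*} [Field L] [CharZero L] [Algebra ℚ L] [IsAlgClosed L] {k : ℤ} {m : ℕ}

theorem prod_sqrtDisc_smul_mem [DecidableEq L] (σ : Gal(L/ℚ)) {t : Finset L}
    (ht : ∏ β ∈ t, sqrtDisc k β ∈ iterateField L k m) :
    ∏ β ∈ σ • t, sqrtDisc k β ∈ iterateField L k m := by
  have hsmul : ∏ β ∈ σ • t, sqrtDisc k β = ∏ β ∈ t, sqrtDisc k (σ β) := by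
    rw [← Finset.image_smul]
    exact Finset.prod_image fun _ _ _ _ h ↦ σ.injective h
  have hsq : (∏ β ∈ σ • t, sqrtDisc k β) ^ 2 = σ (∏ β ∈ t, sqrtDisc k β) ^ 2 := by
    simp only [hsmul, map_prod, ← Finset.prod_pow, map_sqrtDisc_sq]
  rcases sq_eq_sq_iff_eq_or_eq_neg.mp hsq with h | h <;> rw [h]
  · exact map_mem_iterateField σ ht
  · exact neg_mem (map_mem_iterateField σ ht)

theorem prod_symmDiff_mul_prod_inter_sq {ι M : Type*} [DecidableEq ι] [CommMonoid M] (f : ι → M)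
    (t u : Finset ι) :
    (∏ i ∈ symmDiff t u, f i) * (∏ i ∈ t ∩ u, f i) ^ 2 = (∏ i ∈ t, f i) * ∏ i ∈ u, f i := by
  rw [symmDiff_eq_sup_sdiff_inf, Finset.sup_eq_union, Finset.inf_eq_inter, pow_two, ← mul_assoc,
    Finset.prod_sdiff (Finset.inter_subset_left.trans Finset.subset_union_left),
    Finset.prod_union_inter]

theorem prod_sqrtDisc_symmDiff_mem [DecidableEq L] (hsq : ∀ m, ¬ IsSquare (levelDisc k m))
    {t u : Finset L} (hts : t ⊆ treeLevel L k m)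
    (ht : ∏ β ∈ t, sqrtDisc k β ∈ iterateField L k (m + 1))
    (hu : ∏ β ∈ u, sqrtDisc k β ∈ iterateField L k (m + 1)) :
    ∏ β ∈ symmDiff t u, sqrtDisc k β ∈ iterateField L k (m + 1) := by
  have hmem {β : L} (hβ : β ∈ t ∩ u) : β ∈ treeLevel L k m := hts (Finset.mem_inter.mp hβ).1
  have hne : (∏ β ∈ t ∩ u, sqrtDisc k β) ^ 2 ≠ 0 :=
    pow_ne_zero 2 (Finset.prod_ne_zero_iff.mpr fun _ hβ ↦ sqrtDisc_ne_zero hsq (hmem hβ))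
  rw [eq_div_of_mul_eq hne (prod_symmDiff_mul_prod_inter_sq _ t u), ← Finset.prod_pow]
  exact div_mem (mul_mem ht hu) (prod_mem fun _ hβ ↦ sqrtDisc_sq_mem_iterateField (hmem hβ))

variable [IsGalois ℚ L]

theorem prod_sqrtDisc_treeLevel_mem (hsq : ∀ m, ¬ IsSquare (levelDisc k m)) {t : Finset L}
    (hts : t ⊆ treeLevel L k m) (hne : t.Nonempty)
    (ht : ∏ β ∈ t, sqrtDisc k β ∈ iterateField L k (m + 1)) :
    ∏ β ∈ treeLevel L k m, sqrtDisc k β ∈ iterateField L k (m + 1) := by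
  classical
  let R : Set (Finset L) :=
    {t | t ⊆ treeLevel L k m ∧ ∏ β ∈ t, sqrtDisc k β ∈ iterateField L k (m + 1)}
  suffices treeLevel L k m ∈ R from this.2
  refine mem_of_transitive_of_symmDiff_mem (G := Gal(L/ℚ)) (m := m)
    (fun _ hβ _ hβ' ↦ exists_apply_eq_of_mem_treeLevel hsq hβ hβ')
    (fun σ _ hβ ↦ pow_two_pow_apply_of_mem_treeLevel σ hβ) (fun _ hu ↦ hu.1) ?_ ?_ ⟨hts, ht⟩ hne
  · rintro σ u ⟨hus, hu⟩
    refine ⟨fun β hβ ↦ ?_, prod_sqrtDisc_smul_mem σ hu⟩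
    obtain ⟨γ, hγ, rfl⟩ := Finset.mem_smul_finset.mp hβ
    exact map_mem_treeLevel σ (hus hγ)
  · rintro u ⟨hus, hu⟩ v ⟨hvs, hv⟩
    exact ⟨symmDiff_le_sup.trans (Finset.union_subset hus hvs),
      prod_sqrtDisc_symmDiff_mem hsq hus hu hv⟩

theorem two_pow_mul_finrank_iterateField_le (hsq : ∀ m, ¬ IsSquare (levelDisc k m))
    (hprod : ∏ β ∈ treeLevel L k m, sqrtDisc k β ∉ iterateField L k (m + 1)) :
    2 ^ 2 ^ m * Module.finrank ℚ (iterateField L k (m + 1)) ≤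
      Module.finrank ℚ (iterateField L k (m + 2)) := by
  have := finiteDimensional_iterateField (L := L) k (m + 2)
  rw [← card_treeLevel (L := L) (m := m) fun _ _ _ ↦ sqrtDisc_ne_zero hsq]
  exact two_pow_card_mul_finrank_le two_ne_zero (fun _ ↦ sqrtDisc_mem_iterateField)
    (iterateField_mono k (m + 1).le_succ) (fun _ ↦ sqrtDisc_sq_mem_iterateField)
    fun _ hts hne ht ↦ hprod (prod_sqrtDisc_treeLevel_mem hsq hts hne ht)

theorem prod_sqrtDisc_treeLevel_notMem (hsq : ∀ m, ¬ IsSquare (levelDisc k m))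
    (h : HasOddValuationPrimeTo (2 * k) (criticalOrbit k (m + 2) + k)) :
    ∏ β ∈ treeLevel L k (m + 1), sqrtDisc k β ∉ iterateField L k (m + 2) := by
  intro hmem
  refine sq_ne_of_mem_iterateField h
    (div_mem hmem (pow_mem (neg_mem (ofNat_mem _ 4)) (2 ^ m))) ?_
  rw [div_pow, prod_sqrtDisc_sq hsq, levelDisc_succ, eq_ratCast]
  push_cast
  exact mul_div_cancel_left₀ _ (pow_ne_zero 2 (pow_ne_zero _ (by norm_num)))

end LevelRelations

theorem exists_two_pow_le_mul_of_eventually {d : ℕ → ℕ} (hpos : ∀ m, 0 < d m)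
    (hstep : ∀ᶠ m in Filter.atTop, 2 ^ 2 ^ m * d m ≤ d (m + 1)) :
    ∃ C : ℕ, ∀ m, 2 ^ (2 ^ m - 1) ≤ C * d m := by
  obtain ⟨N, hN⟩ := Filter.eventually_atTop.mp hstep
  refine ⟨2 ^ 2 ^ N, fun m ↦ ?_⟩
  rcases le_total m N with hm | hm
  · calc 2 ^ (2 ^ m - 1) ≤ 2 ^ 2 ^ N :=
          Nat.pow_le_pow_right two_pos
            ((Nat.sub_le _ _).trans (Nat.pow_le_pow_right two_pos hm))
      _ ≤ 2 ^ 2 ^ N * d m := Nat.le_mul_of_pos_right _ (hpos m)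
  · induction m, hm using Nat.le_induction with
    | base =>
      exact (Nat.pow_le_pow_right two_pos (Nat.sub_le _ _)).trans
        (Nat.le_mul_of_pos_right _ (hpos N))
    | succ m hm ih =>
      have hexp : 2 ^ (m + 1) - 1 = 2 ^ m + (2 ^ m - 1) := by
        have := Nat.two_pow_pos m
        omega
      calc 2 ^ (2 ^ (m + 1) - 1) = 2 ^ 2 ^ m * 2 ^ (2 ^ m - 1) := by rw [hexp, pow_add]
        _ ≤ 2 ^ 2 ^ m * (2 ^ 2 ^ N * d m) := Nat.mul_le_mul_left _ ih
        _ = 2 ^ 2 ^ N * (2 ^ 2 ^ m * d m) := mul_left_comm _ _ _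
        _ ≤ 2 ^ 2 ^ N * d (m + 1) := Nat.mul_le_mul_left _ (hN m hm)

theorem exists_two_pow_le_mul_finrank_iterateField {L : Type*} [Field L] [CharZero L]
    [Algebra ℚ L] [IsAlgClosed L] [IsGalois ℚ L] {k : ℤ} (hk : k ∉ ({-2, 0, 2, 4} : Set ℤ)) :
    ∃ C : ℕ, ∀ m, 2 ^ (2 ^ m - 1) ≤ C * Module.finrank ℚ (iterateField L k (m + 1)) := by
  have hpos (m : ℕ) : 0 < Module.finrank ℚ (iterateField L k (m + 1)) :=
    have := finiteDimensional_iterateField (L := L) k (m + 1)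
    Module.finrank_pos
  refine exists_two_pow_le_mul_of_eventually hpos ?_
  filter_upwards [(Filter.tendsto_add_atTop_nat 1).eventually
    (eventually_hasOddValuationPrimeTo_criticalOrbit_add hk), Filter.eventually_ge_atTop 1]
    with m hodd hm
  obtain ⟨m, rfl⟩ := Nat.exists_eq_add_of_le' hm
  exact two_pow_mul_finrank_iterateField_le (not_isSquare_levelDisc hk)
    (prod_sqrtDisc_treeLevel_notMem (not_isSquare_levelDisc hk) hodd)

section SplittingField

theorem iterComp_ne_zero {p : ℚ[X]} (hp : 0 < p.natDegree) (n : ℕ) : iterComp p n ≠ 0 := by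
  suffices 0 < (iterComp p n).natDegree from ne_zero_of_natDegree_gt this
  induction n with
  | zero => simp [iterComp]
  | succ n ih =>
    rw [iterComp, natDegree_comp]
    exact Nat.mul_pos hp ih

theorem aeval_iterComp {A : Type*} [CommRing A] [Algebra ℚ A] (p : ℚ[X]) (n : ℕ) (x : A) :
    aeval x (iterComp p n) = (fun y ↦ aeval y p)^[n] x := by
  induction n with
  | zero => simp [iterComp]
  | succ n ih => rw [iterComp, aeval_comp, ih, Function.iterate_succ_apply']

theorem splitFld_iterComp (k : ℤ) (n : ℕ) :
    splitFld (iterComp (X ^ 2 + C (k : ℚ) * X) n) = iterateField (AlgebraicClosure ℚ) k n := by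
  have hdeg : (X ^ 2 + C (k : ℚ) * X).natDegree = 2 := by compute_degree!
  have hmap : (fun y : AlgebraicClosure ℚ ↦ aeval y (X ^ 2 + C (k : ℚ) * X)) = quadMap k := by
    ext y
    simp [quadMap]
  rw [splitFld, iterateField]
  congr 1
  ext x
  rw [mem_rootSet_of_ne (iterComp_ne_zero (by omega) n), aeval_iterComp, hmap, Set.mem_ofPred_eq]

/-- Instance search finds the division ring `ℚ`-algebra structure of `AlgebraicClosure ℚ`, not the
one of the algebraic closure, for which the property is an instance. -/
theorem isGalois_algebraicClosure_rat : IsGalois ℚ (AlgebraicClosure ℚ) := by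
  rw [Subsingleton.elim (DivisionRing.toRatAlgebra : Algebra ℚ (AlgebraicClosure ℚ))
    (AlgebraicClosure.instAlgebra ℚ)]
  infer_instance

end SplittingField

/-- for `k ∈ ℤ \ {−2,0,2,4}` and `φ(X) = X² + kX`, there is a constant `C`
such that for every `n ≥ 1`, `2^(2^(n−1) − 1) ≤ C · [K_n : ℚ]`, where `K_n` is the splitting
field of `φ^{∘n}` over `ℚ`. -/
theorem stmt_5 (k : ℤ) (hk : k ∉ ({-2, 0, 2, 4} : Set ℤ)) :
    ∃ C : ℕ, ∀ n : ℕ, 1 ≤ n →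
      2 ^ (2 ^ (n - 1) - 1) ≤
        C * Module.finrank ℚ ↥(splitFld (iterComp (X ^ 2 + Polynomial.C (k : ℚ) * X) n)) := by
  have := isGalois_algebraicClosure_rat
  obtain ⟨C, hC⟩ := exists_two_pow_le_mul_finrank_iterateField (L := AlgebraicClosure ℚ) hk
  refine ⟨C, fun n hn ↦ ?_⟩
  obtain ⟨m, rfl⟩ := Nat.exists_eq_add_of_le' hn
  rw [splitFld_iterComp, Nat.add_sub_cancel]
  exact hC m
end

section
/- Let n ≥ 0 be an integer, let ζ ∈ ℂ be a primitive (3·2^(n+1))-th root of unity, and let ψ(x) = x² − 2. Then the n-fold iterate of ψ satisfies ψ^{∘n}(ζ + ζ^{−1}) = 1. -/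
/-!
The map `x ↦ x² - 2` is semiconjugate to squaring through `ζ ↦ ζ + ζ⁻¹`, so its `n`-th iterate sends
`ζ + ζ⁻¹` to `ω + ω⁻¹` with `ω = ζ ^ 2 ^ n`. Here `ω` is a primitive sixth root of unity, hence a
root of `Φ₆ = X² - X + 1`, which says that `ω + ω⁻¹ = 1`.
-/

theorem iterate_sq_sub_two_add_of_mul_eq_one {R : Type*} [CommRing R] {x y : R} (hxy : x * y = 1)
    (n : ℕ) : (fun t : R => t ^ 2 - 2)^[n] (x + y) = x ^ 2 ^ n + y ^ 2 ^ n := by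
  induction n with
  | zero => simp
  | succ n ih =>
    have hpow : x ^ 2 ^ n * y ^ 2 ^ n = 1 := by rw [← mul_pow, hxy, one_pow]
    rw [Function.iterate_succ_apply', ih, pow_succ 2 n, pow_mul, pow_mul]
    linear_combination 2 * hpow

section Field

variable {K : Type*} [Field K]

theorem add_inv_eq_one_of_isPrimitiveRoot_six {ω : K} (hω : IsPrimitiveRoot ω 6) :
    ω + ω⁻¹ = 1 := by
  have hω₀ : ω ≠ 0 := hω.ne_zero (by norm_num)
  have hroot : ω ^ 2 - ω + 1 = 0 := by
    simpa [Polynomial.cyclotomic_six] using hω.isRoot_cyclotomic (by norm_num)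
  field_simp
  linear_combination hroot

theorem stmt_7_general (n : ℕ) (ζ : K) (hζ : IsPrimitiveRoot ζ (3 * 2 ^ (n + 1))) :
    (fun x : K => x ^ 2 - 2)^[n] (ζ + ζ⁻¹) = 1 := by
  have hζ₀ : ζ ≠ 0 := hζ.ne_zero (by positivity)
  have hω : IsPrimitiveRoot (ζ ^ 2 ^ n) 6 := hζ.pow (by positivity) (by ring)
  rw [iterate_sq_sub_two_add_of_mul_eq_one (mul_inv_cancel₀ hζ₀), inv_pow]
  exact add_inv_eq_one_of_isPrimitiveRoot_six hω

end Field

/-- if `ζ ∈ ℂ` is a primitive `(3·2^(n+1))`-th root of unity and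
`ψ(x) = x² − 2`, then `ψ^{∘n}(ζ + ζ⁻¹) = 1`. -/
theorem stmt_7 (n : ℕ) (ζ : ℂ) (hζ : IsPrimitiveRoot ζ (3 * 2 ^ (n + 1))) :
    (fun x : ℂ => x ^ 2 - 2)^[n] (ζ + ζ⁻¹) = 1 :=
  stmt_7_general n ζ hζ
end
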